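/- arXiv:1811.10163 — 6 statements merged into one kernel-verified Lean document; each statement's English description precedes it below -/
import Mathlib

section
/- Let 0<γ<∞, 1<p<∞, 0<α<n/p, 0<q<p−1, and let σ be a nonnegative locally finite Borel measure on ℝⁿ. If ∫_{ℝⁿ} (W_{α,p}σ)^{(γ+q)(p−1)/(p−1−q)} dσ < ∞, then there exists a constant c > 0 such that for every nonnegative f ∈ L^{(γ+q)/q}(ℝⁿ, dσ): ‖W_{α,p}(f dσ)‖_{L^{γ+q}(ℝⁿ,dσ)} ≤ c ‖f‖_{L^{(γ+q)/q}(ℝⁿ,dσ)}^{1/(p−1)}. -/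
/-!
The proof dominates the Wolff potential of `f dσ` by that of `σ` times a power of a maximal
function. Let `M f x = sup_r (∫_{B(x,r)} f dσ) / σ(B(x,r))` be the centered maximal function with
respect to `σ`. Since `∫_{B(x,r)} f dσ ≤ M f x · σ(B(x,r))` for every `r`, the definition of the
Wolff potential gives pointwise `W(f dσ) ≤ (M f)^{1/(p-1)} W σ` (`wolffPot_withDensity_le`).
Hölder's inequality with the conjugate exponents `(p-1)/q` and `(p-1)/(p-1-q)` then bounds
`∫ W(f dσ)^{γ+q} dσ` by
`(∫ (M f)^{(γ+q)/q} dσ)^{q/(p-1)} (∫ (W σ)^{(γ+q)(p-1)/(p-1-q)} dσ)^{(p-1-q)/(p-1)}`.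
The second factor is finite by hypothesis.

For the first, `M` is bounded on `L^s(σ)` for every `s > 1`, with no doubling condition on `σ`
(`exists_lintegral_maxFun_rpow_le`): the Besicovitch covering theorem in `ℝⁿ` gives the weak type
estimate `t σ{M f > 2t} ≤ N ∫_{f > t} f dσ` (`exists_weak_type`), which is integrated against
`t^{s-2} dt` using Tonelli's theorem.
-/

open MeasureTheory Metric Set ENNReal

/-- The Wolff potential `W_{α,p}μ(x) = ∫_0^∞ (μ(B(x,r))/r^{n-αp})^{1/(p-1)} dr/r`. -/
noncomputable def wolffPot (n : ℕ) (α p : ℝ)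
    (μ : Measure (EuclideanSpace ℝ (Fin n))) (x : EuclideanSpace ℝ (Fin n)) : ℝ≥0∞ :=
  ∫⁻ r in Ioi (0 : ℝ),
    (μ (ball x r) / ENNReal.ofReal (r ^ ((n : ℝ) - α * p))) ^ (1 / (p - 1)) *
      ENNReal.ofReal r⁻¹

/-! ### The centered maximal function and its weak type estimate -/

section MaximalFunction

variable {X : Type*} [MetricSpace X] [MeasurableSpace X]

/-- The centered maximal function of a measure `ν` relative to a measure `σ`. The supremum is
over rational radii so that measurability is immediate; by left continuity of `r ↦ ν (ball x r)`
it controls all real radii, see `measure_ball_le_maxFun_mul`. -/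
noncomputable def maxFun (σ ν : Measure X) (x : X) : ℝ≥0∞ :=
  ⨆ r : {r : ℚ // 0 < r}, ν (ball x (r : ℚ)) / σ (ball x (r : ℚ))

variable [BorelSpace X] [SecondCountableTopology X]

theorem measurable_measure_ball (ν : Measure X) [SFinite ν] :
    Measurable fun z : X × ℝ => ν (ball z.1 z.2) := by
  have hs : MeasurableSet {w : (X × ℝ) × X | dist w.2 w.1.1 < w.1.2} :=
    (isOpen_lt (by fun_prop) (by fun_prop)).measurableSet
  exact measurable_measure_prodMk_left hs

theorem measurable_maxFun (σ ν : Measure X) [SFinite σ] [SFinite ν] :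
    Measurable (maxFun σ ν) := by
  have h (μ : Measure X) [SFinite μ] (r : ℝ) : Measurable fun x => μ (ball x r) :=
    (measurable_measure_ball μ).comp (measurable_id.prodMk measurable_const)
  exact Measurable.iSup fun r => (h ν _).div (h σ _)

variable [ProperSpace X]

theorem measure_ball_le_maxFun_mul (σ ν : Measure X) [IsLocallyFiniteMeasure σ]
    (hν : ν ≪ σ) (x : X) (r : ℝ) :
    ν (ball x r) ≤ maxFun σ ν x * σ (ball x r) := by
  have hU : ball x r = ⋃ t : {t : ℚ // 0 < t ∧ (t : ℝ) < r}, ball x (t : ℚ) := by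
    ext y
    simp only [mem_ball, mem_iUnion]
    constructor
    · intro hy
      obtain ⟨t, ht, ht'⟩ := exists_rat_btwn hy
      exact ⟨⟨t, by exact_mod_cast dist_nonneg.trans_lt ht, ht'⟩, ht⟩
    · rintro ⟨t, ht⟩
      exact ht.trans t.2.2
  have hmono : Monotone fun t : {t : ℚ // 0 < t ∧ (t : ℝ) < r} => ball x ((t : ℚ) : ℝ) :=
    fun a b hab => ball_subset_ball (by exact_mod_cast hab)
  calc ν (ball x r) = ⨆ t : {t : ℚ // 0 < t ∧ (t : ℝ) < r}, ν (ball x (t : ℚ)) := by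
        rw [hU, hmono.measure_iUnion]
    _ ≤ _ := iSup_le fun t => ?_
  calc ν (ball x (t : ℚ)) ≤ ν (ball x (t : ℚ)) / σ (ball x (t : ℚ)) * σ (ball x (t : ℚ)) := by
        by_cases h0 : σ (ball x (t : ℚ)) = 0
        · simp [hν h0]
        · rw [ENNReal.div_mul_cancel h0 measure_ball_lt_top.ne]
    _ ≤ maxFun σ ν x * σ (ball x r) := by
        gcongr
        · exact le_iSup (fun r : {r : ℚ // 0 < r} => ν (ball x (r : ℚ)) / σ (ball x (r : ℚ)))
            ⟨t.1, t.2.1⟩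
        · exact t.2.2.le

/-- Where the maximal function is large, some closed ball of bounded radius has a large average. -/
theorem exists_closedBall_of_lt_maxFun (σ ν : Measure X) [IsLocallyFiniteMeasure σ]
    {x : X} {a : ℝ≥0∞} (h : a < maxFun σ ν x) :
    ∃ r : ℝ, 0 < r ∧ a * σ (closedBall x r) < ν (closedBall x r) := by
  obtain ⟨⟨r, hr⟩, h⟩ := lt_iSup_iff.1 h
  have h1 : a * σ (ball x (r : ℝ)) < ν (ball x (r : ℝ)) := by
    rcases eq_or_ne (σ (ball x (r : ℝ))) 0 with h0 | h0
    · rw [h0, mul_zero]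
      refine pos_iff_ne_zero.2 fun h2 => ?_
      simp [h0, h2] at h
    · exact (ENNReal.lt_div_iff_mul_lt (Or.inl h0) (Or.inl measure_ball_lt_top.ne)).1 h
  have hr' : (0 : ℝ) < r := by exact_mod_cast hr
  have hU : ball x (r : ℝ) = ⋃ t : {t : ℚ // 0 < t ∧ t < r}, closedBall x (t : ℚ) := by
    ext y
    simp only [mem_ball, mem_iUnion, mem_closedBall]
    constructor
    · intro hy
      obtain ⟨t, ht, ht'⟩ := exists_rat_btwn (max_lt hy hr')
      exact ⟨⟨t, by exact_mod_cast (le_max_right _ _).trans_lt ht, by exact_mod_cast ht'⟩,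
        ((le_max_left _ _).trans_lt ht).le⟩
    · rintro ⟨t, ht⟩
      exact ht.trans_lt (by exact_mod_cast t.2.2)
  have hmono : Monotone fun t : {t : ℚ // 0 < t ∧ t < r} => closedBall x ((t : ℚ) : ℝ) :=
    fun a b hab => closedBall_subset_closedBall (by exact_mod_cast hab)
  have hsup : ν (ball x (r : ℝ)) = ⨆ t : {t : ℚ // 0 < t ∧ t < r}, ν (closedBall x (t : ℚ)) := by
    rw [hU, hmono.measure_iUnion]
  rw [hsup] at h1
  obtain ⟨t, ht⟩ := lt_iSup_iff.1 h1
  refine ⟨(t : ℚ), by exact_mod_cast t.2.1, lt_of_le_of_lt ?_ ht⟩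
  gcongr
  exact closedBall_subset_ball (by exact_mod_cast t.2.2)

/-- The weak type estimate restricted to balls of radius at most `R`, so that the Besicovitch
covering theorem applies. -/
theorem weak_type_bounded_radii {N : ℕ} {τ : ℝ} (hτ : 1 < τ)
    (hN : IsEmpty (Besicovitch.SatelliteConfig X N τ))
    (σ : Measure X) [IsLocallyFiniteMeasure σ] {f : X → ℝ≥0∞} (hf : Measurable f)
    {a : ℝ≥0∞} (ha : a ≠ ⊤) (R : ℝ) :
    a * σ {x | ∃ r : ℝ, 0 < r ∧ r ≤ R ∧
        2 * a * σ (closedBall x r) < σ.withDensity f (closedBall x r)} ≤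
      N * ∫⁻ x, {x | a < f x}.indicator f x ∂σ := by
  set E := {x | ∃ r : ℝ, 0 < r ∧ r ≤ R ∧
        2 * a * σ (closedBall x r) < σ.withDensity f (closedBall x r)} with hE
  set g : X → ℝ≥0∞ := {x | a < f x}.indicator f with hg
  have hgm : Measurable g := hf.indicator (measurableSet_lt measurable_const hf)
  have hfg (x : X) : f x ≤ g x + a := by
    by_cases h : a < f x
    · simp [hg, h]
    · exact (not_lt.1 h).trans le_add_self
  choose ρ hρ0 hρR hρ using fun x : E => x.2
  -- The part of `f` below `a` contributes at most `a * σ B`, so the truncation keeps half.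
  have hball (x : E) :
      a * σ (closedBall (x : X) (ρ x)) ≤ ∫⁻ y in closedBall (x : X) (ρ x), g y ∂σ := by
    have h1 : σ.withDensity f (closedBall (x : X) (ρ x)) ≤
        (∫⁻ y in closedBall (x : X) (ρ x), g y ∂σ) + a * σ (closedBall (x : X) (ρ x)) := by
      rw [withDensity_apply _ measurableSet_closedBall, ← setLIntegral_const,
        ← lintegral_add_left hgm]
      exact lintegral_mono fun y => hfg y
    have h2 := (hρ x).le.trans h1
    rw [two_mul, add_mul] at h2
    exact (ENNReal.add_le_add_iff_right
      (ENNReal.mul_ne_top ha measure_closedBall_lt_top.ne)).1 h2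
  obtain ⟨s, hs, hcov⟩ := Besicovitch.exist_disjoint_covering_families hτ hN
    (⟨fun x : E => (x : X), ρ, hρ0, R, hρR⟩ : Besicovitch.BallPackage E X)
  simp only [Subtype.range_coe] at hs hcov
  have hc (i : Fin N) : (s i).Countable :=
    (hs i).countable_of_nonempty_interior fun j _ =>
      (nonempty_ball.2 (hρ0 j)).mono ball_subset_interior_closedBall
  have hi (i : Fin N) : a * σ (⋃ j ∈ s i, ball (j : X) (ρ j)) ≤ ∫⁻ x, g x ∂σ := by
    calc a * σ (⋃ j ∈ s i, ball (j : X) (ρ j))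
        ≤ a * ∑' j : s i, σ (closedBall ((j : E) : X) (ρ j)) := by
          gcongr
          refine (measure_biUnion_le σ (hc i) _).trans ?_
          exact ENNReal.tsum_le_tsum fun j => measure_mono ball_subset_closedBall
      _ ≤ ∑' j : s i, ∫⁻ y in closedBall ((j : E) : X) (ρ j), g y ∂σ := by
          rw [← ENNReal.tsum_mul_left]
          exact ENNReal.tsum_le_tsum fun j => hball j
      _ = ∫⁻ y in ⋃ j ∈ s i, closedBall (j : X) (ρ j), g y ∂σ :=
          (lintegral_biUnion (hc i) (fun _ _ => measurableSet_closedBall) (hs i) g).symm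
      _ ≤ ∫⁻ x, g x ∂σ := setLIntegral_le_lintegral _ _
  calc a * σ E ≤ a * ∑ i, σ (⋃ j ∈ s i, ball (j : X) (ρ j)) := by
        gcongr
        exact (measure_mono hcov).trans (measure_iUnion_fintype_le _ _)
    _ = ∑ i, a * σ (⋃ j ∈ s i, ball (j : X) (ρ j)) := Finset.mul_sum _ _ _
    _ ≤ ∑ _i : Fin N, ∫⁻ x, g x ∂σ := Finset.sum_le_sum fun i _ => hi i
    _ = N * ∫⁻ x, g x ∂σ := by simp

/-- Weak type estimate for the maximal function, with a constant depending only on the space. -/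
theorem exists_weak_type [HasBesicovitchCovering X] (σ : Measure X) [IsLocallyFiniteMeasure σ] :
    ∃ N : ℕ, ∀ f : X → ℝ≥0∞, Measurable f → ∀ a : ℝ≥0∞, a ≠ ⊤ →
      a * σ {x | 2 * a < maxFun σ (σ.withDensity f) x} ≤
        N * ∫⁻ x, {x | a < f x}.indicator f x ∂σ := by
  obtain ⟨N, τ, hτ, hN⟩ := HasBesicovitchCovering.no_satelliteConfig (α := X)
  refine ⟨N, fun f hf a ha => ?_⟩
  have hsub : {x | 2 * a < maxFun σ (σ.withDensity f) x} ⊆ ⋃ k : ℕ, {x | ∃ r : ℝ, 0 < r ∧ r ≤ k ∧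
        2 * a * σ (closedBall x r) < σ.withDensity f (closedBall x r)} := by
    intro x hx
    obtain ⟨r, hr, h⟩ := exists_closedBall_of_lt_maxFun σ _ hx
    obtain ⟨k, hk⟩ := exists_nat_ge r
    exact mem_iUnion.2 ⟨k, r, hr, hk, h⟩
  have hmono : Monotone fun k : ℕ => {x : X | ∃ r : ℝ, 0 < r ∧ r ≤ k ∧
        2 * a * σ (closedBall x r) < σ.withDensity f (closedBall x r)} := by
    rintro k l hkl x ⟨r, hr, hrk, h⟩
    exact ⟨r, hr, hrk.trans (by exact_mod_cast hkl), h⟩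
  refine (mul_le_mul_right (measure_mono hsub) a).trans ?_
  rw [hmono.measure_iUnion, ENNReal.mul_iSup]
  exact iSup_le fun k => weak_type_bounded_radii hτ hN σ hf ha k

end MaximalFunction

/-! ### The strong type estimate -/

/-- The layer cake formula at a single value: `∫_0^b r^{t-1} dr = b^t / t`. The value `b = ⊤` is
included. -/
theorem lintegral_layer {t : ℝ} (ht : 0 < t) (b : ℝ≥0∞) :
    ∫⁻ r in Ioi (0 : ℝ), {r : ℝ | ENNReal.ofReal r < b}.indicator
      (fun r => ENNReal.ofReal (r ^ (t - 1))) r = b ^ t / ENNReal.ofReal t := by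
  have key (c : ℝ) (hc : 0 ≤ c) :
      ∫⁻ r in Ioi (0 : ℝ), {r : ℝ | ENNReal.ofReal r < ENNReal.ofReal c}.indicator
      (fun r => ENNReal.ofReal (r ^ (t - 1))) r = ENNReal.ofReal c ^ t / ENNReal.ofReal t := by
    have hm : MeasurableSet {r : ℝ | ENNReal.ofReal r < ENNReal.ofReal c} :=
      measurableSet_lt ENNReal.measurable_ofReal measurable_const
    have hset : {r : ℝ | ENNReal.ofReal r < ENNReal.ofReal c} ∩ Ioi 0 = Ioo 0 c := by
      ext r
      simp only [mem_inter_iff, mem_ofPred_eq, mem_Ioi, mem_Ioo]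
      constructor
      · rintro ⟨h, h0⟩
        exact ⟨h0, lt_of_not_ge fun h' => absurd h (not_lt.2 (ENNReal.ofReal_le_ofReal h'))⟩
      · rintro ⟨h0, h⟩
        exact ⟨(ENNReal.ofReal_lt_ofReal_iff (h0.trans h)).2 h, h0⟩
    have hint := (intervalIntegral.intervalIntegrable_rpow' (a := 0) (b := c)
      (r := t - 1) (by linarith))
    rw [intervalIntegrable_iff_integrableOn_Ioc_of_le hc] at hint
    rw [lintegral_indicator hm, Measure.restrict_restrict hm, hset,
      restrict_Ioo_eq_restrict_Ioc, ← ofReal_integral_eq_lintegral_ofReal hint,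
      ← intervalIntegral.integral_of_le hc, integral_rpow (Or.inl (by linarith)),
      sub_add_cancel, Real.zero_rpow ht.ne', sub_zero, ENNReal.ofReal_div_of_pos ht,
      ENNReal.ofReal_rpow_of_nonneg hc ht.le]
    filter_upwards [ae_restrict_mem measurableSet_Ioc] with r hr
    exact Real.rpow_nonneg hr.1.le _
  rcases eq_or_ne b ⊤ with rfl | hb
  · rw [ENNReal.top_rpow_of_pos ht, ENNReal.top_div_of_ne_top ENNReal.ofReal_ne_top]
    refine ENNReal.eq_top_of_forall_nnreal_le fun y => ?_
    have hty : (0 : ℝ) ≤ t * y := by positivity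
    calc (y : ℝ≥0∞) = ENNReal.ofReal (((t * y) ^ (1 / t)) ) ^ t / ENNReal.ofReal t := by
          rw [ENNReal.ofReal_rpow_of_nonneg (by positivity) ht.le, ← Real.rpow_mul hty,
            one_div_mul_cancel ht.ne', Real.rpow_one, ← ENNReal.ofReal_div_of_pos ht,
            mul_div_cancel_left₀ _ ht.ne', ENNReal.ofReal_coe_nnreal]
      _ ≤ _ := by
          rw [← key _ (by positivity)]
          refine lintegral_mono fun r => ?_
          refine indicator_le_indicator_of_subset ?_ ?_ r
          · exact fun r _ => ENNReal.ofReal_lt_top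
          · exact fun r => zero_le
  · rw [← ENNReal.ofReal_toReal hb]
    exact key _ ENNReal.toReal_nonneg

/-- Strong type estimate for the maximal function on `L^s`, `s > 1`. -/
theorem exists_lintegral_maxFun_rpow_le {X : Type*} [MetricSpace X] [MeasurableSpace X]
    [BorelSpace X] [SecondCountableTopology X] [ProperSpace X] [HasBesicovitchCovering X]
    (σ : Measure X) [IsLocallyFiniteMeasure σ] {s : ℝ} (hs : 1 < s) :
    ∃ A : ℝ≥0∞, A ≠ ⊤ ∧ ∀ f : X → ℝ≥0∞, Measurable f →
      ∫⁻ x, maxFun σ (σ.withDensity f) x ^ s ∂σ ≤ A * ∫⁻ x, f x ^ s ∂σ := by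
  obtain ⟨N, hN⟩ := exists_weak_type σ
  have hs0 : 0 < s := by linarith
  have hs1 : 0 < s - 1 := by linarith
  refine ⟨2 ^ s * (ENNReal.ofReal s * (N * (ENNReal.ofReal (s - 1))⁻¹)), ?_, fun f hf => ?_⟩
  · refine ENNReal.mul_ne_top (by simp) (ENNReal.mul_ne_top ENNReal.ofReal_ne_top
      (ENNReal.mul_ne_top (by simp) ?_))
    simpa using hs1
  set h : X → ℝ≥0∞ := fun x => maxFun σ (σ.withDensity f) x / 2 with hh
  have hhm : Measurable h := (measurable_maxFun σ (σ.withDensity f)).div_const 2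
  have hMh (x : X) : maxFun σ (σ.withDensity f) x = 2 * h x := by
    rw [hh]
    exact (ENNReal.mul_div_cancel (by simp) (by simp)).symm
  -- Tonelli's theorem for the layers of a function `g`, weighted by `w`.
  have tonelli (g w : X → ℝ≥0∞) (hg : Measurable g) (hw : Measurable w) (t : ℝ) (ht : 0 < t) :
      ∫⁻ r in Ioi (0 : ℝ), ENNReal.ofReal (r ^ (t - 1)) *
        ∫⁻ x, {x | ENNReal.ofReal r < g x}.indicator w x ∂σ =
      (∫⁻ x, w x * g x ^ t ∂σ) * (ENNReal.ofReal t)⁻¹ := by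
    have hset : MeasurableSet {z : ℝ × X | ENNReal.ofReal z.1 < g z.2} :=
      measurableSet_lt (by fun_prop) (by fun_prop)
    have hmeas : Measurable (Function.uncurry fun (r : ℝ) (x : X) =>
        ENNReal.ofReal (r ^ (t - 1)) * {x | ENNReal.ofReal r < g x}.indicator w x) := by
      have : Measurable fun z : ℝ × X => {z : ℝ × X | ENNReal.ofReal z.1 < g z.2}.indicator
          (fun z => w z.2) z := (hw.comp measurable_snd).indicator hset
      exact Measurable.mul (by fun_prop) this
    have e1 (r : ℝ) : ENNReal.ofReal (r ^ (t - 1)) *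
        ∫⁻ x, {x | ENNReal.ofReal r < g x}.indicator w x ∂σ =
        ∫⁻ x, ENNReal.ofReal (r ^ (t - 1)) * {x | ENNReal.ofReal r < g x}.indicator w x ∂σ :=
      (lintegral_const_mul _ (hw.indicator (measurableSet_lt measurable_const hg))).symm
    simp_rw [e1]
    rw [lintegral_lintegral_swap hmeas.aemeasurable, ← lintegral_mul_const _ (by fun_prop)]
    refine lintegral_congr fun x => ?_
    rw [mul_assoc, ← div_eq_mul_inv, ← lintegral_layer ht, ← lintegral_const_mul]
    · refine lintegral_congr fun r => ?_
      by_cases hr : ENNReal.ofReal r < g x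
      · simp [hr, mul_comm]
      · simp [hr]
    · exact Measurable.indicator (by fun_prop)
        (measurableSet_lt ENNReal.measurable_ofReal measurable_const)
  have main : (∫⁻ x, h x ^ s ∂σ) * (ENNReal.ofReal s)⁻¹ ≤
      N * ((∫⁻ x, f x ^ s ∂σ) * (ENNReal.ofReal (s - 1))⁻¹) := by
    have t1 := tonelli h (fun _ => 1) hhm measurable_const s hs0
    have t2 := tonelli f f hf hf (s - 1) hs1
    have e2 (x : X) : f x * f x ^ (s - 1) = f x ^ s := by
      have := ENNReal.rpow_add_of_nonneg (x := f x) 1 (s - 1) zero_le_one hs1.le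
      rw [ENNReal.rpow_one, add_sub_cancel] at this
      exact this.symm
    simp only [one_mul] at t1
    simp only [e2] at t2
    rw [← t1, ← t2, ← lintegral_const_mul' _ _ (by simp)]
    refine setLIntegral_mono' measurableSet_Ioi fun r hr => ?_
    have hr : (0 : ℝ) < r := hr
    have hw := hN f hf (ENNReal.ofReal r) ENNReal.ofReal_ne_top
    have hset : {x | 2 * ENNReal.ofReal r < maxFun σ (σ.withDensity f) x} =
        {x | ENNReal.ofReal r < h x} := by
      ext x
      simp only [mem_ofPred_eq, hMh]
      exact ENNReal.mul_lt_mul_iff_right (by simp) (by simp)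
    rw [hset] at hw
    have hp : ENNReal.ofReal (r ^ (s - 1)) =
        ENNReal.ofReal (r ^ (s - 1 - 1)) * ENNReal.ofReal r := by
      rw [← ENNReal.ofReal_mul (by positivity), Real.rpow_sub_one hr.ne' (s - 1),
        div_mul_cancel₀ _ hr.ne']
    rw [lintegral_indicator (measurableSet_lt measurable_const hhm), setLIntegral_one, hp,
      mul_assoc, mul_left_comm (N : ℝ≥0∞)]
    gcongr
  have hsne : ENNReal.ofReal s ≠ 0 := by simpa using hs0
  calc ∫⁻ x, maxFun σ (σ.withDensity f) x ^ s ∂σ = 2 ^ s * ∫⁻ x, h x ^ s ∂σ := by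
        simp_rw [hMh, ENNReal.mul_rpow_of_nonneg _ _ hs0.le]
        exact lintegral_const_mul _ (by fun_prop)
    _ = 2 ^ s * (ENNReal.ofReal s * ((∫⁻ x, h x ^ s ∂σ) * (ENNReal.ofReal s)⁻¹)) := by
        rw [mul_left_comm (ENNReal.ofReal s), ENNReal.mul_inv_cancel hsne ENNReal.ofReal_ne_top,
          mul_one]
    _ ≤ 2 ^ s * (ENNReal.ofReal s * (N * ((∫⁻ x, f x ^ s ∂σ) * (ENNReal.ofReal (s - 1))⁻¹))) := by
        gcongr
    _ = _ := by ring

/-! ### Domination of the Wolff potential -/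

theorem measurable_wolffPot {n : ℕ} (α p : ℝ)
    (σ : Measure (EuclideanSpace ℝ (Fin n))) [SFinite σ] : Measurable (wolffPot n α p σ) := by
  have h := measurable_measure_ball σ
  have : Measurable fun z : EuclideanSpace ℝ (Fin n) × ℝ =>
      (σ (ball z.1 z.2) / ENNReal.ofReal (z.2 ^ ((n : ℝ) - α * p))) ^ (1 / (p - 1)) *
      ENNReal.ofReal z.2⁻¹ :=
    ((h.div (by fun_prop)).pow_const _).mul (by fun_prop)
  exact this.lintegral_prod_right'

theorem wolffPot_withDensity_le {n : ℕ} {α p : ℝ} (hp : 1 < p)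
    (σ : Measure (EuclideanSpace ℝ (Fin n))) [IsLocallyFiniteMeasure σ]
    (f : EuclideanSpace ℝ (Fin n) → ℝ≥0∞) (x : EuclideanSpace ℝ (Fin n)) :
    wolffPot n α p (σ.withDensity f) x ≤
      maxFun σ (σ.withDensity f) x ^ (1 / (p - 1)) * wolffPot n α p σ x := by
  have hp' : 0 ≤ 1 / (p - 1) := by
    have : 0 < p - 1 := by linarith
    positivity
  have hmono : Monotone fun r : ℝ => σ (ball x r) :=
    fun a b hab => measure_mono (ball_subset_ball hab)
  have hb : Measurable fun r : ℝ => σ (ball x r) := hmono.measurable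
  have hm : Measurable fun r : ℝ =>
      (σ (ball x r) / ENNReal.ofReal (r ^ ((n : ℝ) - α * p))) ^ (1 / (p - 1)) *
        ENNReal.ofReal r⁻¹ :=
    ((hb.div (by fun_prop)).pow_const _).mul (by fun_prop)
  have hpt (r : ℝ) :
      (σ.withDensity f (ball x r) / ENNReal.ofReal (r ^ ((n : ℝ) - α * p))) ^ (1 / (p - 1)) *
        ENNReal.ofReal r⁻¹ ≤ maxFun σ (σ.withDensity f) x ^ (1 / (p - 1)) *
      ((σ (ball x r) / ENNReal.ofReal (r ^ ((n : ℝ) - α * p))) ^ (1 / (p - 1)) *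
        ENNReal.ofReal r⁻¹) := by
    rw [← mul_assoc, ← ENNReal.mul_rpow_of_nonneg _ _ hp', ← mul_div_assoc]
    gcongr
    exact measure_ball_le_maxFun_mul σ _ (withDensity_absolutelyContinuous _ _) x r
  unfold wolffPot
  rw [← lintegral_const_mul _ hm]
  exact lintegral_mono hpt

theorem stmt1 {n : ℕ} (γ p q α : ℝ) (hγ : 0 < γ) (hp : 1 < p)
    (hq0 : 0 < q) (hq : q < p - 1) (hα0 : 0 < α) (hα : α < n / p)
    (σ : Measure (EuclideanSpace ℝ (Fin n))) [IsLocallyFiniteMeasure σ]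
    (hfin : (∫⁻ x, (wolffPot n α p σ x) ^ ((γ + q) * (p - 1) / (p - 1 - q)) ∂σ) < ⊤) :
    ∃ c : ℝ, 0 < c ∧ ∀ f : EuclideanSpace ℝ (Fin n) → ℝ≥0∞, Measurable f →
      (∫⁻ x, f x ^ ((γ + q) / q) ∂σ) < ⊤ →
      (∫⁻ x, (wolffPot n α p (σ.withDensity f) x) ^ (γ + q) ∂σ) ^ (1 / (γ + q)) ≤
        ENNReal.ofReal c *
          ((∫⁻ x, f x ^ ((γ + q) / q) ∂σ) ^ (q / (γ + q))) ^ (1 / (p - 1)) := by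
  have hT : 0 < γ + q := by linarith
  have hp1 : 0 < p - 1 := by linarith
  have hpq : 0 < p - 1 - q := by linarith
  obtain ⟨A, hA, hM⟩ := exists_lintegral_maxFun_rpow_le σ
    (s := (γ + q) / q) (by rw [lt_div_iff₀ hq0]; linarith)
  set K := ∫⁻ x, (wolffPot n α p σ x) ^ ((γ + q) * (p - 1) / (p - 1 - q)) ∂σ with hK
  set C : ℝ≥0∞ := (A ^ (q / (p - 1)) * K ^ ((p - 1 - q) / (p - 1))) ^ (1 / (γ + q)) with hC
  have hCtop : C ≠ ⊤ := by
    refine ENNReal.rpow_ne_top_of_nonneg (by positivity) (ENNReal.mul_ne_top ?_ ?_)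
    · exact ENNReal.rpow_ne_top_of_nonneg (by positivity) hA
    · exact ENNReal.rpow_ne_top_of_nonneg (by positivity) hfin.ne
  refine ⟨C.toReal + 1, by positivity, fun f hf _ => ?_⟩
  have hCle : C ≤ ENNReal.ofReal (C.toReal + 1) := by
    rw [← ENNReal.ofReal_toReal hCtop]
    exact ENNReal.ofReal_le_ofReal (by simp)
  have hMm := measurable_maxFun σ (σ.withDensity f)
  have hWm := measurable_wolffPot (n := n) α p σ
  set F := ∫⁻ x, f x ^ ((γ + q) / q) ∂σ with hF
  have hconj : ((p - 1) / q).HolderConjugate ((p - 1) / (p - 1 - q)) := by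
    rw [Real.holderConjugate_iff]
    refine ⟨by rw [lt_div_iff₀ hq0]; linarith, ?_⟩
    rw [inv_div, inv_div, ← add_div]
    field_simp
    ring
  have hmain : ∫⁻ x, (wolffPot n α p (σ.withDensity f) x) ^ (γ + q) ∂σ ≤
      (A ^ (q / (p - 1)) * K ^ ((p - 1 - q) / (p - 1))) * F ^ (q / (p - 1)) := by
    calc ∫⁻ x, (wolffPot n α p (σ.withDensity f) x) ^ (γ + q) ∂σ
        ≤ ∫⁻ x, ((fun x => maxFun σ (σ.withDensity f) x ^ ((γ + q) / (p - 1))) *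
            (fun x => wolffPot n α p σ x ^ (γ + q))) x ∂σ := by
          refine lintegral_mono fun x => ?_
          have h := ENNReal.rpow_le_rpow (wolffPot_withDensity_le (α := α) hp σ f x) hT.le
          rw [ENNReal.mul_rpow_of_nonneg _ _ hT.le, ← ENNReal.rpow_mul,
            one_div_mul_eq_div] at h
          exact h
      _ ≤ _ := ENNReal.lintegral_mul_le_Lp_mul_Lq σ hconj (by fun_prop) (by fun_prop)
      _ = (∫⁻ x, maxFun σ (σ.withDensity f) x ^ ((γ + q) / q) ∂σ) ^ (q / (p - 1)) *
            K ^ ((p - 1 - q) / (p - 1)) := by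
          simp_rw [← ENNReal.rpow_mul, one_div_div, hK]
          congr 5
          · funext x; congr 1; field_simp
          · ring_nf
      _ ≤ (A * F) ^ (q / (p - 1)) * K ^ ((p - 1 - q) / (p - 1)) := by
          gcongr
          exact hM f hf
      _ = _ := by
          rw [ENNReal.mul_rpow_of_nonneg _ _ (by positivity)]
          ring
  calc (∫⁻ x, (wolffPot n α p (σ.withDensity f) x) ^ (γ + q) ∂σ) ^ (1 / (γ + q))
      ≤ ((A ^ (q / (p - 1)) * K ^ ((p - 1 - q) / (p - 1))) * F ^ (q / (p - 1))) ^
          (1 / (γ + q)) := by gcongr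
    _ = C * (F ^ (q / (γ + q))) ^ (1 / (p - 1)) := by
        rw [ENNReal.mul_rpow_of_nonneg _ _ (by positivity), ← hC, ← ENNReal.rpow_mul,
          ← ENNReal.rpow_mul]
        congr 2
        field_simp
    _ ≤ _ := by gcongr
end

section
/- Let 1<p<n, 0<α<n/p and β>0. Set s = n(β+p−1)/(n(p−1)+pαβ). If σ is a nonnegative function on ℝⁿ with σ ∈ L^s(ℝⁿ), then ∫_{ℝⁿ} (W_{α,p}(σ dx))^β σ dx < ∞, i.e., the Wolff potential of the measure σ dx belongs to L^β(ℝⁿ, σ dx). -/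
/-!
The proof is Hedberg's argument. Let `M` be the centered maximal function of `σ dx`. Splitting the
integral that defines the Wolff potential `W` at `r = M ^ (-s / n)`, and bounding `σ dx (B(x, r))`
by `M r ^ n` for small `r` and by a multiple of `r ^ (n - n / s)` (since `σ ∈ L^s`) for large `r`,
gives `W ≤ C M ^ ((1 - α p s / n) / (p - 1))` pointwise (`wolffPot_le_maxFn`). The tail converges
because `α p < n / s`. The value of `s` is exactly the one for which this reads
`W ^ β ≤ C M ^ (s - 1)`, so `W ^ β σ ≤ C M ^ (s - 1) σ ≤ C (M ^ s + σ ^ s)`. As `s > 1`, the last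
expression is integrable by the Hardy–Littlewood maximal theorem.

The maximal theorem is proved here (`lintegral_maxFn_rpow_lt_top`): the Vitali covering lemma gives
the weak type `(1,1)` bound, truncation localises it to `{σ > t}`, and integration in `t` finishes.
-/

open MeasureTheory Metric Set ENNReal

/-! ### The weak type bound for the maximal function -/

/-- The centered Hardy–Littlewood maximal function of a measure on `ℝⁿ`, normalised by `rⁿ`
instead of the volume of the ball. -/
noncomputable def maxFn (n : ℕ) (μ : Measure (EuclideanSpace ℝ (Fin n)))
    (x : EuclideanSpace ℝ (Fin n)) : ℝ≥0∞ :=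
  ⨆ (r : ℝ) (_ : 0 < r), μ (ball x r) / ENNReal.ofReal (r ^ n)

lemma measure_ball_le_maxFn {n : ℕ} (μ : Measure (EuclideanSpace ℝ (Fin n)))
    (x : EuclideanSpace ℝ (Fin n)) {r : ℝ} (hr : 0 < r) :
    μ (ball x r) ≤ maxFn n μ x * ENNReal.ofReal (r ^ n) := by
  have h : μ (ball x r) / ENNReal.ofReal (r ^ n) ≤ maxFn n μ x :=
    le_iSup₂ (f := fun (r : ℝ) (_ : 0 < r) => μ (ball x r) / ENNReal.ofReal (r ^ n)) r hr
  have h0 : ENNReal.ofReal (r ^ n) ≠ 0 := by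
    rw [Ne, ENNReal.ofReal_eq_zero, not_le]; positivity
  exact (ENNReal.div_le_iff h0 ENNReal.ofReal_ne_top).1 h

/-- Lower semicontinuity of the maximal function: `r ↦ μ (ball x r)` is left-continuous, so a ball
that witnesses `t < maxFn n μ x` can be shrunk, and the original radius then works near `x`. -/
lemma isOpen_lt_maxFn {n : ℕ} (μ : Measure (EuclideanSpace ℝ (Fin n))) (t : ℝ≥0∞) :
    IsOpen {x | t < maxFn n μ x} := by
  rw [Metric.isOpen_iff]
  intro x hx
  simp only [mem_ofPred_eq, maxFn, lt_iSup_iff] at hx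
  obtain ⟨r, hr, hlt⟩ := hx
  have h0 : ENNReal.ofReal (r ^ n) ≠ 0 := by
    rw [Ne, ENNReal.ofReal_eq_zero, not_le]; positivity
  rw [ENNReal.lt_div_iff_mul_lt (Or.inl h0) (Or.inl ENNReal.ofReal_ne_top)] at hlt
  obtain ⟨u, hu, hur, hlim⟩ := exists_seq_strictMono_tendsto r
  have hU : ball x r = ⋃ k, ball x (u k) := by
    ext y
    simp only [mem_ball, mem_iUnion]
    refine ⟨fun hy => ?_, fun ⟨k, hk⟩ => hk.trans (hur k)⟩
    exact (hlim.eventually (lt_mem_nhds hy)).exists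
  have hmono : Monotone fun k => ball x (u k) :=
    fun i j hij => ball_subset_ball (hu.monotone hij)
  rw [hU, hmono.measure_iUnion, lt_iSup_iff] at hlt
  obtain ⟨k, hk⟩ := hlt
  refine ⟨r - u k, sub_pos.2 (hur k), fun y hy => ?_⟩
  simp only [mem_ofPred_eq, maxFn, lt_iSup_iff]
  refine ⟨r, hr, ?_⟩
  rw [ENNReal.lt_div_iff_mul_lt (Or.inl h0) (Or.inl ENNReal.ofReal_ne_top)]
  refine hk.trans_le (measure_mono (ball_subset_ball' ?_))
  rw [mem_ball, dist_comm] at hy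
  linarith

lemma measurable_maxFn {n : ℕ} (μ : Measure (EuclideanSpace ℝ (Fin n))) :
    Measurable (maxFn n μ) :=
  measurable_of_Ioi fun t => (isOpen_lt_maxFn μ t).measurableSet

lemma volume_ball_eq {n : ℕ} (x : EuclideanSpace ℝ (Fin n)) {r : ℝ} (hr : 0 < r) :
    volume (ball x r) =
      ENNReal.ofReal (r ^ n) * volume (ball (0 : EuclideanSpace ℝ (Fin n)) 1) := by
  simpa using Measure.addHaar_ball_of_pos volume x hr

/-- The weak type `(1,1)` inequality for the maximal function, from the Vitali covering lemma. -/
lemma volume_lt_maxFn_le {n : ℕ} (hn : n ≠ 0) (μ : Measure (EuclideanSpace ℝ (Fin n)))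
    {t : ℝ} (ht : 0 < t) :
    volume {x | ENNReal.ofReal t < maxFn n μ x} ≤
      ENNReal.ofReal (5 ^ n) * volume (ball (0 : EuclideanSpace ℝ (Fin n)) 1) *
        (ENNReal.ofReal t)⁻¹ * μ univ := by
  set ω := volume (ball (0 : EuclideanSpace ℝ (Fin n)) 1) with hω
  have hω0 : ω ≠ 0 := (measure_ball_pos _ _ one_pos).ne'
  have ht0 : ENNReal.ofReal t ≠ 0 := by simpa using ht
  by_cases hμ : μ univ = ⊤
  · rw [hμ, ENNReal.mul_top]
    · exact le_top
    · simp [hω0]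
  have key : ∀ x ∈ {x | ENNReal.ofReal t < maxFn n μ x},
      ∃ r : ℝ, 0 < r ∧ ENNReal.ofReal t * ENNReal.ofReal (r ^ n) ≤ μ (ball x r) := by
    intro x hx
    simp only [mem_ofPred_eq, maxFn, lt_iSup_iff] at hx
    obtain ⟨r, hr, hlt⟩ := hx
    exact ⟨r, hr, ENNReal.mul_le_of_le_div hlt.le⟩
  choose! r hr hrμ using key
  obtain ⟨u, hut, hdisj, hcov⟩ := Vitali.exists_disjoint_subfamily_covering_enlargement_ball
    {x | ENNReal.ofReal t < maxFn n μ x} id r (max 1 ((μ univ).toReal / t)) (by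
      intro x hx
      rcases le_total (r x) 1 with h1 | h1
      · exact h1.trans (le_max_left _ _)
      refine le_max_of_le_right ?_
      rw [le_div_iff₀ ht]
      refine (mul_le_mul_of_nonneg_right (le_self_pow₀ h1 hn) ht.le).trans ?_
      rw [← ENNReal.ofReal_le_iff_le_toReal hμ, mul_comm, ENNReal.ofReal_mul ht.le]
      exact (hrμ x hx).trans (measure_mono (subset_univ _))) 5 (by norm_num)
  have hcount : u.Countable := hdisj.countable_of_isOpen (fun _ _ => isOpen_ball)
    fun x hx => nonempty_ball.2 (hr x (hut hx))
  have hsub : {x | ENNReal.ofReal t < maxFn n μ x} ⊆ ⋃ b ∈ u, ball b (5 * r b) := by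
    intro x hx
    obtain ⟨b, hb, hbs⟩ := hcov x hx
    exact mem_iUnion₂.2 ⟨b, hb, hbs (mem_ball_self (hr x hx))⟩
  calc volume {x | ENNReal.ofReal t < maxFn n μ x}
      ≤ volume (⋃ b ∈ u, ball b (5 * r b)) := measure_mono hsub
    _ ≤ ∑' b : u, volume (ball (b : EuclideanSpace ℝ (Fin n)) (5 * r b)) :=
        measure_biUnion_le _ hcount _
    _ ≤ ∑' b : u, ENNReal.ofReal (5 ^ n) * ω * (ENNReal.ofReal t)⁻¹ *
          μ (ball (b : EuclideanSpace ℝ (Fin n)) (r b)) := by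
        refine ENNReal.tsum_le_tsum fun b => ?_
        have hb := hr b (hut b.2)
        rw [volume_ball_eq _ (by positivity), mul_pow, ENNReal.ofReal_mul (by positivity)]
        calc _ = ENNReal.ofReal (5 ^ n) * ω * (ENNReal.ofReal (r b ^ n)) := by ring
          _ = ENNReal.ofReal (5 ^ n) * ω * ((ENNReal.ofReal t)⁻¹ *
                (ENNReal.ofReal t * ENNReal.ofReal (r b ^ n))) := by
              rw [← mul_assoc (ENNReal.ofReal t)⁻¹,
                ENNReal.inv_mul_cancel ht0 ENNReal.ofReal_ne_top, one_mul]
          _ ≤ _ := by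
              rw [mul_assoc _ (ENNReal.ofReal t)⁻¹]
              gcongr
              exact hrμ b (hut b.2)
    _ = ENNReal.ofReal (5 ^ n) * ω * (ENNReal.ofReal t)⁻¹ *
          μ (⋃ b ∈ u, ball b (r b)) := by
        rw [ENNReal.tsum_mul_left]
        congr 1
        exact (measure_biUnion hcount hdisj fun _ _ => measurableSet_ball).symm
    _ ≤ _ := by gcongr; exact subset_univ _

/-- Splitting `σ ≤ σ 1_{σ > t} + t` localises the weak type inequality to the set `{σ > t}`. The
constant function `t` contributes `t |B(0, 1)|` to the maximal function, whence the divisor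
`1 + |B(0, 1)|`. -/
lemma volume_lt_maxFn_withDensity_le {n : ℕ} (hn : n ≠ 0)
    (σ : EuclideanSpace ℝ (Fin n) → ℝ≥0∞) {t : ℝ} (ht : 0 < t) :
    volume {x | ENNReal.ofReal t <
        maxFn n (volume.withDensity σ) x / (1 + volume (ball (0 : EuclideanSpace ℝ (Fin n)) 1))} ≤
      ENNReal.ofReal (5 ^ n) * volume (ball (0 : EuclideanSpace ℝ (Fin n)) 1) *
        (ENNReal.ofReal t)⁻¹ * ∫⁻ x, if ENNReal.ofReal t < σ x then σ x else 0 := by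
  set ω := volume (ball (0 : EuclideanSpace ℝ (Fin n)) 1) with hω
  have hωt : ω ≠ ⊤ := measure_ball_lt_top.ne
  set T := ENNReal.ofReal t
  set g : EuclideanSpace ℝ (Fin n) → ℝ≥0∞ := fun x => if T < σ x then σ x else 0
  have hle : ∀ x, maxFn n (volume.withDensity σ) x ≤
      maxFn n (volume.withDensity g) x + T * ω := by
    intro x
    refine iSup₂_le fun r hr => ?_
    have h0 : ENNReal.ofReal (r ^ n) ≠ 0 := by
      rw [Ne, ENNReal.ofReal_eq_zero, not_le]; positivity
    rw [ENNReal.div_le_iff h0 ENNReal.ofReal_ne_top, add_mul]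
    calc volume.withDensity σ (ball x r) = ∫⁻ y in ball x r, σ y :=
          withDensity_apply _ measurableSet_ball
      _ ≤ ∫⁻ y in ball x r, (g y + T) := by
          refine lintegral_mono fun y => ?_
          simp only [g]
          split_ifs with h
          · exact le_self_add
          · simpa using not_lt.1 h
      _ = volume.withDensity g (ball x r) + T * ω * ENNReal.ofReal (r ^ n) := by
          rw [lintegral_add_right _ measurable_const, withDensity_apply _ measurableSet_ball,
            setLIntegral_const, volume_ball_eq _ hr]
          ring
      _ ≤ _ := by gcongr; exact measure_ball_le_maxFn _ _ hr
  have hg : volume.withDensity g univ = ∫⁻ x, g x := by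
    rw [withDensity_apply _ MeasurableSet.univ, Measure.restrict_univ]
  rw [← hg]
  refine (measure_mono fun x hx => ?_).trans (volume_lt_maxFn_le hn (volume.withDensity g) ht)
  simp only [mem_ofPred_eq] at hx ⊢
  rw [ENNReal.lt_div_iff_mul_lt (Or.inl (by simp)) (Or.inl (by simp [hωt])), mul_add,
    mul_one] at hx
  exact lt_of_add_lt_add_right (hx.trans_le (hle x))

/-! ### The maximal theorem on `L^s` -/

lemma lintegral_Ioc_rpow {R e : ℝ} (hR : 0 ≤ R) (he : 0 < e) :
    ∫⁻ t in Ioc (0 : ℝ) R, ENNReal.ofReal (t ^ (e - 1)) = ENNReal.ofReal (R ^ e / e) := by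
  rw [← ofReal_integral_eq_lintegral_ofReal,
    ← intervalIntegral.integral_of_le hR, integral_rpow (Or.inl (by linarith))]
  · congr 1
    simp [Real.zero_rpow he.ne']
  · exact (intervalIntegrable_iff_integrableOn_Ioc_of_le hR).1
      (intervalIntegral.intervalIntegrable_rpow' (by linarith))
  · filter_upwards [ae_restrict_mem measurableSet_Ioc] with t ht
    exact Real.rpow_nonneg ht.1.le _

lemma lintegral_Ioi_rpow {R b : ℝ} (hR : 0 < R) (hb : 0 < b) :
    ∫⁻ t in Ioi R, ENNReal.ofReal (t ^ (-b - 1)) = ENNReal.ofReal (R ^ (-b) / b) := by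
  rw [← ofReal_integral_eq_lintegral_ofReal, integral_Ioi_rpow_of_lt (by linarith) hR]
  · congr 1
    rw [sub_add_cancel, neg_div_neg_eq]
  · exact integrableOn_Ioi_rpow_of_lt (by linarith) hR
  · filter_upwards [ae_restrict_mem measurableSet_Ioi] with t ht
    exact Real.rpow_nonneg (hR.trans ht).le _

lemma lintegral_Ioi_ite_rpow {a e : ℝ} (ha : 0 ≤ a) (he : 0 < e) :
    ∫⁻ t in Ioi (0 : ℝ), (if ENNReal.ofReal t < ENNReal.ofReal a then
      ENNReal.ofReal (t ^ (e - 1)) else 0) = ENNReal.ofReal (a ^ e / e) := by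
  have h1 : ∫⁻ t in Ioi (0 : ℝ), (if ENNReal.ofReal t < ENNReal.ofReal a then
      ENNReal.ofReal (t ^ (e - 1)) else 0) =
      ∫⁻ t in Ioo (0 : ℝ) a, ENNReal.ofReal (t ^ (e - 1)) := by
    rw [← lintegral_indicator measurableSet_Ioi, ← lintegral_indicator measurableSet_Ioo]
    congr 1
    ext t
    by_cases h0 : 0 < t
    · by_cases hta : t < a
      · simp [h0, hta, ENNReal.ofReal_lt_ofReal_iff (h0.trans hta)]
      · simp [h0, hta, ENNReal.ofReal_lt_ofReal_iff_of_nonneg h0.le]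
    · simp [h0]
  rw [h1, restrict_Ioo_eq_restrict_Ioc, lintegral_Ioc_rpow ha he]

/-- The layer-cake formula for `a ^ s`, as the inequality that remains valid for `a = ⊤`. -/
lemma rpow_le_lintegral_ite {s : ℝ} (hs : 1 < s) (a : ℝ≥0∞) :
    a ^ s ≤ ENNReal.ofReal s * ∫⁻ t in Ioi (0 : ℝ), (if ENNReal.ofReal t < a then
      ENNReal.ofReal (t ^ (s - 1)) else 0) := by
  by_cases ha : a = ⊤
  · have : ∫⁻ t in Ioi (0 : ℝ), (if ENNReal.ofReal t < a then
      ENNReal.ofReal (t ^ (s - 1)) else 0) = ⊤ := by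
      rw [eq_top_iff]
      calc (⊤ : ℝ≥0∞) = ∫⁻ t in Ioi (1 : ℝ), 1 := by simp
        _ ≤ ∫⁻ t in Ioi (1 : ℝ), (if ENNReal.ofReal t < a then
              ENNReal.ofReal (t ^ (s - 1)) else 0) := by
            refine setLIntegral_mono' measurableSet_Ioi fun t ht => ?_
            simp only [ha, ENNReal.ofReal_lt_top, if_true]
            rw [ENNReal.one_le_ofReal]
            exact Real.one_le_rpow (le_of_lt ht) (by linarith)
        _ ≤ _ := lintegral_mono_set (Ioi_subset_Ioi zero_le_one)
    rw [this, ENNReal.mul_top]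
    · exact le_top
    · simp; linarith
  · lift a to NNReal using ha
    have h := lintegral_Ioi_ite_rpow (a := (a : ℝ)) (e := s) a.coe_nonneg (by linarith)
    rw [ENNReal.ofReal_coe_nnreal] at h
    rw [h, ← ENNReal.ofReal_mul (by linarith), mul_div_cancel₀ _ (by linarith),
      ← ENNReal.ofReal_rpow_of_nonneg a.coe_nonneg (by linarith), ENNReal.ofReal_coe_nnreal]

lemma lintegral_ite_mul_le {s : ℝ} (hs : 1 < s) (a : ℝ≥0∞) :
    (∫⁻ t in Ioi (0 : ℝ), (if ENNReal.ofReal t < a then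
      ENNReal.ofReal (t ^ (s - 1 - 1)) else 0)) * a ≤ ENNReal.ofReal (1 / (s - 1)) * a ^ s := by
  have hs1 : 0 < s - 1 := by linarith
  by_cases ha : a = ⊤
  · rw [ha, ENNReal.top_rpow_of_pos (by linarith),
      ENNReal.mul_top (a := ENNReal.ofReal (1 / (s - 1))) (by simpa using hs)]
    exact le_top
  · lift a to NNReal using ha
    have h := lintegral_Ioi_ite_rpow (a := (a : ℝ)) (e := s - 1) a.coe_nonneg hs1
    rw [ENNReal.ofReal_coe_nnreal] at h
    rw [h]
    refine le_of_eq ?_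
    rw [← ENNReal.ofReal_coe_nnreal, ENNReal.ofReal_rpow_of_nonneg a.coe_nonneg (by linarith),
      ← ENNReal.ofReal_mul (by positivity), ← ENNReal.ofReal_mul (by positivity)]
    congr 1
    rcases eq_or_lt_of_le a.coe_nonneg with h0 | h0
    · have h0' : (a : ℝ) = 0 := h0.symm
      rw [h0', Real.zero_rpow (by linarith : s ≠ 0)]; simp
    · have h0' : 0 < (a : ℝ) := h0
      rw [Real.rpow_sub_one h0'.ne']
      field_simp

/-- The Hardy–Littlewood maximal theorem on `L^s`, `s > 1`: the layer-cake formula turns the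
localised weak type inequality into a bound by `∫ σ ^ s`. -/
lemma lintegral_maxFn_rpow_lt_top {n : ℕ} (hn : n ≠ 0) {s : ℝ} (hs : 1 < s)
    {σ : EuclideanSpace ℝ (Fin n) → ℝ≥0∞} (hσ : Measurable σ)
    (hσs : ∫⁻ x, σ x ^ s < ⊤) :
    ∫⁻ x, maxFn n (volume.withDensity σ) x ^ s < ⊤ := by
  set ω := volume (ball (0 : EuclideanSpace ℝ (Fin n)) 1) with hω
  have hωt : ω ≠ ⊤ := measure_ball_lt_top.ne
  set C := ENNReal.ofReal (5 ^ n) * ω with hC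
  have hCt : C ≠ ⊤ := ENNReal.mul_ne_top ENNReal.ofReal_ne_top hωt
  set G : EuclideanSpace ℝ (Fin n) → ℝ≥0∞ :=
    fun x => maxFn n (volume.withDensity σ) x / (1 + ω) with hG
  have hGm : Measurable G := (measurable_maxFn _).div_const _
  have hMG : ∀ x, maxFn n (volume.withDensity σ) x = (1 + ω) * G x := fun x =>
    (ENNReal.mul_div_cancel (by simp) (by simp [hωt])).symm
  have hmeas : ∀ (f : EuclideanSpace ℝ (Fin n) → ℝ≥0∞), Measurable f → ∀ e : ℝ,
      Measurable (fun z : EuclideanSpace ℝ (Fin n) × ℝ =>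
        if ENNReal.ofReal z.2 < f z.1 then ENNReal.ofReal (z.2 ^ e) else 0) := by
    intro f hf e
    refine Measurable.ite ?_ (by fun_prop) measurable_const
    exact measurableSet_lt (by fun_prop) (by fun_prop)
  have hGs : ∫⁻ x, G x ^ s < ⊤ := by
    calc ∫⁻ x, G x ^ s
        ≤ ∫⁻ x, ENNReal.ofReal s * ∫⁻ t in Ioi (0 : ℝ), (if ENNReal.ofReal t < G x then
            ENNReal.ofReal (t ^ (s - 1)) else 0) :=
          lintegral_mono fun x => rpow_le_lintegral_ite hs (G x)
      _ = ENNReal.ofReal s * ∫⁻ t in Ioi (0 : ℝ), ∫⁻ x, (if ENNReal.ofReal t < G x then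
            ENNReal.ofReal (t ^ (s - 1)) else 0) := by
          rw [lintegral_const_mul' _ _ ENNReal.ofReal_ne_top,
            lintegral_lintegral_swap (hmeas G hGm (s - 1)).aemeasurable]
      _ ≤ ENNReal.ofReal s * ∫⁻ t in Ioi (0 : ℝ), ∫⁻ x, C * ((if ENNReal.ofReal t < σ x then
            ENNReal.ofReal (t ^ (s - 1 - 1)) else 0) * σ x) := by
          gcongr ENNReal.ofReal s * ?_
          refine setLIntegral_mono' measurableSet_Ioi fun t ht => ?_
          have ht0 : 0 < t := ht
          have hset : MeasurableSet {x | ENNReal.ofReal t < G x} :=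
            measurableSet_lt measurable_const hGm
          calc ∫⁻ x, (if ENNReal.ofReal t < G x then ENNReal.ofReal (t ^ (s - 1)) else 0)
              = ENNReal.ofReal (t ^ (s - 1)) * volume {x | ENNReal.ofReal t < G x} := by
                rw [← lintegral_indicator_const hset]
                refine lintegral_congr fun x => ?_
                by_cases hx : ENNReal.ofReal t < G x <;> simp [hx]
            _ ≤ ENNReal.ofReal (t ^ (s - 1)) * (C * (ENNReal.ofReal t)⁻¹ *
                  ∫⁻ x, if ENNReal.ofReal t < σ x then σ x else 0) := by
                gcongr
                exact volume_lt_maxFn_withDensity_le hn σ ht0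
            _ = C * ENNReal.ofReal (t ^ (s - 1 - 1)) *
                  ∫⁻ x, if ENNReal.ofReal t < σ x then σ x else 0 := by
                rw [Real.rpow_sub_one ht0.ne' (s - 1), ENNReal.ofReal_div_of_pos ht0,
                  ENNReal.div_eq_inv_mul]
                ring
            _ = _ := by
                rw [← lintegral_const_mul' _ _
                  (ENNReal.mul_ne_top hCt ENNReal.ofReal_ne_top)]
                refine lintegral_congr fun x => ?_
                split_ifs <;> ring
      _ = ENNReal.ofReal s * ∫⁻ x, ∫⁻ t in Ioi (0 : ℝ), C * ((if ENNReal.ofReal t < σ x then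
            ENNReal.ofReal (t ^ (s - 1 - 1)) else 0) * σ x) := by
          rw [lintegral_lintegral_swap]
          exact ((((hmeas σ hσ (s - 1 - 1)).mul (hσ.comp measurable_fst)).const_mul C).comp
            measurable_swap).aemeasurable
      _ ≤ ENNReal.ofReal s * ∫⁻ x, C * (ENNReal.ofReal (1 / (s - 1)) * σ x ^ s) := by
          gcongr with x
          have hm : Measurable fun t : ℝ => (if ENNReal.ofReal t < σ x then
              ENNReal.ofReal (t ^ (s - 1 - 1)) else 0) :=
            (hmeas σ hσ (s - 1 - 1)).comp measurable_prodMk_left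
          rw [lintegral_const_mul' _ _ hCt, lintegral_mul_const _ hm]
          gcongr C * ?_
          exact lintegral_ite_mul_le hs (σ x)
      _ < ⊤ := by
          rw [lintegral_const_mul' _ _ hCt, lintegral_const_mul' _ _ ENNReal.ofReal_ne_top]
          exact ENNReal.mul_lt_top ENNReal.ofReal_lt_top (ENNReal.mul_lt_top hCt.lt_top
            (ENNReal.mul_lt_top ENNReal.ofReal_lt_top hσs))
  have hct : (1 + ω) ^ s ≠ ⊤ := ENNReal.rpow_ne_top_of_nonneg (by linarith) (by simp [hωt])
  calc ∫⁻ x, maxFn n (volume.withDensity σ) x ^ s = ∫⁻ x, (1 + ω) ^ s * G x ^ s := by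
        refine lintegral_congr fun x => ?_
        rw [hMG, ENNReal.mul_rpow_of_nonneg _ _ (by linarith)]
    _ < ⊤ := by
        rw [lintegral_const_mul' _ _ hct]
        exact ENNReal.mul_lt_top hct.lt_top hGs

/-! ### Hedberg's estimate for the Wolff potential -/

/-- The measure `σ dx` of a ball of radius `r` is at most a constant times `r ^ (n - n / s)` when
`σ ∈ L^s`. This is Hölder's inequality up to the constant, and follows from the pointwise bound
`σ ≤ l + l ^ (1 - s) σ ^ s` with `l = r ^ (-n / s)`. -/
lemma withDensity_ball_le {n : ℕ} {s : ℝ} (hs : 1 < s)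
    {σ : EuclideanSpace ℝ (Fin n) → ℝ≥0∞} (hσs : ∫⁻ x, σ x ^ s < ⊤) :
    ∃ K : ℝ, 0 ≤ K ∧ ∀ x (r : ℝ), 0 < r →
      volume.withDensity σ (ball x r) ≤ ENNReal.ofReal (K * r ^ ((n : ℝ) - n / s)) := by
  set ω := volume (ball (0 : EuclideanSpace ℝ (Fin n)) 1) with hω
  have hωt : ω ≠ ⊤ := measure_ball_lt_top.ne
  set I := ∫⁻ x, σ x ^ s with hI
  refine ⟨(ω + I).toReal, ENNReal.toReal_nonneg, fun x r hr => ?_⟩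
  rw [ENNReal.ofReal_mul ENNReal.toReal_nonneg,
    ENNReal.ofReal_toReal (ENNReal.add_ne_top.2 ⟨hωt, hσs.ne⟩)]
  set l : ℝ := r ^ (-(n : ℝ) / s) with hl
  have hl0 : 0 < l := Real.rpow_pos_of_pos hr _
  have hpt : ∀ y, σ y ≤ ENNReal.ofReal l + ENNReal.ofReal (l ^ (1 - s)) * σ y ^ s := by
    intro y
    rcases le_total (σ y) (ENNReal.ofReal l) with h | h
    · exact h.trans le_self_add
    refine le_add_of_le_right ?_
    have h1 : (1 : ℝ≥0∞) ≤ ENNReal.ofReal (l ^ (1 - s)) * σ y ^ (s - 1) := by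
      calc (1 : ℝ≥0∞) = ENNReal.ofReal (l ^ (1 - s)) * ENNReal.ofReal l ^ (s - 1) := by
            rw [ENNReal.ofReal_rpow_of_pos hl0, ← ENNReal.ofReal_mul (by positivity),
              ← Real.rpow_add hl0]
            simp
        _ ≤ _ := by
            gcongr
    calc σ y = 1 * σ y := (one_mul _).symm
      _ ≤ ENNReal.ofReal (l ^ (1 - s)) * σ y ^ (s - 1) * σ y := by gcongr
      _ = ENNReal.ofReal (l ^ (1 - s)) * σ y ^ s := by
          rw [mul_assoc]
          congr 1
          nth_rewrite 2 [← ENNReal.rpow_one (σ y)]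
          rw [← ENNReal.rpow_add_of_nonneg _ _ (by linarith) zero_le_one, sub_add_cancel]
  have e1 : l * r ^ n = r ^ ((n : ℝ) - n / s) := by
    rw [hl, ← Real.rpow_natCast, ← Real.rpow_add hr]
    congr 1; ring
  have e2 : l ^ (1 - s) = r ^ ((n : ℝ) - n / s) := by
    rw [hl, ← Real.rpow_mul hr.le]
    congr 1
    have : s ≠ 0 := by linarith
    field_simp
    ring
  calc volume.withDensity σ (ball x r) = ∫⁻ y in ball x r, σ y :=
        withDensity_apply _ measurableSet_ball
    _ ≤ ∫⁻ y in ball x r, (ENNReal.ofReal l + ENNReal.ofReal (l ^ (1 - s)) * σ y ^ s) :=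
        lintegral_mono hpt
    _ = ENNReal.ofReal l * volume (ball x r) +
          ENNReal.ofReal (l ^ (1 - s)) * ∫⁻ y in ball x r, σ y ^ s := by
        rw [lintegral_add_left measurable_const, setLIntegral_const,
          lintegral_const_mul' _ _ ENNReal.ofReal_ne_top]
    _ ≤ ENNReal.ofReal l * volume (ball x r) + ENNReal.ofReal (l ^ (1 - s)) * I := by
        gcongr
        exact setLIntegral_le_lintegral _ _
    _ = (ω + I) * ENNReal.ofReal (r ^ ((n : ℝ) - n / s)) := by
        rw [volume_ball_eq _ hr, ← mul_assoc, ← ENNReal.ofReal_mul hl0.le, e1, e2]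
        ring

lemma wolff_integrand_le {n : ℕ} {α p k e r : ℝ} (hp : 1 < p) (hr : 0 < r) (hk : 0 ≤ k)
    {m : ℝ≥0∞} (hm : m ≤ ENNReal.ofReal (k * r ^ e)) :
    (m / ENNReal.ofReal (r ^ ((n : ℝ) - α * p))) ^ (1 / (p - 1)) * ENNReal.ofReal r⁻¹ ≤
      ENNReal.ofReal (k ^ (1 / (p - 1))) *
        ENNReal.ofReal (r ^ ((e - n + α * p) * (1 / (p - 1)) - 1)) := by
  have hq : 0 ≤ 1 / (p - 1) := one_div_nonneg.2 (by linarith)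
  calc _ ≤ (ENNReal.ofReal (k * r ^ e) / ENNReal.ofReal (r ^ ((n : ℝ) - α * p))) ^ (1 / (p - 1)) *
        ENNReal.ofReal r⁻¹ := by gcongr
    _ = _ := by
      rw [← ENNReal.ofReal_div_of_pos (by positivity), mul_div_assoc, ← Real.rpow_sub hr,
        ENNReal.ofReal_rpow_of_nonneg (by positivity) hq, ← ENNReal.ofReal_mul (by positivity),
        ← ENNReal.ofReal_mul (by positivity), Real.mul_rpow hk (by positivity),
        ← Real.rpow_mul hr.le, mul_assoc, ← Real.rpow_neg_one r, ← Real.rpow_add hr]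
      congr 4
      ring

/-- Hedberg's pointwise estimate for the Wolff potential. The integral over `r` is cut at
`R = M ^ (-s / n)`, with `M` the maximal function: below `R` the measure of the ball is bounded by
`M r ^ n`, above `R` by the growth hypothesis, and both pieces are multiples of the same power
of `M`. -/
lemma wolffPot_le_maxFn {n : ℕ} (hn : n ≠ 0) {α p s K : ℝ} (hp : 1 < p) (hα : 0 < α)
    (hs : 0 < s) (hαs : α * p < n / s) (hK : 0 ≤ K)
    (μ : Measure (EuclideanSpace ℝ (Fin n)))
    (hμ : ∀ x (r : ℝ), 0 < r → μ (ball x r) ≤ ENNReal.ofReal (K * r ^ ((n : ℝ) - n / s))) :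
    ∃ C : ℝ, 0 < C ∧ ∀ x, wolffPot n α p μ x ≤
      ENNReal.ofReal C * maxFn n μ x ^ ((1 - α * p * s / n) * (1 / (p - 1))) := by
  have hn0 : (0 : ℝ) < n := by exact_mod_cast Nat.pos_of_ne_zero hn
  set q := 1 / (p - 1) with hqdef
  have hq : 0 < q := one_div_pos.2 (by linarith)
  have hu : 0 < α * p * q := by positivity
  have hv : 0 < (n / s - α * p) * q := mul_pos (by linarith) hq
  have hθ : 0 < (1 - α * p * s / n) * q := by
    refine mul_pos ?_ hq
    rw [lt_div_iff₀ hs] at hαs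
    rw [sub_pos, div_lt_one hn0]
    exact hαs
  set θ := (1 - α * p * s / n) * q with hθdef
  have hC : 0 < 1 / (α * p * q) + K ^ q / ((n / s - α * p) * q) :=
    add_pos_of_pos_of_nonneg (by positivity) (by positivity)
  refine ⟨_, hC, fun x => ?_⟩
  by_cases hA0 : maxFn n μ x = 0
  · have hz : ∀ r ∈ Ioi (0 : ℝ), (μ (ball x r) / ENNReal.ofReal (r ^ ((n : ℝ) - α * p))) ^ q *
        ENNReal.ofReal r⁻¹ ≤ 0 := by
      intro r hr
      have h := measure_ball_le_maxFn μ x hr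
      rw [hA0, zero_mul, nonpos_iff_eq_zero] at h
      rw [h, ENNReal.zero_div, ENNReal.zero_rpow_of_pos hq, zero_mul]
    refine (setLIntegral_mono' measurableSet_Ioi hz).trans ?_
    simp
  by_cases hAt : maxFn n μ x = ⊤
  · rw [hAt, ENNReal.top_rpow_of_pos hθ, ENNReal.mul_top]
    · exact le_top
    · rw [Ne, ENNReal.ofReal_eq_zero, not_le]; exact hC
  set a := (maxFn n μ x).toReal with ha
  have ha0 : 0 < a := ENNReal.toReal_pos hA0 hAt
  have hAa : maxFn n μ x = ENNReal.ofReal a := (ENNReal.ofReal_toReal hAt).symm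
  set R := a ^ (-s / n) with hR
  have hR0 : 0 < R := Real.rpow_pos_of_pos ha0 _
  have hsmall : ∫⁻ r in Ioc 0 R, (μ (ball x r) / ENNReal.ofReal (r ^ ((n : ℝ) - α * p))) ^ q *
      ENNReal.ofReal r⁻¹ ≤ ENNReal.ofReal (a ^ θ / (α * p * q)) := by
    calc _ ≤ ∫⁻ r in Ioc 0 R, ENNReal.ofReal (a ^ q) * ENNReal.ofReal (r ^ (α * p * q - 1)) := by
          refine setLIntegral_mono' measurableSet_Ioc fun r hr => ?_
          refine (wolff_integrand_le (k := a) (e := n) hp hr.1 ha0.le ?_).trans_eq ?_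
          · rw [ENNReal.ofReal_mul ha0.le, ← hAa, Real.rpow_natCast]
            exact measure_ball_le_maxFn μ x hr.1
          · rw [sub_self, zero_add]
      _ = ENNReal.ofReal (a ^ q * (R ^ (α * p * q) / (α * p * q))) := by
          rw [lintegral_const_mul' _ _ ENNReal.ofReal_ne_top, lintegral_Ioc_rpow hR0.le hu,
            ← ENNReal.ofReal_mul (by positivity)]
      _ = _ := by
          rw [← mul_div_assoc, hR, ← Real.rpow_mul ha0.le, ← Real.rpow_add ha0]
          congr 3
          rw [hθdef]; field_simp; ring
  have hlarge : ∫⁻ r in Ioi R, (μ (ball x r) / ENNReal.ofReal (r ^ ((n : ℝ) - α * p))) ^ q *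
      ENNReal.ofReal r⁻¹ ≤ ENNReal.ofReal (K ^ q * (a ^ θ / ((n / s - α * p) * q))) := by
    calc _ ≤ ∫⁻ r in Ioi R, ENNReal.ofReal (K ^ q) *
          ENNReal.ofReal (r ^ (-((n / s - α * p) * q) - 1)) := by
          refine setLIntegral_mono' measurableSet_Ioi fun r hr => ?_
          have hr0 : 0 < r := hR0.trans hr
          refine (wolff_integrand_le hp hr0 hK (hμ x r hr0)).trans_eq ?_
          congr 3
          ring
      _ = ENNReal.ofReal (K ^ q * (R ^ (-((n / s - α * p) * q)) / ((n / s - α * p) * q))) := by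
          rw [lintegral_const_mul' _ _ ENNReal.ofReal_ne_top, lintegral_Ioi_rpow hR0 hv,
            ← ENNReal.ofReal_mul (by positivity)]
      _ = _ := by
          rw [hR, ← Real.rpow_mul ha0.le]
          congr 4
          rw [hθdef]; field_simp
  rw [wolffPot, ← Ioc_union_Ioi_eq_Ioi hR0.le,
    lintegral_union measurableSet_Ioi (Ioc_disjoint_Ioi le_rfl)]
  refine (add_le_add hsmall hlarge).trans_eq ?_
  rw [hAa, ENNReal.ofReal_rpow_of_pos ha0, ← ENNReal.ofReal_mul hC.le,
    ← ENNReal.ofReal_add (by positivity) (by positivity)]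
  congr 1
  ring

theorem stmt4 {n : ℕ} (p α β s : ℝ) (hp : 1 < p) (hpn : p < n)
    (hα0 : 0 < α) (hα : α < n / p) (hβ : 0 < β)
    (hs : s = n * (β + p - 1) / (n * (p - 1) + p * α * β))
    (σ : EuclideanSpace ℝ (Fin n) → ℝ≥0∞) (hσm : Measurable σ)
    (hσLs : (∫⁻ x, σ x ^ s) < ⊤) :
    (∫⁻ x, (wolffPot n α p (volume.withDensity σ) x) ^ β * σ x) < ⊤ := by
  have hn0 : (0 : ℝ) < n := by linarith
  have hn : n ≠ 0 := by rintro rfl; simp at hn0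
  have hp1 : 0 < p - 1 := by linarith
  have hαp : α * p < n := (lt_div_iff₀ (by linarith)).1 hα
  have hD : 0 < n * (p - 1) + p * α * β := by positivity
  have hsD : s * (n * (p - 1) + p * α * β) = n * (β + p - 1) := by
    rw [hs, div_mul_cancel₀ _ hD.ne']
  have hs1 : 1 < s := by
    rw [hs, lt_div_iff₀ hD]
    nlinarith
  -- `α p < n / s` reduces to `α p (p - 1) < n (p - 1)`.
  have hαs : α * p < n / s := by
    rw [lt_div_iff₀ (by linarith), hs, ← mul_div_assoc, div_lt_iff₀ hD]
    have := mul_lt_mul_of_pos_right hαp (mul_pos hn0 hp1)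
    nlinarith
  obtain ⟨K, hK, hμ⟩ := withDensity_ball_le hs1 hσLs
  obtain ⟨C, hC, hW⟩ := wolffPot_le_maxFn hn hp hα0 (by linarith) hαs hK _ hμ
  -- The choice of `s` makes `W ^ β` comparable to the power `s - 1` of the maximal function.
  have hexp : (1 - α * p * s / n) * (1 / (p - 1)) * β = s - 1 := by
    field_simp
    linarith
  set M := maxFn n (volume.withDensity σ) with hM
  have hCt : ENNReal.ofReal C ^ β ≠ ⊤ :=
    ENNReal.rpow_ne_top_of_nonneg hβ.le ENNReal.ofReal_ne_top
  have hself : ∀ c : ℝ≥0∞, c ^ (s - 1) * c = c ^ s := by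
    intro c
    nth_rewrite 2 [← ENNReal.rpow_one c]
    rw [← ENNReal.rpow_add_of_nonneg _ _ (by linarith) zero_le_one, sub_add_cancel]
  have hyoung : ∀ a b : ℝ≥0∞, a ^ (s - 1) * b ≤ a ^ s + b ^ s := by
    intro a b
    rcases le_total a b with h | h
    · refine le_add_of_le_right ?_
      rw [← hself b]
      gcongr
    · refine le_add_of_le_left ?_
      rw [← hself a]
      gcongr
  calc ∫⁻ x, (wolffPot n α p (volume.withDensity σ) x) ^ β * σ x
      ≤ ∫⁻ x, ENNReal.ofReal C ^ β * (M x ^ s + σ x ^ s) := by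
        refine lintegral_mono fun x => ?_
        calc _ ≤ (ENNReal.ofReal C * M x ^ ((1 - α * p * s / n) * (1 / (p - 1)))) ^ β * σ x := by
              gcongr
              exact hW x
          _ = ENNReal.ofReal C ^ β * (M x ^ (s - 1) * σ x) := by
              rw [ENNReal.mul_rpow_of_nonneg _ _ hβ.le, ← ENNReal.rpow_mul, hexp, mul_assoc]
          _ ≤ _ := by gcongr; exact hyoung _ _
    _ = ENNReal.ofReal C ^ β * ((∫⁻ x, M x ^ s) + ∫⁻ x, σ x ^ s) := by
        rw [lintegral_const_mul' _ _ hCt, lintegral_add_right _ (hσm.pow_const s)]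
    _ < ⊤ := ENNReal.mul_lt_top hCt.lt_top
        (ENNReal.add_lt_top.2 ⟨lintegral_maxFn_rpow_lt_top hn hs1 hσm hσLs, hσLs⟩)
end

section
/- Let 0<q<1, 0<α<n/2, 0<r ≤ n/(n−2α), and let σ be a nonnegative locally finite Borel measure on ℝⁿ. If u : ℝⁿ → [0,∞] is measurable, satisfies u(x) ≥ I_{2α}(u^q dσ)(x) for all x ∈ ℝⁿ, and ∫_{ℝⁿ} u^r dx < ∞, then the measure u^q dσ is the zero measure (equivalently, u = 0 σ-almost everywhere). -/
/-!
If `ν = u^q dσ` is nonzero, it charges some ball `B(0, R)` with `R ≥ 1`. For `y` in that ball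
`|x - y| ≤ |x| + R`, and the exponent `2α - n` is negative, so the supersolution inequality gives
`u(x) ≥ (|x| + R)^{2α-n} ν(B(0, R))` for every `x`. As `(n - 2α) r ≤ n` and `|x| + R ≥ 1`,
it follows that `u(x)^r ≥ ν(B(0, R))^r (|x| + R)^{-n}`. The function `(|x| + R)^{-n}` has infinite
integral over `ℝⁿ` (in polar coordinates the integrand decays only like `1/t`), which contradicts
`∫ u^r dx < ∞`. The bound holds also if `ν(B(0, R)) = ∞`.
-/

open MeasureTheory Metric Set ENNReal

/-- The Riesz potential `I_{2α}μ(x) = ∫ |x-y|^{2α-n} dμ(y)`. -/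
noncomputable def rieszPot (n : ℕ) (α : ℝ)
    (μ : Measure (EuclideanSpace ℝ (Fin n))) (x : EuclideanSpace ℝ (Fin n)) : ℝ≥0∞ :=
  ∫⁻ y, (edist x y) ^ (2 * α - n) ∂μ

/-- The critical power `(|x| + R)^{-n}` is not integrable on `ℝⁿ`: in polar coordinates the
integrand is at least `2^{-n} t^{-1}` for `t > R`. -/
lemma lintegral_norm_add_pow_inv {n : ℕ} (hn : 0 < n) {R : ℝ} (hR : 1 ≤ R) :
    ∫⁻ x : EuclideanSpace ℝ (Fin n), ENNReal.ofReal (((‖x‖ + R) ^ n)⁻¹) = ⊤ := by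
  by_contra hne
  have : Nonempty (Fin n) := ⟨⟨0, hn⟩⟩
  have hint : Integrable (fun x : EuclideanSpace ℝ (Fin n) => ((‖x‖ + R) ^ n)⁻¹) := by
    refine ⟨(by fun_prop : Measurable _).aestronglyMeasurable, ?_⟩
    rw [hasFiniteIntegral_iff_ofReal (Filter.Eventually.of_forall fun x => by positivity)]
    exact lt_top_iff_ne_top.2 hne
  have hpolar := (integrable_fun_norm_addHaar
    (volume : Measure (EuclideanSpace ℝ (Fin n))) (f := fun t : ℝ => ((t + R) ^ n)⁻¹)).1 hint
  rw [finrank_euclideanSpace_fin] at hpolar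
  have hfar := (hpolar.mono_set (Ioi_subset_Ioi (by linarith : (0 : ℝ) ≤ R))).const_mul (2 ^ n)
  refine not_integrableOn_Ioi_inv (a := R) (Integrable.mono' hfar
    measurable_inv.aestronglyMeasurable ?_)
  filter_upwards [ae_restrict_mem measurableSet_Ioi] with t ht
  have ht : R < t := ht
  have ht0 : 0 < t := by linarith
  have hpow : (t + R) ^ n ≤ (2 * t) ^ n := by gcongr; linarith
  rw [Real.norm_of_nonneg (by positivity), smul_eq_mul, ← mul_assoc, ← div_eq_mul_inv,
    le_div_iff₀ (by positivity)]
  calc t⁻¹ * (t + R) ^ n ≤ t⁻¹ * (2 * t) ^ n := by gcongr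
    _ = 2 ^ n * t ^ (n - 1) := by
      obtain ⟨m, rfl⟩ := Nat.exists_eq_succ_of_ne_zero hn.ne'
      rw [mul_pow, Nat.succ_eq_add_one, Nat.add_sub_cancel, pow_succ t m]
      field_simp

/-- The potential of `μ` decays no faster than the kernel itself: it dominates
`(|x| + R)^{2α-n}` times the mass that `μ` gives to `B(0, R)`. -/
lemma le_rieszPot {n : ℕ} {α : ℝ} (hα : 2 * α - n ≤ 0)
    (μ : Measure (EuclideanSpace ℝ (Fin n))) (R : ℝ) (x : EuclideanSpace ℝ (Fin n)) :
    ENNReal.ofReal (‖x‖ + R) ^ (2 * α - n) * μ (ball 0 R) ≤ rieszPot n α μ x := by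
  refine le_trans ?_ (setLIntegral_le_lintegral (ball 0 R) _)
  rw [← setLIntegral_const]
  refine setLIntegral_mono' measurableSet_ball fun y hy => ?_
  rw [← neg_neg (2 * α - n), ENNReal.rpow_neg _ (-(2 * α - n)),
    ENNReal.rpow_neg _ (-(2 * α - n))]
  refine ENNReal.inv_le_inv.2 (ENNReal.rpow_le_rpow ?_ (neg_nonneg.2 hα))
  rw [edist_dist]
  refine ENNReal.ofReal_le_ofReal ?_
  rw [mem_ball_zero_iff] at hy
  rw [dist_eq_norm]
  linarith [norm_sub_le x y]

theorem stmt6 {n : ℕ} (q α r : ℝ) (hq0 : 0 < q) (hq : q < 1)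
    (hα0 : 0 < α) (hα : α < n / 2) (hr0 : 0 < r) (hr : r ≤ n / (n - 2 * α))
    (σ : Measure (EuclideanSpace ℝ (Fin n))) [IsLocallyFiniteMeasure σ]
    (u : EuclideanSpace ℝ (Fin n) → ℝ≥0∞) (hu : Measurable u)
    (hsuper : ∀ x, rieszPot n α (σ.withDensity (fun y => u y ^ q)) x ≤ u x)
    (hLr : (∫⁻ x, u x ^ r) < ⊤) :
    σ.withDensity (fun y => u y ^ q) = 0 := by
  set ν := σ.withDensity (fun y => u y ^ q)
  have hn : 0 < n := by
    have : (0 : ℝ) < n := by linarith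
    exact_mod_cast this
  by_contra hν
  obtain ⟨k, hk⟩ : ∃ k : ℕ, ν (ball 0 ((k : ℝ) + 1)) ≠ 0 := by
    by_contra! h
    refine hν (Measure.measure_univ_eq_zero.1 ?_)
    refine measure_mono_null (fun x _ => ?_) (measure_iUnion_null h)
    obtain ⟨k, hk⟩ := exists_nat_gt ‖x‖
    exact mem_iUnion.2 ⟨k, mem_ball_zero_iff.2 (by linarith)⟩
  set R : ℝ := (k : ℝ) + 1
  have hR : 1 ≤ R := by simp [R]
  have hexp : -(n : ℝ) ≤ (2 * α - n) * r := by
    rw [le_div_iff₀ (by linarith)] at hr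
    linarith
  have hpt : ∀ x, ν (ball 0 R) ^ r * ENNReal.ofReal (((‖x‖ + R) ^ n)⁻¹) ≤ u x ^ r := by
    intro x
    have hx : 1 ≤ ‖x‖ + R := by linarith [norm_nonneg x]
    calc ν (ball 0 R) ^ r * ENNReal.ofReal (((‖x‖ + R) ^ n)⁻¹)
        = ν (ball 0 R) ^ r * ENNReal.ofReal (‖x‖ + R) ^ (-(n : ℝ)) := by
          rw [ENNReal.ofReal_rpow_of_pos (by linarith), Real.rpow_neg (by linarith),
            Real.rpow_natCast]
      _ ≤ ν (ball 0 R) ^ r * ENNReal.ofReal (‖x‖ + R) ^ ((2 * α - n) * r) := by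
          gcongr
          exact ENNReal.one_le_ofReal.2 hx
      _ = (ENNReal.ofReal (‖x‖ + R) ^ (2 * α - n) * ν (ball 0 R)) ^ r := by
          rw [ENNReal.mul_rpow_of_nonneg _ _ hr0.le, ← ENNReal.rpow_mul, mul_comm]
      _ ≤ u x ^ r := by
          gcongr
          exact (le_rieszPot (by linarith) ν R x).trans (hsuper x)
  have htop := lintegral_mono (μ := volume) hpt
  rw [lintegral_const_mul _ (by fun_prop), lintegral_norm_add_pow_inv hn hR,
    ENNReal.mul_top (by simp [hk, ENNReal.rpow_eq_zero_iff, hr0.not_gt])] at htop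
  exact hLr.not_ge htop
end

section
/- Let 0<q<1, 0<α<n/2, 0<r<∞, and let σ be a nonnegative locally finite Borel measure on ℝⁿ. Suppose u : ℝⁿ → [0,∞] is measurable, the measure u^q dσ is not the zero measure, u(x) ≥ I_{2α}(u^q dσ)(x) for all x ∈ ℝⁿ, and ∫_{ℝⁿ} u^r dx < ∞. Then ∫_{ℝⁿ} (I_{2α}σ)^{r/(1−q)} dx < ∞. -/
/-!
The proof gives the pointwise lower bound `C * (I σ) ^ (1 / (1 - q)) ≤ u` with a constant `C > 0`
depending only on `n`, `α`, `q`; integrating its `r`-th power yields the claim.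

Fix a ball `B` charged by `u ^ q dσ`, a level `N < ∞`, and let `w = min (I σ_B) N`, where `σ_B` is
the restriction of `σ` to `B`. Since `u` is bounded below by a positive constant on `B`, the best
constant `c` with `c * w ^ (1 / (1 - q)) ≤ u` on `B` is positive. Inserting this bound into
`u ≥ I (u ^ q dσ)` gives it again with the constant `c ^ q * D`, where `D > 0` depends only on
`n`, `α`, `q`. Hence `c ^ q * D ≤ c`, which bounds `c` below by `D ^ (1 / (1 - q))`, whatever `B`
and `N` are; then `N` and `B` are sent to infinity.

The improvement step rests on a median argument. Let `m` be the measure `|x - y| ^ (2 α - n) dσ_B`,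
of total mass `I σ_B x ≥ M := w x`. The points `y` with `m {z | |x - y| ≤ |x - z|} ≥ M / 2` carry
mass at least `M / 2`, and for such `y` the triangle inequality `|y - z| ≤ 2 |x - z|` gives
`I σ_B y ≥ 2 ^ (2 α - n) * M / 2`.
-/

open MeasureTheory Metric Set ENNReal

lemma rpow_le_of_neg {e : ℝ} (he : e < 0) {a b : ℝ≥0∞} (h : a ≤ b) : b ^ e ≤ a ^ e := by
  rw [← neg_neg e, ENNReal.rpow_neg, ENNReal.rpow_neg _ (-e), ENNReal.inv_le_inv]
  exact ENNReal.rpow_le_rpow h (by linarith)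

/-- The points whose tail `{z | d y ≤ d z}` has mass below `a` carry mass at most `a`: their values
under `d` lie in a ray that is exhausted by such tails. -/
lemma measure_tail_le {X : Type*} [MeasurableSpace X] (m : Measure X) (d : X → ℝ)
    (hd0 : ∀ y, 0 ≤ d y) (a : ℝ≥0∞) :
    m {y | m {z | d y ≤ d z} < a} ≤ a := by
  set U : Set ℝ := {t | 0 ≤ t ∧ m {z | t ≤ d z} < a} with hU
  have hsub : {y | m {z | d y ≤ d z} < a} ⊆ d ⁻¹' U := fun y hy => ⟨hd0 y, hy⟩
  refine (measure_mono hsub).trans ?_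
  rcases U.eq_empty_or_nonempty with h | hne
  · simp [h]
  have hbdd : BddBelow U := ⟨0, fun t ht => ht.1⟩
  by_cases hmin : sInf U ∈ U
  · have hray : d ⁻¹' U ⊆ {z | sInf U ≤ d z} := fun y hy => csInf_le hbdd hy
    exact (measure_mono hray).trans hmin.2.le
  -- The infimum is not attained, so `U` is exhausted by rays with endpoints in `U`.
  obtain ⟨s, hs, hlim, hsU⟩ := exists_seq_tendsto_sInf hne hbdd
  have hcov : d ⁻¹' U ⊆ ⋃ k, {z | s k ≤ d z} := by
    intro y hy
    have hlt : sInf U < d y :=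
      lt_of_le_of_ne (csInf_le hbdd hy) fun h => hmin (h ▸ hy)
    obtain ⟨k, hk⟩ := (hlim.eventually (gt_mem_nhds hlt)).exists
    exact mem_iUnion.2 ⟨k, hk.le⟩
  have hmono : Monotone fun k => {z | s k ≤ d z} :=
    fun i j hij z hz => (hs hij).trans hz
  refine (measure_mono hcov).trans ?_
  rw [hmono.measure_iUnion]
  exact iSup_le fun k => (hsU k).2.le

/-- The Riesz kernel is quasi-metric: its value at `(y, z)` is comparable from below to its value
at `(x, z)` as soon as `z` is at least as far from `x` as `y` is. -/
lemma kernel_le {X : Type*} [MetricSpace X] {e : ℝ} (he : e < 0) {x y z : X}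
    (h : dist x y ≤ dist x z) : (2 : ℝ≥0∞) ^ e * edist x z ^ e ≤ edist y z ^ e := by
  rw [← ENNReal.mul_rpow_of_ne_top (by simp) (edist_ne_top _ _)]
  have h' : edist x y ≤ edist x z := by
    rw [edist_dist, edist_dist]; exact ENNReal.ofReal_le_ofReal h
  have h2 : edist y z ≤ 2 * edist x z := calc
    edist y z ≤ edist y x + edist x z := edist_triangle _ _ _
    _ ≤ edist x z + edist x z := by rw [edist_comm y x]; gcongr
    _ = 2 * edist x z := by ring
  exact rpow_le_of_neg he h2

lemma measurable_kernel {n : ℕ} (e : ℝ) (x : EuclideanSpace ℝ (Fin n)) :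
    Measurable fun y => edist x y ^ e :=
  (measurable_const.edist measurable_id).pow_const e

lemma rieszPot_withDensity {n : ℕ} (α : ℝ) (σ : Measure (EuclideanSpace ℝ (Fin n)))
    {f : EuclideanSpace ℝ (Fin n) → ℝ≥0∞} (hf : Measurable f) (x : EuclideanSpace ℝ (Fin n)) :
    rieszPot n α (σ.withDensity f) x = ∫⁻ y, edist x y ^ (2 * α - n) * f y ∂σ := by
  unfold rieszPot
  rw [lintegral_withDensity_eq_lintegral_mul _ hf (measurable_kernel _ x)]
  simp [mul_comm]

/-- The self-improvement step: if `c * (min (I τ) N) ^ g ≤ u` almost everywhere, then the potential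
of `u ^ q dτ` obeys the same lower bound with `c` replaced by `c ^ q * (2 ^ (2 α - n) / 2) ^ g`. -/
lemma improve {n : ℕ} {α q g : ℝ} {c N : ℝ≥0∞} (he : 2 * α - n < 0) (hq0 : 0 < q)
    (hg : 0 < g) (hgq : g * q + 1 = g) (τ : Measure (EuclideanSpace ℝ (Fin n)))
    (u : EuclideanSpace ℝ (Fin n) → ℝ≥0∞)
    (hc : ∀ᵐ y ∂τ, c * (min (rieszPot n α τ y) N) ^ g ≤ u y) (hN : N ≠ ⊤)
    (x : EuclideanSpace ℝ (Fin n)) :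
    c ^ q * ((2 : ℝ≥0∞) ^ (2 * α - n) / 2) ^ g * (min (rieszPot n α τ x) N) ^ g ≤
      ∫⁻ y, edist x y ^ (2 * α - n) * u y ^ q ∂τ := by
  set κ : ℝ≥0∞ := (2 : ℝ≥0∞) ^ (2 * α - n) with hκ
  have hκ1 : κ ≤ 1 := ENNReal.rpow_le_one_of_one_le_of_neg (by norm_num) he
  set M := min (rieszPot n α τ x) N with hM
  have hMtop : M ≠ ⊤ := ne_top_of_le_ne_top hN (min_le_right _ _)
  set m := τ.withDensity (fun y => edist x y ^ (2 * α - n)) with hm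
  have hmuniv : m univ = rieszPot n α τ x := by
    rw [hm, withDensity_apply _ MeasurableSet.univ, Measure.restrict_univ]; rfl
  have hanti : Antitone fun t : ℝ => m {z | t ≤ dist x z} :=
    fun s t hst => measure_mono fun z hz => hst.trans hz
  have hdist : Measurable fun y => dist x y := measurable_const.dist measurable_id
  set A := {y | M / 2 ≤ m {z | dist x y ≤ dist x z}} with hA
  have hAm : MeasurableSet A :=
    measurableSet_le measurable_const (hanti.measurable.comp hdist)
  have hmA : M / 2 ≤ m A := by
    have hcompl : m Aᶜ ≤ M / 2 := by
      have := measure_tail_le m (fun y => dist x y) (fun _ => dist_nonneg) (M / 2)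
      convert this using 2
      ext y; simp [hA]
    have h1 : M / 2 + M / 2 ≤ m A + M / 2 := by
      rw [ENNReal.add_halves]
      calc M ≤ m univ := by rw [hmuniv]; exact min_le_left _ _
        _ = m A + m Aᶜ := (measure_add_measure_compl hAm).symm
        _ ≤ _ := by gcongr
    exact (ENNReal.add_le_add_iff_right (ENNReal.div_ne_top hMtop (by simp))).1 h1
  have hpot : ∀ y, κ * m {z | dist x y ≤ dist x z} ≤ rieszPot n α τ y := by
    intro y
    have hS : MeasurableSet {z | dist x y ≤ dist x z} := measurableSet_le measurable_const hdist
    rw [hm, withDensity_apply _ hS, ← lintegral_const_mul _ (measurable_kernel _ x)]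
    exact (setLIntegral_mono' hS fun z hz => kernel_le he hz).trans
      (setLIntegral_le_lintegral _ _)
  have hw : ∀ y ∈ A, κ / 2 * M ≤ min (rieszPot n α τ y) N := by
    intro y hy
    refine le_min ?_ ?_
    · refine le_trans ?_ (hpot y)
      rw [ENNReal.mul_div_right_comm.symm, mul_div_assoc]
      gcongr
      exact hy
    · calc κ / 2 * M ≤ 1 * M := by
            gcongr
            exact ENNReal.half_le_self.trans hκ1
        _ ≤ N := by rw [one_mul]; exact min_le_right _ _
  calc c ^ q * (κ / 2) ^ g * M ^ g = c ^ q * (κ / 2 * M) ^ g := by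
        rw [ENNReal.mul_rpow_of_nonneg _ _ hg.le, mul_assoc]
    _ = (c * (κ / 2 * M) ^ g) ^ q * (κ / 2 * M) := by
        rw [ENNReal.mul_rpow_of_nonneg _ _ hq0.le, ← ENNReal.rpow_mul, mul_assoc]
        congr 1
        conv_lhs => rw [← hgq, ENNReal.rpow_add_of_nonneg _ _ (by positivity) zero_le_one,
          ENNReal.rpow_one]
    _ ≤ (c * (κ / 2 * M) ^ g) ^ q * m A := by
        gcongr
        refine le_trans ?_ hmA
        rw [ENNReal.mul_div_right_comm.symm, mul_div_assoc]
        exact mul_le_of_le_one_left' hκ1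
    _ = ∫⁻ y in A, (c * (κ / 2 * M) ^ g) ^ q * edist x y ^ (2 * α - n) ∂τ := by
        rw [lintegral_const_mul _ (measurable_kernel _ x), hm, withDensity_apply _ hAm]
    _ ≤ ∫⁻ y in A, edist x y ^ (2 * α - n) * u y ^ q ∂τ := by
        apply setLIntegral_mono_ae' hAm
        filter_upwards [hc] with y hy hyA
        rw [mul_comm]
        gcongr
        refine le_trans ?_ hy
        gcongr
        exact hw y hyA
    _ ≤ _ := setLIntegral_le_lintegral _ _

/-- On a set `B` where `u` is bounded below by a positive constant, the optimal constant in the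
truncated lower bound is at least `D ^ g` with `D = (2 ^ (2 α - n) / 2) ^ g`, independently of `B` and of the level `N`. -/
lemma lower_bound_on {n : ℕ} {α q g : ℝ} {b N : ℝ≥0∞} (he : 2 * α - n < 0) (hq0 : 0 < q)
    (hg : 0 < g) (hgq : g * (1 - q) = 1) (σ : Measure (EuclideanSpace ℝ (Fin n)))
    {u : EuclideanSpace ℝ (Fin n) → ℝ≥0∞} (hN : N ≠ ⊤) (hN0 : N ≠ 0) {B : Set _}
    (hB : MeasurableSet B)
    (hsuper : ∀ x, ∫⁻ y, edist x y ^ (2 * α - n) * u y ^ q ∂σ ≤ u x)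
    (hb0 : b ≠ 0) (hb : ∀ x ∈ B, b ≤ u x) (x : EuclideanSpace ℝ (Fin n)) (hx : x ∈ B) :
    (((2 : ℝ≥0∞) ^ (2 * α - n) / 2) ^ g) ^ g *
      (min (rieszPot n α (σ.restrict B) x) N) ^ g ≤ u x := by
  set D : ℝ≥0∞ := ((2 : ℝ≥0∞) ^ (2 * α - n) / 2) ^ g
  set w := fun y => (min (rieszPot n α (σ.restrict B) y) N) ^ g with hw
  set S : Set ℝ≥0∞ := {c | ∀ y ∈ B, c * w y ≤ u y} with hS
  set c := sSup S with hcdef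
  have hcS : c ∈ S := by
    intro y hy
    rw [hcdef, ENNReal.sSup_mul]
    exact iSup₂_le fun d hd => hd y hy
  have hNg0 : N ^ g ≠ 0 := by simp [hN0, hN]
  have hNgt : N ^ g ≠ ⊤ := ENNReal.rpow_ne_top_of_nonneg hg.le hN
  have hc0 : c ≠ 0 := by
    have hmem : b * (N ^ g)⁻¹ ∈ S := by
      intro y hy
      calc b * (N ^ g)⁻¹ * w y ≤ b * (N ^ g)⁻¹ * N ^ g := by
            gcongr
            exact ENNReal.rpow_le_rpow (min_le_right _ _) hg.le
        _ = b := by rw [mul_assoc, ENNReal.inv_mul_cancel hNg0 hNgt, mul_one]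
        _ ≤ u y := hb y hy
    have hpos : b * (N ^ g)⁻¹ ≠ 0 := mul_ne_zero hb0 (ENNReal.inv_ne_zero.2 hNgt)
    exact ((pos_iff_ne_zero.2 hpos).trans_le (le_sSup hmem)).ne'
  have himp : c ^ q * D ∈ S := by
    intro y _
    refine le_trans ?_ (hsuper y)
    refine (improve he hq0 hg (by linarith) (σ.restrict B) u ?_ hN y).trans
      (setLIntegral_le_lintegral _ _)
    exact (ae_restrict_iff' hB).2 (Filter.Eventually.of_forall hcS)
  have hle : c ^ q * D ≤ c := le_sSup himp
  have hDc : D ^ g ≤ c := by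
    by_cases hct : c = ⊤
    · simp [hct]
    have h1 : D ≤ c ^ (1 - q) := by
      rw [ENNReal.rpow_sub _ _ hc0 hct, ENNReal.rpow_one, ENNReal.le_div_iff_mul_le
        (Or.inl (by simp [hc0, hct])) (Or.inl (ENNReal.rpow_ne_top_of_nonneg hq0.le hct)), mul_comm]
      exact hle
    calc D ^ g ≤ (c ^ (1 - q)) ^ g := ENNReal.rpow_le_rpow h1 hg.le
      _ = c := by rw [← ENNReal.rpow_mul, mul_comm, hgq, ENNReal.rpow_one]
  exact (mul_le_mul_left hDc _).trans (hcS x hx)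

/-- The pointwise lower bound, from the truncated one on the ball of radius `k` with level `k`, as
`k` tends to infinity. -/
lemma lower_bound {n : ℕ} {α q g : ℝ} (he : 2 * α - n < 0) (hq0 : 0 < q)
    (hg : 0 < g) (hgq : g * (1 - q) = 1) (σ : Measure (EuclideanSpace ℝ (Fin n)))
    {u : EuclideanSpace ℝ (Fin n) → ℝ≥0∞} (hu : Measurable u)
    (hne : σ.withDensity (fun y => u y ^ q) ≠ 0)
    (hsuper : ∀ x, rieszPot n α (σ.withDensity (fun y => u y ^ q)) x ≤ u x)
    (x : EuclideanSpace ℝ (Fin n)) :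
    (((2 : ℝ≥0∞) ^ (2 * α - n) / 2) ^ g) ^ g * (rieszPot n α σ x) ^ g ≤ u x := by
  set μ := σ.withDensity (fun y => u y ^ q) with hμ
  have hmono : Monotone fun k : ℕ => closedBall (0 : EuclideanSpace ℝ (Fin n)) k :=
    fun i j hij => closedBall_subset_closedBall (by exact_mod_cast hij)
  have hUn : (⋃ k : ℕ, closedBall (0 : EuclideanSpace ℝ (Fin n)) k) = univ :=
    iUnion_closedBall_nat _
  obtain ⟨k₀, hk₀⟩ : ∃ k : ℕ, μ (closedBall 0 k) ≠ 0 := by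
    by_contra! h
    apply hne
    rw [← Measure.measure_univ_eq_zero, ← hUn]
    exact measure_iUnion_null h
  have hlim : Filter.Tendsto (fun k : ℕ => rieszPot n α (σ.restrict (closedBall 0 k)) x)
      Filter.atTop (nhds (rieszPot n α σ x)) := by
    have h1 : rieszPot n α σ x = ⨆ k : ℕ, rieszPot n α (σ.restrict (closedBall 0 k)) x := by
      unfold rieszPot
      rw [← setLIntegral_iUnion_of_directed _ hmono.directed_le, hUn, Measure.restrict_univ]
    rw [h1]
    exact tendsto_atTop_iSup fun i j hij =>
      lintegral_mono' (Measure.restrict_mono (hmono hij) le_rfl) le_rfl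
  have hlim2 := (hlim.min ENNReal.tendsto_nat_nhds_top).ennrpow_const g
  rw [min_eq_left le_top] at hlim2
  have hDt : (((2 : ℝ≥0∞) ^ (2 * α - n) / 2) ^ g) ^ g ≠ ⊤ :=
    ENNReal.rpow_ne_top_of_nonneg hg.le (ENNReal.rpow_ne_top_of_nonneg hg.le
      (ENNReal.div_ne_top (by simp) (by simp)))
  refine le_of_tendsto (ENNReal.Tendsto.const_mul hlim2 (Or.inr hDt)) ?_
  filter_upwards [Filter.eventually_ge_atTop k₀, Filter.eventually_ge_atTop 1,
    Filter.eventually_ge_atTop ⌈‖x‖⌉₊] with k hk hk1 hkx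
  have hxB : x ∈ closedBall (0 : EuclideanSpace ℝ (Fin n)) k := by
    rw [mem_closedBall_zero_iff]
    exact (Nat.le_ceil _).trans (by exact_mod_cast hkx)
  have hμk : μ (closedBall 0 k) ≠ 0 :=
    ((pos_iff_ne_zero.2 hk₀).trans_le (measure_mono (hmono hk))).ne'
  -- On the ball of radius `k` the kernel is at least `(2 * k) ^ (2 * α - n)`.
  refine lower_bound_on (b := (2 * k : ℝ≥0∞) ^ (2 * α - n) * μ (closedBall 0 k)) he hq0 hg hgq σ
    (by simp) (by simp; omega) measurableSet_closedBall ?_ ?_ ?_ x hxB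
  · intro y
    rw [← rieszPot_withDensity α σ (hu.pow_const q)]
    exact hsuper y
  · refine mul_ne_zero ?_ hμk
    rw [Ne, ENNReal.rpow_eq_zero_iff]
    have : (2 * k : ℝ≥0∞) ≠ ⊤ := ENNReal.mul_ne_top (by simp) (by simp)
    rintro (⟨-, h⟩ | ⟨h, -⟩)
    · linarith
    · exact this h
  · intro y hy
    refine le_trans ?_ (hsuper y)
    rw [← setLIntegral_const]
    refine (setLIntegral_mono' measurableSet_closedBall fun z hz => ?_).trans
      (setLIntegral_le_lintegral _ _)
    have hd : edist y z ≤ 2 * k := by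
      have h2 : dist y z ≤ 2 * k := by
        have := dist_triangle_right y z 0
        rw [mem_closedBall] at hy hz
        linarith
      rw [edist_dist]
      refine (ENNReal.ofReal_le_ofReal h2).trans_eq ?_
      rw [ENNReal.ofReal_mul (by norm_num)]
      simp
    exact rpow_le_of_neg he hd

theorem stmt8 {n : ℕ} (q α r : ℝ) (hq0 : 0 < q) (hq : q < 1)
    (hα0 : 0 < α) (hα : α < n / 2) (hr0 : 0 < r)
    (σ : Measure (EuclideanSpace ℝ (Fin n))) [IsLocallyFiniteMeasure σ]
    (u : EuclideanSpace ℝ (Fin n) → ℝ≥0∞) (hu : Measurable u)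
    (hne : σ.withDensity (fun y => u y ^ q) ≠ 0)
    (hsuper : ∀ x, rieszPot n α (σ.withDensity (fun y => u y ^ q)) x ≤ u x)
    (hLr : (∫⁻ x, u x ^ r) < ⊤) :
    (∫⁻ x, (rieszPot n α σ x) ^ (r / (1 - q))) < ⊤ := by
  have he : 2 * α - n < 0 := by linarith
  have h1q : 0 < 1 - q := by linarith
  have hg : 0 < 1 / (1 - q) := by positivity
  set C : ℝ≥0∞ := (((2 : ℝ≥0∞) ^ (2 * α - n) / 2) ^ (1 / (1 - q))) ^ (1 / (1 - q)) with hC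
  have hbase0 : (2 : ℝ≥0∞) ^ (2 * α - n) / 2 ≠ 0 := by
    simp [ENNReal.div_eq_zero_iff]
  have hbaset : (2 : ℝ≥0∞) ^ (2 * α - n) / 2 ≠ ⊤ := ENNReal.div_ne_top (by simp) (by simp)
  have hC0 : C ≠ 0 := by
    rw [hC, ← ENNReal.rpow_mul]
    exact (ENNReal.rpow_pos (pos_iff_ne_zero.2 hbase0) hbaset).ne'
  have hCt : C ≠ ⊤ :=
    ENNReal.rpow_ne_top_of_nonneg hg.le (ENNReal.rpow_ne_top_of_nonneg hg.le hbaset)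
  have hpt : ∀ x, rieszPot n α σ x ^ (r / (1 - q)) ≤ (C⁻¹) ^ r * u x ^ r := by
    intro x
    have h := lower_bound he hq0 hg (by field_simp) σ hu hne hsuper x
    have h2 : rieszPot n α σ x ^ (1 / (1 - q)) ≤ C⁻¹ * u x := by
      rw [mul_comm, ← div_eq_mul_inv, ENNReal.le_div_iff_mul_le (Or.inl hC0) (Or.inl hCt), mul_comm]
      exact h
    rw [← ENNReal.mul_rpow_of_nonneg _ _ hr0.le]
    refine le_trans (le_of_eq ?_) (ENNReal.rpow_le_rpow h2 hr0.le)
    rw [← ENNReal.rpow_mul]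
    congr 1
    ring
  calc _ ≤ ∫⁻ x, (C⁻¹) ^ r * u x ^ r := lintegral_mono hpt
    _ = (C⁻¹) ^ r * ∫⁻ x, u x ^ r := lintegral_const_mul _ (hu.pow_const r)
    _ < ⊤ := ENNReal.mul_lt_top
        (ENNReal.rpow_lt_top_of_nonneg hr0.le (ENNReal.inv_ne_top.2 hC0)) hLr
end

section
/- Let 0<q<1, let Ω ⊆ ℝⁿ be a nonempty open set, and let σ ∈ M⁺(Ω). Let G be a kernel on Ω satisfying the weak maximum principle with some constant h ≥ 1, and suppose there are constants c₀ > 0 and 0<α<n/2 with G(x,y) ≤ c₀|x−y|^{2α−n} for all x,y ∈ Ω. Suppose n/(n−2α) < r < ∞ and ∫_Ω (Gσ)^{r/(1−q)} dx < ∞ (Lebesgue measure). Set s = (r(n−2α)−n(1−q))/(nq) and s' = s/(s−1). Then there exists a constant c > 0, independent of f and σ, such that for all nonnegative f ∈ L^s(Ω, dσ): ‖G(f dσ)‖_{L^r(Ω)} ≤ c ‖Gσ‖_{L^{r/(1−q)}(Ω)}^{1/s'} ‖f‖_{L^s(Ω,dσ)}. -/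
/-!
Write `u = G(f dσ)`, `v = Gσ`, `p = n/(n-2α)`, `R = r/(1-q)` and `e = s - 1 = (r/p - 1)/q`; then
`p < r < R`. The pointwise bound on `G` by a Riesz kernel gives
`∫_F G(x,y) dx ≤ C |F|^(1-1/p)` uniformly in `y` (`lintegral_edist_rpow_neg_le`), hence a weak-type
estimate: if `t ≤ G(g dσ)` on `F`, then `|F| ≤ (C ‖g‖_{L¹(σ)} / t)^p` (`measure_le_of_le_potential`).

The inequality is a real interpolation between this weak-type bound and the trivial bound
`G(g dσ) ≤ ‖g‖_∞ Gσ`. Fix `K > 0`. Where `v ≥ K u^(1-q)`, one has `u^r ≤ K^(-R) v^R`. Where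
`v ≤ K u^(1-q)` and `u > t`, the part of `f` below `t^q/(2K)` produces at most half of `u`, so the
weak-type estimate applied to the rest of `f` controls the level set `{u > t}` (`measure_level_le`).
Integrating over `t` (`lintegral_low_le`) yields
`∫ u^r ≤ K^(-R) ∫ v^R + C' K^(e p) (∫ f^s dσ)^p`,
and the choice of `K` that balances the two terms gives the product of norms with exponents
`1/s'` and `1/s` (`lintegral_potential_rpow_le`).
-/

open MeasureTheory Metric Set ENNReal

/-- The potential `Gσ(x) = ∫_Ω G(x,y) dσ(y)` of a kernel `G` on `Ω`. -/
noncomputable def kernelPot {n : ℕ} (Ω : Set (EuclideanSpace ℝ (Fin n)))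
    (G : EuclideanSpace ℝ (Fin n) → EuclideanSpace ℝ (Fin n) → ℝ≥0∞)
    (μ : Measure (EuclideanSpace ℝ (Fin n))) (x : EuclideanSpace ℝ (Fin n)) : ℝ≥0∞ :=
  ∫⁻ y in Ω, G x y ∂μ

/-- `μ ∈ M⁺(Ω)`: a nonnegative Borel measure living on `Ω`, locally finite on `Ω`. -/
def MemMplus {n : ℕ} (Ω : Set (EuclideanSpace ℝ (Fin n)))
    (μ : Measure (EuclideanSpace ℝ (Fin n))) : Prop :=
  μ Ωᶜ = 0 ∧ ∀ K ⊆ Ω, IsCompact K → μ K < ⊤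

/-- A kernel on `Ω`: a positive lower semicontinuous function `Ω × Ω → (0,∞]`. -/
def IsKernel {n : ℕ} (Ω : Set (EuclideanSpace ℝ (Fin n)))
    (G : EuclideanSpace ℝ (Fin n) → EuclideanSpace ℝ (Fin n) → ℝ≥0∞) : Prop :=
  LowerSemicontinuousOn
      (fun z : EuclideanSpace ℝ (Fin n) × EuclideanSpace ℝ (Fin n) => G z.1 z.2)
      (Ω ×ˢ Ω) ∧
    ∀ x ∈ Ω, ∀ y ∈ Ω, 0 < G x y

/-- The (topological) support of a measure. -/
def msupport {n : ℕ} (μ : Measure (EuclideanSpace ℝ (Fin n))) :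
    Set (EuclideanSpace ℝ (Fin n)) :=
  {x | ∀ U : Set (EuclideanSpace ℝ (Fin n)), IsOpen U → x ∈ U → 0 < μ U}

/-- The weak maximum principle with constant `h` for the kernel `G` on `Ω`. -/
def SatisfiesWMP {n : ℕ} (Ω : Set (EuclideanSpace ℝ (Fin n)))
    (G : EuclideanSpace ℝ (Fin n) → EuclideanSpace ℝ (Fin n) → ℝ≥0∞) (h : ℝ) : Prop :=
  ∀ μ : Measure (EuclideanSpace ℝ (Fin n)), MemMplus Ω μ →
    (∀ x ∈ Ω ∩ msupport μ, kernelPot Ω G μ x ≤ 1) →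
    ∀ x ∈ Ω, kernelPot Ω G μ x ≤ ENNReal.ofReal h

/-- Quasi-symmetry with constant `a ≥ 1`: `a⁻¹ G(y,x) ≤ G(x,y) ≤ a G(y,x)` on `Ω × Ω`. -/
def QuasiSymmetric {n : ℕ} (Ω : Set (EuclideanSpace ℝ (Fin n)))
    (G : EuclideanSpace ℝ (Fin n) → EuclideanSpace ℝ (Fin n) → ℝ≥0∞) (a : ℝ) : Prop :=
  ∀ x ∈ Ω, ∀ y ∈ Ω,
    G y x ≤ ENNReal.ofReal a * G x y ∧ G x y ≤ ENNReal.ofReal a * G y x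

/-! ### Layer-cake formulas for `[0,∞]`-valued functions -/

section abstract_part
variable {X Y : Type*} [MeasurableSpace X] [MeasurableSpace Y]

/-- The layer-cake formula for a `[0,∞]`-valued function, obtained from Tonelli's theorem and
`g x = |{t > 0 : t < g x}|`. -/
theorem lintegral_eq_lintegral_level (μ : Measure X) [SFinite μ] {g : X → ℝ≥0∞}
    (hg : Measurable g) :
    ∫⁻ x, g x ∂μ = ∫⁻ t in Ioi (0 : ℝ), μ {x | ENNReal.ofReal t < g x} := by
  have hS : MeasurableSet {p : X × ℝ | ENNReal.ofReal p.2 < g p.1} :=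
    measurableSet_lt (by fun_prop) (by fun_prop)
  have h1 : ∀ a : ℝ≥0∞, volume ({t : ℝ | ENNReal.ofReal t < a} ∩ Ioi 0) = a := by
    intro a
    by_cases ha : a = ⊤
    · subst ha
      have : ({t : ℝ | ENNReal.ofReal t < ⊤} ∩ Ioi 0) = Ioi 0 := by
        ext t; simp
      rw [this]; simp
    · have : ({t : ℝ | ENNReal.ofReal t < a} ∩ Ioi 0) = Ioo 0 a.toReal := by
        ext t
        simp only [mem_inter_iff, mem_ofPred_eq, mem_Ioi, mem_Ioo]
        constructor
        · rintro ⟨h, h0⟩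
          exact ⟨h0, (ENNReal.ofReal_lt_iff_lt_toReal h0.le ha).1 h⟩
        · rintro ⟨h0, h⟩
          exact ⟨(ENNReal.ofReal_lt_iff_lt_toReal h0.le ha).2 h, h0⟩
      rw [this, Real.volume_Ioo, sub_zero, ENNReal.ofReal_toReal ha]
  calc ∫⁻ x, g x ∂μ
      = ∫⁻ x, (∫⁻ t in Ioi (0 : ℝ),
          ({p : X × ℝ | ENNReal.ofReal p.2 < g p.1}.indicator 1 (x, t))) ∂μ := by
        refine lintegral_congr fun x => ?_
        have hm : MeasurableSet {t : ℝ | ENNReal.ofReal t < g x} :=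
          measurableSet_lt (by fun_prop) (by fun_prop)
        have : ∀ t : ℝ, ({p : X × ℝ | ENNReal.ofReal p.2 < g p.1}.indicator
            (1 : X × ℝ → ℝ≥0∞) (x, t)) = {t : ℝ | ENNReal.ofReal t < g x}.indicator 1 t :=
          fun t => rfl
        simp_rw [this]
        rw [lintegral_indicator_one hm, Measure.restrict_apply hm, h1]
    _ = ∫⁻ t in Ioi (0 : ℝ), ∫⁻ x,
          ({p : X × ℝ | ENNReal.ofReal p.2 < g p.1}.indicator 1 (x, t)) ∂μ := by
        rw [lintegral_lintegral_swap]
        exact (measurable_one.indicator hS).aemeasurable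
    _ = _ := by
        refine lintegral_congr fun t => ?_
        have hm : MeasurableSet {x | ENNReal.ofReal t < g x} :=
          measurableSet_lt (by fun_prop) (by fun_prop)
        rw [← lintegral_indicator_one hm]
        rfl

/-- `∫₀ᵇ t^(δ-1) dt ≤ b^δ / δ` for `b ∈ [0,∞]`; the case `b = ∞` is trivial because the right-hand
side is then infinite. -/
theorem lintegral_rpow_sub_one_level {δ : ℝ} (hδ : 0 < δ) (b : ℝ≥0∞) :
    ∫⁻ t in Ioi (0 : ℝ), {t : ℝ | ENNReal.ofReal t < b}.indicator
      (fun t => ENNReal.ofReal t ^ (δ - 1)) t ≤ ENNReal.ofReal (1 / δ) * b ^ δ := by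
  by_cases hb : b = ⊤
  · subst hb
    rw [ENNReal.top_rpow_of_pos hδ, ENNReal.mul_top (by simpa using hδ)]
    exact le_top
  have hm : MeasurableSet {t : ℝ | ENNReal.ofReal t < b} :=
    measurableSet_lt (by fun_prop) (by fun_prop)
  rw [lintegral_indicator hm, Measure.restrict_restrict hm]
  have : ({t : ℝ | ENNReal.ofReal t < b} ∩ Ioi 0) = Ioo 0 b.toReal := by
    ext t
    simp only [mem_inter_iff, mem_ofPred_eq, mem_Ioi, mem_Ioo]
    constructor
    · rintro ⟨h, h0⟩
      exact ⟨h0, (ENNReal.ofReal_lt_iff_lt_toReal h0.le hb).1 h⟩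
    · rintro ⟨h0, h⟩
      exact ⟨(ENNReal.ofReal_lt_iff_lt_toReal h0.le hb).2 h, h0⟩
  rw [this]
  have hi : IntegrableOn (fun t : ℝ => t ^ (δ - 1)) (Ioc 0 b.toReal) :=
    (intervalIntegral.intervalIntegrable_rpow' (by linarith)).1
  calc ∫⁻ t in Ioo 0 b.toReal, ENNReal.ofReal t ^ (δ - 1)
      = ∫⁻ t in Ioo 0 b.toReal, ENNReal.ofReal (t ^ (δ - 1)) := by
        refine setLIntegral_congr_fun measurableSet_Ioo fun t ht => ?_
        exact ENNReal.ofReal_rpow_of_pos ht.1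
    _ ≤ ∫⁻ t in Ioc 0 b.toReal, ENNReal.ofReal (t ^ (δ - 1)) :=
        lintegral_mono_set Ioo_subset_Ioc_self
    _ = ENNReal.ofReal (∫ t in Ioc 0 b.toReal, t ^ (δ - 1)) := by
        rw [ofReal_integral_eq_lintegral_ofReal hi]
        exact (ae_restrict_iff' measurableSet_Ioc).2
          (Filter.Eventually.of_forall fun t ht => Real.rpow_nonneg ht.1.le _)
    _ = ENNReal.ofReal (1 / δ * b.toReal ^ δ) := by
        rw [← intervalIntegral.integral_of_le ENNReal.toReal_nonneg,
          integral_rpow (Or.inl (by linarith))]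
        simp only [sub_add_cancel, Real.zero_rpow hδ.ne', sub_zero]
        congr 1; ring
    _ = ENNReal.ofReal (1 / δ) * b ^ δ := by
        rw [ENNReal.ofReal_mul (by positivity),
          ← ENNReal.ofReal_rpow_of_nonneg ENNReal.toReal_nonneg hδ.le, ENNReal.ofReal_toReal hb]
    _ ≤ _ := le_rfl

/-! ### Weak-type estimate and its truncated form -/

/-- The weak-type `(1,p)` estimate. If the potential of `f dσ` is at least `t` on `F`, integrate over
`F`, apply Tonelli's theorem and `∫_F k(x,y) dμ(x) ≤ C μ(F)^(1-1/p)`, and divide by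
`t μ(F)^(1-1/p)`. -/
theorem measure_le_of_le_potential {μ : Measure X} [SFinite μ] {σ : Measure Y} [SFinite σ]
    {k : X → Y → ℝ≥0∞} (hk : Measurable (Function.uncurry k)) {C : ℝ≥0∞} {p : ℝ} (hp : 1 < p)
    (hCk : ∀ F : Set X, MeasurableSet F → μ F < ⊤ → ∀ y, ∫⁻ x in F, k x y ∂μ ≤ C * μ F ^ (1 - 1 / p))
    {f : Y → ℝ≥0∞} (hf : Measurable f) {t : ℝ≥0∞} (ht0 : t ≠ 0) (htt : t ≠ ⊤)
    {F : Set X} (hF : MeasurableSet F) (hFt : μ F < ⊤)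
    (hle : ∀ x ∈ F, t ≤ ∫⁻ y, k x y * f y ∂σ) :
    μ F ≤ (C * (∫⁻ y, f y ∂σ) / t) ^ p := by
  by_cases h0 : μ F = 0
  · simp [h0]
  have h1 : t * μ F ≤ C * μ F ^ (1 - 1 / p) * ∫⁻ y, f y ∂σ := by
    calc t * μ F = ∫⁻ x in F, t ∂μ := by simp
      _ ≤ ∫⁻ x in F, ∫⁻ y, k x y * f y ∂σ ∂μ := setLIntegral_mono' hF hle
      _ = ∫⁻ y, ∫⁻ x in F, k x y * f y ∂μ ∂σ := by
          rw [lintegral_lintegral_swap]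
          exact (hk.mul (hf.comp measurable_snd)).aemeasurable
      _ = ∫⁻ y, (∫⁻ x in F, k x y ∂μ) * f y ∂σ := by
          refine lintegral_congr fun y => lintegral_mul_const _ ?_
          exact hk.comp (by fun_prop : Measurable fun x => (x, y))
      _ ≤ ∫⁻ y, (C * μ F ^ (1 - 1 / p)) * f y ∂σ := by
          refine lintegral_mono fun y => ?_
          gcongr
          exact hCk F hF hFt y
      _ = _ := lintegral_const_mul _ hf
  have h2 : μ F = μ F ^ (1 - 1 / p) * μ F ^ (1 / p) := by
    rw [← ENNReal.rpow_add _ _ h0 hFt.ne]; simp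
  have h3 : μ F ^ (1 / p) ≤ C * (∫⁻ y, f y ∂σ) / t := by
    rw [ENNReal.le_div_iff_mul_le (Or.inl ht0) (Or.inl htt)]
    have hne : μ F ^ (1 - 1 / p) ≠ 0 := by
      simp [ENNReal.rpow_eq_zero_iff, h0, hFt.ne]
    have hnt : μ F ^ (1 - 1 / p) ≠ ⊤ := by
      simp [ENNReal.rpow_eq_top_iff, h0, hFt.ne]
    refine (ENNReal.mul_le_mul_iff_right hne hnt).1 ?_
    calc _ = t * (μ F ^ (1 - 1 / p) * μ F ^ (1 / p)) := by ring
      _ ≤ _ := by rw [← h2]; exact h1.trans_eq (by ring)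
  calc μ F = (μ F ^ (1 / p)) ^ p := by
        rw [← ENNReal.rpow_mul, one_div_mul_cancel (by linarith), ENNReal.rpow_one]
    _ ≤ _ := ENNReal.rpow_le_rpow h3 (by linarith)


/-- The finiteness of `a` is what makes the case `u = ∞` work. -/
theorem half_le_of_le_add {u a w : ℝ≥0∞} (h : u ≤ a + w) (ha : a ≤ u / 2) (hat : a ≠ ⊤) :
    u / 2 ≤ w := by
  by_cases hu : u = ⊤
  · subst hu
    have : w = ⊤ := by
      by_contra hw
      exact (ENNReal.add_ne_top.2 ⟨hat, hw⟩) (top_le_iff.1 h)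
    simp [this]
  · rw [← ENNReal.sub_half hu, tsub_le_iff_left]
    exact h.trans (by gcongr)

theorem rpow_sub_one_mul {p : ℝ} (hp : 1 < p) (a : ℝ≥0∞) : a ^ (p - 1) * a = a ^ p := by
  have := ENNReal.rpow_add_of_nonneg (x := a) (p - 1) 1 (by linarith) zero_le_one
  rw [sub_add_cancel, ENNReal.rpow_one] at this
  exact this.symm

/-- With `u` the potential of `f dσ` and `v` that of `σ`, this bounds the level sets of `u` inside
`{v ≤ K u^(1-q), v < ∞}`. There, the part of `f` below the threshold `l = t^q / (2K)` contributes at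
most `l v ≤ t^q u^(1-q) / 2 ≤ u / 2` as soon as `u > t`, so at least half of `u` comes from the part
of `f` above `l`, to which the weak-type estimate applies. -/
theorem measure_level_le {μ : Measure X} [SigmaFinite μ] {σ : Measure Y} [SFinite σ]
    {k : X → Y → ℝ≥0∞} (hk : Measurable (Function.uncurry k)) {C : ℝ≥0∞} {p : ℝ} (hp : 1 < p)
    (hCk : ∀ F : Set X, MeasurableSet F → μ F < ⊤ → ∀ y, ∫⁻ x in F, k x y ∂μ ≤ C * μ F ^ (1 - 1 / p))
    {f : Y → ℝ≥0∞} (hf : Measurable f) {q : ℝ} (hq0 : 0 < q) (hq1 : q < 1)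
    {K : ℝ≥0∞} (hK0 : K ≠ 0) (hKt : K ≠ ⊤) {t : ℝ≥0∞} (ht0 : t ≠ 0) (htt : t ≠ ⊤) :
    μ {x | (∫⁻ y, k x y ∂σ ≤ K * (∫⁻ y, k x y * f y ∂σ) ^ (1 - q) ∧ ∫⁻ y, k x y ∂σ < ⊤) ∧
        t < ∫⁻ y, k x y * f y ∂σ} ≤
      (2 * C * (∫⁻ y, {y | t ^ q / (2 * K) < f y}.indicator f y ∂σ) / t) ^ p := by
  set l := t ^ q / (2 * K) with hl
  have hv : Measurable fun x => ∫⁻ y, k x y ∂σ := hk.lintegral_prod_right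
  have hu : Measurable fun x => ∫⁻ y, k x y * f y ∂σ :=
    Measurable.lintegral_prod_right (hk.mul (hf.comp measurable_snd))
  have hlm : MeasurableSet {y | l < f y} := measurableSet_lt (by fun_prop) hf
  have h2K : 2 * K ≠ 0 := by simp [hK0]
  have h2Kt : 2 * K ≠ ⊤ := ENNReal.mul_ne_top (by simp) hKt
  have hlt : l ≠ ⊤ := ENNReal.div_ne_top (ENNReal.rpow_ne_top_of_nonneg hq0.le htt) h2K
  -- the weak-type estimate needs sets of finite measure, so the level set is exhausted from inside
  refine le_of_forall_lt fun c hc => ?_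
  obtain ⟨F, hF, hFS, hcF, hFt⟩ := Measure.exists_subset_measure_lt_top
    (MeasurableSet.inter (MeasurableSet.inter (measurableSet_le hv ((hu.pow_const _).const_mul K))
      (measurableSet_lt hv measurable_const)) (measurableSet_lt measurable_const hu)) hc
  refine hcF.trans_le ?_
  have key := measure_le_of_le_potential (σ := σ) (f := {y | l < f y}.indicator f) (t := t / 2)
    hk hp hCk (hf.indicator hlm) (by simp [ht0]) (ENNReal.div_ne_top htt (by simp)) hF hFt ?_
  · refine key.trans_eq ?_
    congr 1
    rw [div_eq_mul_inv, div_eq_mul_inv, ENNReal.div_eq_inv_mul, ENNReal.mul_inv (by simp) (by simp),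
      inv_inv]
    ring
  · intro x hx
    obtain ⟨⟨h1, h2⟩, h3⟩ := hFS hx
    simp only [mem_ofPred_eq] at h1 h2 h3
    have hsplit : ∫⁻ y, k x y * f y ∂σ ≤ l * ∫⁻ y, k x y ∂σ +
        ∫⁻ y, k x y * {y | l < f y}.indicator f y ∂σ := by
      have hkx : Measurable (k x) := hk.comp (by fun_prop : Measurable fun y => (x, y))
      rw [← lintegral_const_mul _ hkx, ← lintegral_add_left (hkx.const_mul l)]
      refine lintegral_mono fun y => ?_
      by_cases hy : l < f y
      · simp [hy]
      · simp only [mem_ofPred_eq, hy, not_false_eq_true, indicator_of_notMem, mul_zero, add_zero]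
        rw [mul_comm]
        gcongr
        exact not_lt.1 hy
    have hlv : l * ∫⁻ y, k x y ∂σ ≤ (∫⁻ y, k x y * f y ∂σ) / 2 := by
      set u := ∫⁻ y, k x y * f y ∂σ
      calc l * ∫⁻ y, k x y ∂σ ≤ l * (K * u ^ (1 - q)) := by gcongr
        _ = t ^ q * u ^ (1 - q) / 2 := by
          rw [hl, div_eq_mul_inv, div_eq_mul_inv, ENNReal.mul_inv (by simp) (by simp)]
          calc _ = t ^ q * u ^ (1 - q) * 2⁻¹ * (K⁻¹ * K) := by ring
            _ = _ := by rw [ENNReal.inv_mul_cancel hK0 hKt, mul_one]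
        _ ≤ u ^ q * u ^ (1 - q) / 2 := by gcongr
        _ = u / 2 := by
          rw [← ENNReal.rpow_add_of_nonneg _ _ hq0.le (by linarith)]; simp
    refine le_trans ?_ (half_le_of_le_add hsplit hlv (ENNReal.mul_ne_top hlt h2.ne))
    gcongr

/-- The bound for `∫ u^r` over the region `L = {v ≤ K u^(1-q), v < ∞}`. Writing `A_τ` for the
`σ`-integral of `f` above the threshold attached to the level `u^r = τ`, the level sets satisfy
`μ(L ∩ {u^r > τ}) ≲ A_τ^p τ^(-p/r)`. The factor `A_τ^(p-1)` is estimated by Chebyshev's inequality in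
terms of `∫ f^(e+1) dσ`, and the remaining single factor `A_τ` is integrated in `τ` by Tonelli's
theorem. -/
theorem lintegral_low_le {μ : Measure X} [SigmaFinite μ] {σ : Measure Y} [SFinite σ]
    {k : X → Y → ℝ≥0∞} (hk : Measurable (Function.uncurry k)) {C : ℝ≥0∞} {p : ℝ} (hp : 1 < p)
    (hCk : ∀ F : Set X, MeasurableSet F → μ F < ⊤ → ∀ y, ∫⁻ x in F, k x y ∂μ ≤ C * μ F ^ (1 - 1 / p))
    {f : Y → ℝ≥0∞} (hf : Measurable f) {q : ℝ} (hq0 : 0 < q) (hq1 : q < 1)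
    {K : ℝ≥0∞} (hK0 : K ≠ 0) (hKt : K ≠ ⊤) {r e : ℝ} (hr : p < r) (he : e = (r / p - 1) / q) :
    ∫⁻ x, {x | ∫⁻ y, k x y ∂σ ≤ K * (∫⁻ y, k x y * f y ∂σ) ^ (1 - q) ∧
        ∫⁻ y, k x y ∂σ < ⊤}.indicator (fun x => (∫⁻ y, k x y * f y ∂σ) ^ r) x ∂μ ≤
      (2 * C) ^ p * ENNReal.ofReal (1 / (1 / p - 1 / r)) *
        ((2 * K) ^ e * ∫⁻ y, f y ^ (e + 1) ∂σ) ^ p := by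
  set L := {x | ∫⁻ y, k x y ∂σ ≤ K * (∫⁻ y, k x y * f y ∂σ) ^ (1 - q) ∧ ∫⁻ y, k x y ∂σ < ⊤} with hL
  set δ := 1 / p - 1 / r with hδ
  set N := ∫⁻ y, f y ^ (e + 1) ∂σ with hN
  set M := (2 * K) ^ e * N with hM
  have hp0 : 0 < p := by linarith
  have hr0 : 0 < r := by linarith
  have hδ0 : 0 < δ := sub_pos.2 (one_div_lt_one_div_of_lt hp0 hr)
  have hrp : 1 < r / p := (one_lt_div hp0).2 hr
  have he0 : 0 < e := by rw [he]; exact div_pos (by linarith) hq0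
  have hqe : q * e = r / p - 1 := by rw [he]; field_simp
  have hrδ : r * δ = r / p - 1 := by rw [hδ]; field_simp
  have hv : Measurable fun x => ∫⁻ y, k x y ∂σ := hk.lintegral_prod_right
  have hu : Measurable fun x => ∫⁻ y, k x y * f y ∂σ :=
    Measurable.lintegral_prod_right (hk.mul (hf.comp measurable_snd))
  have hLm : MeasurableSet L := (measurableSet_le hv ((hu.pow_const _).const_mul K)).inter
      (measurableSet_lt hv measurable_const)
  have h2K : 2 * K ≠ 0 := by simp [hK0]
  have h2Kt : 2 * K ≠ ⊤ := ENNReal.mul_ne_top (by simp) hKt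
  have hS : MeasurableSet {z : ℝ × Y | ENNReal.ofReal z.1 < (2 * K * f z.2) ^ (r / q)} :=
    measurableSet_lt (by fun_prop) (by fun_prop)
  have hlev : ∀ τ ∈ Ioi (0 : ℝ), μ {x | ENNReal.ofReal τ <
      L.indicator (fun x => (∫⁻ y, k x y * f y ∂σ) ^ r) x} ≤
      (2 * C) ^ p * M ^ (p - 1) * (∫⁻ y, ENNReal.ofReal τ ^ (δ - 1) *
        {y | ENNReal.ofReal τ < (2 * K * f y) ^ (r / q)}.indicator f y ∂σ) := by
    intro τ hτ
    have hT0 : ENNReal.ofReal τ ≠ 0 := by simpa using hτ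
    have hTt : ENNReal.ofReal τ ≠ ⊤ := ENNReal.ofReal_ne_top
    set T := ENNReal.ofReal τ
    set t := T ^ (1 / r) with ht
    have ht0 : t ≠ 0 := by simp [ht, ENNReal.rpow_eq_zero_iff, hT0, hTt]
    have htt : t ≠ ⊤ := by simp [ht, ENNReal.rpow_eq_top_iff, hT0, hTt]
    set A := ∫⁻ y, {y | t ^ q / (2 * K) < f y}.indicator f y ∂σ with hA
    have hl0 : t ^ q / (2 * K) ≠ 0 := by
      simp [ENNReal.div_eq_zero_iff, ENNReal.rpow_eq_zero_iff, ht0, htt, h2Kt]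
    have hlt : t ^ q / (2 * K) ≠ ⊤ :=
      ENNReal.div_ne_top (ENNReal.rpow_ne_top_of_nonneg hq0.le htt) h2K
    -- Chebyshev: `f ≤ f (f/l)^e` where `f > l`
    have hAM : A ≤ t ^ (-(q * e)) * M := by
      calc A ≤ ∫⁻ y, (t ^ q / (2 * K)) ^ (-e) * f y ^ (e + 1) ∂σ := by
            refine lintegral_mono fun y => ?_
            by_cases hy : t ^ q / (2 * K) < f y
            · simp only [mem_ofPred_eq, hy, indicator_of_mem]
              rw [ENNReal.rpow_add_of_nonneg _ _ he0.le zero_le_one, ENNReal.rpow_one, ← mul_assoc]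
              refine le_mul_of_one_le_left (zero_le) ?_
              calc (1 : ℝ≥0∞) = (t ^ q / (2 * K)) ^ (-e) * (t ^ q / (2 * K)) ^ e := by
                    rw [← ENNReal.rpow_add _ _ hl0 hlt]; simp
                _ ≤ _ := by gcongr
            · simp [hy]
        _ = (t ^ q / (2 * K)) ^ (-e) * N := lintegral_const_mul _ (hf.pow_const _)
        _ = _ := by
            rw [hM, ← mul_assoc]
            congr 1
            rw [ENNReal.rpow_neg, ENNReal.div_rpow_of_nonneg _ _ he0.le, ENNReal.inv_div
              (Or.inl (ENNReal.rpow_ne_top_of_nonneg he0.le h2Kt))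
              (Or.inl (by simp [ENNReal.rpow_eq_zero_iff, hK0, h2Kt])), ENNReal.rpow_neg,
              ENNReal.rpow_mul, ENNReal.div_eq_inv_mul]
    have hAA : A ^ p * t ^ (-p) ≤ M ^ (p - 1) * (T ^ (δ - 1) * A) := by
      calc A ^ p * t ^ (-p) = A ^ (p - 1) * A * t ^ (-p) := by
            rw [rpow_sub_one_mul hp]
        _ ≤ (t ^ (-(q * e)) * M) ^ (p - 1) * A * t ^ (-p) := by gcongr
        _ = M ^ (p - 1) * (t ^ (-(q * e) * (p - 1) + -p) * A) := by
            rw [ENNReal.mul_rpow_of_nonneg _ _ (by linarith), ← ENNReal.rpow_mul,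
              ENNReal.rpow_add _ _ ht0 htt]
            ring
        _ = _ := by
            congr 2
            rw [ht, ← ENNReal.rpow_mul]
            congr 1
            rw [hqe, hδ]
            field_simp
            ring
    calc μ {x | T < L.indicator (fun x => (∫⁻ y, k x y * f y ∂σ) ^ r) x}
        ≤ μ {x | (∫⁻ y, k x y ∂σ ≤ K * (∫⁻ y, k x y * f y ∂σ) ^ (1 - q) ∧
            ∫⁻ y, k x y ∂σ < ⊤) ∧ t < ∫⁻ y, k x y * f y ∂σ} := by
          refine measure_mono fun x hx => ?_
          simp only [mem_ofPred_eq] at hx ⊢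
          by_cases hxL : x ∈ L
          · refine ⟨hxL, ?_⟩
            rw [indicator_of_mem hxL] at hx
            rw [ht, one_div]
            exact (ENNReal.rpow_inv_lt_iff hr0).2 hx
          · rw [indicator_of_notMem hxL] at hx
            exact absurd hx (by simp)
      _ ≤ (2 * C * A / t) ^ p := measure_level_le hk hp hCk hf hq0 hq1 hK0 hKt ht0 htt
      _ = (2 * C) ^ p * (A ^ p * t ^ (-p)) := by
          rw [ENNReal.div_rpow_of_nonneg _ _ hp0.le, ENNReal.mul_rpow_of_nonneg _ _ hp0.le,
            div_eq_mul_inv, ENNReal.rpow_neg, mul_assoc]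
      _ ≤ (2 * C) ^ p * (M ^ (p - 1) * (T ^ (δ - 1) * A)) := by gcongr
      _ ≤ (2 * C) ^ p * (M ^ (p - 1) * (T ^ (δ - 1) *
            ∫⁻ y, {y | T < (2 * K * f y) ^ (r / q)}.indicator f y ∂σ)) := by
          gcongr
          refine lintegral_mono fun y => indicator_le_indicator_of_subset ?_ (fun _ => zero_le) y
          intro y hy
          simp only [mem_ofPred_eq] at hy ⊢
          rw [ENNReal.div_lt_iff (Or.inl h2K) (Or.inl h2Kt), ht, ← ENNReal.rpow_mul,
            show 1 / r * q = (r / q)⁻¹ by field_simp,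
            ENNReal.rpow_inv_lt_iff (by positivity)] at hy
          rwa [mul_comm (2 * K)]
      _ = _ := by
          rw [lintegral_const_mul, mul_assoc]
          exact hf.indicator (measurableSet_lt (by fun_prop) (by fun_prop))
  rw [lintegral_eq_lintegral_level μ ((hu.pow_const r).indicator hLm)]
  calc _ ≤ ∫⁻ τ in Ioi (0 : ℝ), (2 * C) ^ p * M ^ (p - 1) * (∫⁻ y, ENNReal.ofReal τ ^ (δ - 1) *
        {y | ENNReal.ofReal τ < (2 * K * f y) ^ (r / q)}.indicator f y ∂σ) :=
        setLIntegral_mono' measurableSet_Ioi hlev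
    _ = (2 * C) ^ p * M ^ (p - 1) * ∫⁻ τ in Ioi (0 : ℝ), (∫⁻ y, ENNReal.ofReal τ ^ (δ - 1) *
        {y | ENNReal.ofReal τ < (2 * K * f y) ^ (r / q)}.indicator f y ∂σ) := by
        refine lintegral_const_mul _ (Measurable.lintegral_prod_right' (f := fun z : ℝ × Y =>
          ENNReal.ofReal z.1 ^ (δ - 1) *
        {y | ENNReal.ofReal z.1 < (2 * K * f y) ^ (r / q)}.indicator f z.2) ?_)
        exact ((ENNReal.measurable_ofReal.comp measurable_fst).pow_const _).mul
          ((hf.comp measurable_snd).indicator hS)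
    _ = (2 * C) ^ p * M ^ (p - 1) * ∫⁻ y, (∫⁻ τ in Ioi (0 : ℝ), ENNReal.ofReal τ ^ (δ - 1) *
        {y | ENNReal.ofReal τ < (2 * K * f y) ^ (r / q)}.indicator f y) ∂σ := by
        rw [lintegral_lintegral_swap]
        exact (((ENNReal.measurable_ofReal.comp measurable_fst).pow_const _).mul
          ((hf.comp measurable_snd).indicator hS)).aemeasurable
    _ ≤ (2 * C) ^ p * M ^ (p - 1) * ∫⁻ y, ENNReal.ofReal (1 / δ) * (2 * K) ^ e *
          f y ^ (e + 1) ∂σ := by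
        gcongr with y
        calc _ = ∫⁻ τ in Ioi (0 : ℝ), f y * {t : ℝ | ENNReal.ofReal t <
              (2 * K * f y) ^ (r / q)}.indicator (fun t => ENNReal.ofReal t ^ (δ - 1)) τ := by
              refine lintegral_congr fun τ => ?_
              by_cases h : ENNReal.ofReal τ < (2 * K * f y) ^ (r / q)
              · rw [indicator_of_mem (by exact h), indicator_of_mem (by exact h), mul_comm]
              · rw [indicator_of_notMem (by exact h), indicator_of_notMem (by exact h)]
                simp
          _ = f y * ∫⁻ τ in Ioi (0 : ℝ), {t : ℝ | ENNReal.ofReal t <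
              (2 * K * f y) ^ (r / q)}.indicator (fun t => ENNReal.ofReal t ^ (δ - 1)) τ := by
              refine lintegral_const_mul _ (Measurable.indicator (by fun_prop)
                (measurableSet_lt (by fun_prop) (by fun_prop)))
          _ ≤ f y * (ENNReal.ofReal (1 / δ) * ((2 * K * f y) ^ (r / q)) ^ δ) := by
              gcongr
              exact lintegral_rpow_sub_one_level hδ0 _
          _ = _ := by
              have : r / q * δ = e := by rw [he, ← hrδ]; ring
              rw [← ENNReal.rpow_mul, this, ENNReal.mul_rpow_of_nonneg _ _ he0.le,
                ENNReal.rpow_add_of_nonneg _ _ he0.le zero_le_one, ENNReal.rpow_one]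
              ring
    _ = (2 * C) ^ p * M ^ (p - 1) * (ENNReal.ofReal (1 / δ) * M) := by
        rw [lintegral_const_mul _ (hf.pow_const _), hM, hN]
        ring
    _ = (2 * C) ^ p * ENNReal.ofReal (1 / δ) * (M ^ (p - 1) * M) := by ring
    _ = _ := by
        rw [rpow_sub_one_mul hp]
/-! ### The norm inequality for an abstract kernel -/

/-- Outside the region treated in `lintegral_low_le` one has `K u^(1-q) ≤ v`, which is the pointwise
bound `u^r ≤ K^(-R) v^R` with `R = r / (1-q)`. -/
theorem lintegral_potential_rpow_le_add {μ : Measure X} [SigmaFinite μ] {σ : Measure Y} [SFinite σ]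
    {k : X → Y → ℝ≥0∞} (hk : Measurable (Function.uncurry k)) {C : ℝ≥0∞} {p : ℝ} (hp : 1 < p)
    (hCk : ∀ F : Set X, MeasurableSet F → μ F < ⊤ → ∀ y, ∫⁻ x in F, k x y ∂μ ≤ C * μ F ^ (1 - 1 / p))
    {f : Y → ℝ≥0∞} (hf : Measurable f) {q : ℝ} (hq0 : 0 < q) (hq1 : q < 1)
    {K : ℝ≥0∞} (hK0 : K ≠ 0) (hKt : K ≠ ⊤) {r e : ℝ} (hr : p < r) (he : e = (r / p - 1) / q) :
    ∫⁻ x, (∫⁻ y, k x y * f y ∂σ) ^ r ∂μ ≤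
      K ^ (-(r / (1 - q))) * ∫⁻ x, (∫⁻ y, k x y ∂σ) ^ (r / (1 - q)) ∂μ +
      (2 * C) ^ p * ENNReal.ofReal (1 / (1 / p - 1 / r)) *
        ((2 * K) ^ e * ∫⁻ y, f y ^ (e + 1) ∂σ) ^ p := by
  have hv : Measurable fun x => ∫⁻ y, k x y ∂σ := hk.lintegral_prod_right
  have hr0 : 0 < r := by linarith
  have hR : 0 < r / (1 - q) := div_pos hr0 (by linarith)
  refine le_trans ?_ (add_le_add_right (lintegral_low_le hk hp hCk hf hq0 hq1 hK0 hKt hr he) _)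
  rw [← lintegral_const_mul _ (hv.pow_const _), ← lintegral_add_left ((hv.pow_const _).const_mul _)]
  refine lintegral_mono fun x => ?_
  by_cases hx : ∫⁻ y, k x y ∂σ ≤ K * (∫⁻ y, k x y * f y ∂σ) ^ (1 - q) ∧ ∫⁻ y, k x y ∂σ < ⊤
  · rw [indicator_of_mem (by exact hx)]
    exact le_add_self
  · refine le_trans ?_ le_self_add
    have h1 : K * (∫⁻ y, k x y * f y ∂σ) ^ (1 - q) ≤ ∫⁻ y, k x y ∂σ := by
      by_contra! h
      exact hx ⟨h.le, h.trans_le le_top⟩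
    calc (∫⁻ y, k x y * f y ∂σ) ^ r
        = K ^ (-(r / (1 - q))) * (K * (∫⁻ y, k x y * f y ∂σ) ^ (1 - q)) ^ (r / (1 - q)) := by
          rw [ENNReal.mul_rpow_of_nonneg _ _ hR.le, ← mul_assoc, ← ENNReal.rpow_add _ _ hK0 hKt,
            ← ENNReal.rpow_mul, mul_div_cancel₀ _ (by linarith)]
          simp
      _ ≤ _ := by gcongr

/-- Optimization over `K` in `lintegral_potential_rpow_le_add`: with `V = ∫ v^R`,
`N = ∫ f^(e+1) dσ` and `D = R + e p`, the choice `K^D = V / N^p` balances the two terms. The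
degenerate cases `V = 0` and `N = 0` force `u = 0` almost everywhere. -/
theorem lintegral_potential_rpow_le {μ : Measure X} [SigmaFinite μ] {σ : Measure Y} [SFinite σ]
    {k : X → Y → ℝ≥0∞} (hk : Measurable (Function.uncurry k)) {C : ℝ≥0∞} {p : ℝ} (hp : 1 < p)
    (hCk : ∀ F : Set X, MeasurableSet F → μ F < ⊤ → ∀ y, ∫⁻ x in F, k x y ∂μ ≤ C * μ F ^ (1 - 1 / p))
    {f : Y → ℝ≥0∞} (hf : Measurable f) {q : ℝ} (hq0 : 0 < q) (hq1 : q < 1)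
    {r e R D : ℝ} (hr : p < r) (he : e = (r / p - 1) / q) (hR : R = r / (1 - q)) (hD : D = R + e * p)
    (hV : ∫⁻ x, (∫⁻ y, k x y ∂σ) ^ R ∂μ ≠ ⊤) (hN : ∫⁻ y, f y ^ (e + 1) ∂σ ≠ ⊤) :
    ∫⁻ x, (∫⁻ y, k x y * f y ∂σ) ^ r ∂μ ≤
      (1 + (2 * C) ^ p * ENNReal.ofReal (1 / (1 / p - 1 / r)) * 2 ^ (e * p)) *
        ((∫⁻ x, (∫⁻ y, k x y ∂σ) ^ R ∂μ) ^ (e * p / D) *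
          (∫⁻ y, f y ^ (e + 1) ∂σ) ^ (p * R / D)) := by
  have hv : Measurable fun x => ∫⁻ y, k x y ∂σ := hk.lintegral_prod_right
  have hp0 : 0 < p := by linarith
  have hr0 : 0 < r := by linarith
  have hR0 : 0 < R := by rw [hR]; exact div_pos hr0 (by linarith)
  have he0 : 0 < e := by
    rw [he]; exact div_pos (by linarith [(one_lt_div hp0).2 hr]) hq0
  have hD0 : 0 < D := by rw [hD]; positivity
  have key := fun (K : ℝ≥0∞) (hK0 : K ≠ 0) (hKt : K ≠ ⊤) =>
    lintegral_potential_rpow_le_add (σ := σ) hk hp hCk hf hq0 hq1 hK0 hKt hr he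
  rw [← hR] at key
  by_cases hV0 : ∫⁻ x, (∫⁻ y, k x y ∂σ) ^ R ∂μ = 0
  · have h0 : ∫⁻ x, (∫⁻ y, k x y * f y ∂σ) ^ r ∂μ = 0 := by
      rw [lintegral_eq_zero_iff (hv.pow_const _)] at hV0
      refine (lintegral_congr_ae ?_).trans lintegral_zero
      filter_upwards [hV0] with x hx
      have hx' : ∫⁻ y, k x y ∂σ = 0 := by
        simpa [ENNReal.rpow_eq_zero_iff, hR0, hR0.not_gt] using hx
      have hkx : Measurable (k x) := hk.comp (by fun_prop : Measurable fun y => (x, y))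
      rw [lintegral_eq_zero_iff hkx] at hx'
      have : ∫⁻ y, k x y * f y ∂σ = 0 := by
        refine (lintegral_congr_ae ?_).trans lintegral_zero
        filter_upwards [hx'] with y hy
        have hy' : k x y = 0 := hy
        simp [hy']
      simp [this, hr0]
    rw [h0]; exact zero_le
  by_cases hN0 : ∫⁻ y, f y ^ (e + 1) ∂σ = 0
  · have h0 : ∫⁻ x, (∫⁻ y, k x y * f y ∂σ) ^ r ∂μ = 0 := by
      rw [lintegral_eq_zero_iff (hf.pow_const _)] at hN0
      refine (lintegral_congr fun x => ?_).trans lintegral_zero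
      have : ∫⁻ y, k x y * f y ∂σ = 0 := by
        refine (lintegral_congr_ae ?_).trans lintegral_zero
        filter_upwards [hN0] with y hy
        have hy' : f y = 0 := by
          have he1 : 0 < e + 1 := by linarith
          simpa [ENNReal.rpow_eq_zero_iff, he1, he1.not_gt] using hy
        simp [hy']
      simp [this, hr0]
    rw [h0]; exact zero_le
  set V := ∫⁻ x, (∫⁻ y, k x y ∂σ) ^ R ∂μ
  set N := ∫⁻ y, f y ^ (e + 1) ∂σ
  have hNp0 : N ^ p ≠ 0 := by simp [ENNReal.rpow_eq_zero_iff, hN0, hN]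
  have hNpt : N ^ p ≠ ⊤ := ENNReal.rpow_ne_top_of_nonneg hp0.le hN
  have hB0 : V / N ^ p ≠ 0 := by simp [ENNReal.div_eq_zero_iff, hV0, hNpt]
  have hBt : V / N ^ p ≠ ⊤ := ENNReal.div_ne_top hV hNp0
  set K := (V / N ^ p) ^ (1 / D) with hK
  have hK0 : K ≠ 0 := by simp [hK, ENNReal.rpow_eq_zero_iff, hB0, hBt]
  have hKt : K ≠ ⊤ := by simp [hK, ENNReal.rpow_eq_top_iff, hB0, hBt]
  have hKD : K ^ D * N ^ p = V := by
    rw [hK, ← ENNReal.rpow_mul, one_div_mul_cancel hD0.ne', ENNReal.rpow_one,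
      ENNReal.div_mul_cancel hNp0 hNpt]
  have hbal : (K ^ e * N) ^ p = K ^ (-R) * V := by
    rw [← hKD, ← mul_assoc, ← ENNReal.rpow_add _ _ hK0 hKt, ENNReal.mul_rpow_of_nonneg _ _ hp0.le,
      ← ENNReal.rpow_mul, hD]
    ring_nf
  have hval : K ^ (-R) * V = V ^ (e * p / D) * N ^ (p * R / D) := by
    have h1 : K ^ (-R) = V ^ (-(R / D)) * N ^ (p * R / D) := by
      rw [hK, ← ENNReal.rpow_mul, div_eq_mul_inv, ENNReal.mul_rpow_of_ne_top hV (by simp [hNp0]),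
        ← ENNReal.rpow_neg, ← ENNReal.rpow_mul]
      ring_nf
    have h2 : e * p / D = -(R / D) + 1 := by
      field_simp; linarith
    rw [h1, h2, ENNReal.rpow_add _ _ hV0 hV, ENNReal.rpow_one]
    ring
  calc _ ≤ _ := key K hK0 hKt
    _ = (1 + (2 * C) ^ p * ENNReal.ofReal (1 / (1 / p - 1 / r)) * 2 ^ (e * p)) *
          (K ^ (-R) * V) := by
        generalize (2 * C) ^ p * ENNReal.ofReal (1 / (1 / p - 1 / r)) = B
        rw [ENNReal.mul_rpow_of_nonneg _ _ he0.le, mul_assoc (2 ^ e),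
          ENNReal.mul_rpow_of_nonneg _ _ hp0.le, hbal, ENNReal.rpow_mul 2 e p]
        ring
    _ = _ := by rw [hval]

end abstract_part

/-! ### The Riesz kernel and the kernel `G` -/

/-- Among sets of given volume, the Riesz kernel `|x-y|^(-β)` has integral at most a constant times
`|F|^(1-β/n)`: the layer `{x ∈ F : |x-y|^(-β) > τ}` has volume at most `|F|` and at most that of a
ball of radius `τ^(-1/β)`. The first bound is used for `τ ≤ T`, the second for `τ > T`, where
`T = |F|^(-β/n)`. -/
theorem lintegral_edist_rpow_neg_le {n : ℕ} {β : ℝ} (hβ0 : 0 < β) (hβ : β < n) :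
    ∃ C : ℝ≥0∞, C ≠ ⊤ ∧ ∀ F : Set (EuclideanSpace ℝ (Fin n)), MeasurableSet F → volume F < ⊤ →
      ∀ y, ∫⁻ x in F, edist x y ^ (-β) ≤ C * volume F ^ (1 - 1 / (n / β)) := by
  set p : ℝ := n / β with hp
  have hp1 : 1 < p := (one_lt_div hβ0).2 hβ
  set ω := volume (ball (0 : EuclideanSpace ℝ (Fin n)) 1) with hω
  have hωt : ω ≠ ⊤ := measure_ball_lt_top.ne
  refine ⟨1 + ω * ENNReal.ofReal (1 / (p - 1)), by finiteness, fun F hF hFt y => ?_⟩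
  by_cases hF0 : volume F = 0
  · rw [setLIntegral_measure_zero _ _ hF0]; exact zero_le
  obtain ⟨m, hm0, hm⟩ : ∃ m : ℝ, 0 < m ∧ volume F = ENNReal.ofReal m :=
    ⟨(volume F).toReal, ENNReal.toReal_pos hF0 hFt.ne, (ENNReal.ofReal_toReal hFt.ne).symm⟩
  set T : ℝ := m ^ (-(1 / p)) with hT
  have hT0 : 0 < T := Real.rpow_pos_of_pos hm0 _
  have hball : ∀ τ : ℝ, 0 < τ →
      volume {x : EuclideanSpace ℝ (Fin n) | ENNReal.ofReal τ < edist x y ^ (-β)} ≤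
        ω * ENNReal.ofReal (τ ^ (-p)) := by
    intro τ hτ
    have hρ : 0 < τ ^ (-(1 / β)) := Real.rpow_pos_of_pos hτ _
    calc _ ≤ volume (ball y (τ ^ (-(1 / β)))) := by
          refine measure_mono fun x hx => ?_
          simp only [mem_ofPred_eq] at hx
          by_contra hxb
          rw [mem_ball, not_lt] at hxb
          refine absurd hx (not_lt.2 ?_)
          have h1 : ENNReal.ofReal (τ ^ (-(1 / β))) ≤ edist x y := by
            rw [edist_dist]; exact ENNReal.ofReal_le_ofReal hxb
          calc edist x y ^ (-β) ≤ ENNReal.ofReal (τ ^ (-(1 / β))) ^ (-β) := by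
                rw [ENNReal.rpow_neg, ENNReal.rpow_neg, ENNReal.inv_le_inv]
                gcongr
            _ = ENNReal.ofReal τ := by
                rw [ENNReal.ofReal_rpow_of_pos hρ, ← Real.rpow_mul hτ.le]
                congr 1
                rw [show -(1 / β) * -β = 1 by field_simp, Real.rpow_one]
      _ = ENNReal.ofReal (τ ^ (-p)) * ω := by
          rw [Measure.addHaar_ball_of_pos _ _ hρ, finrank_euclideanSpace_fin, ← Real.rpow_natCast,
            ← Real.rpow_mul hτ.le]
          congr 3
          rw [hp]; ring
      _ = _ := mul_comm _ _
  have hmeas : Measurable fun x : EuclideanSpace ℝ (Fin n) => edist x y ^ (-β) := by fun_prop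
  rw [lintegral_eq_lintegral_level _ hmeas, ← Ioc_union_Ioi_eq_Ioi hT0.le]
  refine (lintegral_union_le _ _ _).trans ?_
  rw [add_mul, one_mul]
  have hTm : ENNReal.ofReal T * volume F = volume F ^ (1 - 1 / p) := by
    rw [hm, hT, ← ENNReal.ofReal_mul (by positivity), ENNReal.ofReal_rpow_of_pos hm0]
    congr 1
    rw [sub_eq_neg_add, Real.rpow_add hm0, Real.rpow_one]
  refine add_le_add ?_ ?_
  · calc _ ≤ ∫⁻ τ in Ioc 0 T, volume F := by
          refine lintegral_mono fun τ => ?_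
          exact (measure_mono (subset_univ _)).trans_eq (by simp)
      _ = volume F ^ (1 - 1 / p) := by
          rw [setLIntegral_const, Real.volume_Ioc, sub_zero, mul_comm, hTm]
  · calc _ ≤ ∫⁻ τ in Ioi T, ω * ENNReal.ofReal (τ ^ (-p)) := by
          refine setLIntegral_mono' measurableSet_Ioi fun τ hτ => ?_
          exact (Measure.restrict_apply_le _ _).trans (hball τ (hT0.trans hτ))
      _ = ω * ∫⁻ τ in Ioi T, ENNReal.ofReal (τ ^ (-p)) := lintegral_const_mul' _ _ hωt
      _ = ω * ENNReal.ofReal (∫ τ in Ioi T, τ ^ (-p)) := by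
          rw [ofReal_integral_eq_lintegral_ofReal (integrableOn_Ioi_rpow_of_lt (by linarith) hT0)]
          exact (ae_restrict_iff' measurableSet_Ioi).2 (Filter.Eventually.of_forall
            fun t ht => Real.rpow_nonneg (hT0.trans ht).le _)
      _ = ω * ENNReal.ofReal (1 / (p - 1) * m ^ (1 - 1 / p)) := by
          rw [integral_Ioi_rpow_of_lt (by linarith) hT0, hT, ← Real.rpow_mul hm0.le]
          have h1 : -(1 / p) * (-p + 1) = 1 - 1 / p := by field_simp; ring
          have h2 : p - 1 ≠ 0 := by linarith
          have h3 : -p + 1 ≠ 0 := by linarith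
          rw [h1]
          congr 2
          rw [div_eq_iff h3, neg_eq_iff_eq_neg]
          field_simp
          ring
      _ = _ := by
          rw [ENNReal.ofReal_mul (by have : 0 < p - 1 := by linarith
                                     positivity), hm, ENNReal.ofReal_rpow_of_pos hm0, mul_assoc]

/-- An open set is a countable union of compact sets, and the complement of `Ω` is null. -/
theorem sigmaFinite_of_memMplus {n : ℕ} {Ω : Set (EuclideanSpace ℝ (Fin n))} (hΩ : IsOpen Ω)
    {σ : Measure (EuclideanSpace ℝ (Fin n))} (hσ : MemMplus Ω σ) : SigmaFinite σ := by
  obtain ⟨F, hFc, hFΩ, hFU, -⟩ := hΩ.exists_iUnion_isClosed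
  refine Measure.sigmaFinite_of_countable
    (S := insert Ωᶜ (range fun i : ℕ × ℕ => F i.1 ∩ closedBall 0 i.2))
    ((countable_range _).insert _) ?_ ?_
  · rintro s (rfl | ⟨i, rfl⟩)
    · simp [hσ.1]
    · exact hσ.2 _ (inter_subset_left.trans (hFΩ _))
        ((isCompact_closedBall _ _).inter_left (hFc _))
  · refine eq_univ_of_forall fun x => ?_
    by_cases hx : x ∈ Ω
    · rw [← hFU, mem_iUnion] at hx
      obtain ⟨i, hi⟩ := hx
      obtain ⟨j, hj⟩ := exists_nat_ge ‖x‖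
      exact ⟨_, Or.inr ⟨(i, j), rfl⟩, hi, by simpa using hj⟩
    · exact ⟨_, Or.inl rfl, hx⟩

/-- Extending the kernel by zero off `Ω × Ω` gives a Borel function on the whole product, to which
Tonelli's theorem applies. -/
theorem measurable_indicator_kernel {n : ℕ} {Ω : Set (EuclideanSpace ℝ (Fin n))} (hΩ : IsOpen Ω)
    {G : EuclideanSpace ℝ (Fin n) → EuclideanSpace ℝ (Fin n) → ℝ≥0∞} (hG : IsKernel Ω G) :
    Measurable ((Ω ×ˢ Ω).indicator (Function.uncurry G)) := by
  refine measurable_of_Ioi fun a => ?_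
  obtain ⟨u, hu, hua⟩ := lowerSemicontinuousOn_iff_preimage_Ioi.1 hG.1 a
  have : (Ω ×ˢ Ω).indicator (Function.uncurry G) ⁻¹' Ioi a = Ω ×ˢ Ω ∩ u := by
    rw [← hua]
    ext z
    by_cases hz : z ∈ Ω ×ˢ Ω
    · simp only [mem_preimage, indicator_of_mem hz, mem_inter_iff, hz, true_and]
      rfl
    · simp [mem_preimage, hz]
  rw [this]
  exact ((hΩ.prod hΩ).inter hu).measurableSet

theorem stmt9 {n : ℕ} (q α c₀ h r s s' : ℝ) (hq0 : 0 < q) (hq : q < 1)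
    (Ω : Set (EuclideanSpace ℝ (Fin n))) (hΩo : IsOpen Ω) (hΩne : Ω.Nonempty)
    (G : EuclideanSpace ℝ (Fin n) → EuclideanSpace ℝ (Fin n) → ℝ≥0∞)
    (hker : IsKernel Ω G) (hh : 1 ≤ h) (hwmp : SatisfiesWMP Ω G h)
    (hc₀ : 0 < c₀) (hα0 : 0 < α) (hα : α < n / 2)
    (hdom : ∀ x ∈ Ω, ∀ y ∈ Ω, G x y ≤ ENNReal.ofReal c₀ * (edist x y) ^ (2 * α - n))
    (hr : n / (n - 2 * α) < r)
    (hs : s = (r * (n - 2 * α) - n * (1 - q)) / (n * q)) (hs' : s' = s / (s - 1)) :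
    ∃ c : ℝ, 0 < c ∧
      ∀ σ : Measure (EuclideanSpace ℝ (Fin n)), MemMplus Ω σ →
        (∫⁻ x in Ω, (kernelPot Ω G σ x) ^ (r / (1 - q))) < ⊤ →
        ∀ f : EuclideanSpace ℝ (Fin n) → ℝ≥0∞, Measurable f →
          (∫⁻ x, f x ^ s ∂σ) < ⊤ →
          (∫⁻ x in Ω, (kernelPot Ω G (σ.withDensity f) x) ^ r) ^ (1 / r) ≤
            ENNReal.ofReal c *
              (((∫⁻ x in Ω, (kernelPot Ω G σ x) ^ (r / (1 - q))) ^ ((1 - q) / r)) ^ (1 / s')) *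
              (∫⁻ x, f x ^ s ∂σ) ^ (1 / s) := by
  set p : ℝ := n / (n - 2 * α) with hp
  have hβ0 : (0 : ℝ) < n - 2 * α := by linarith
  have hβn : (n : ℝ) - 2 * α < n := by linarith
  have hn0 : (0 : ℝ) < n := by linarith
  have hp1 : 1 < p := (one_lt_div hβ0).2 hβn
  have hr0 : 0 < r := by linarith
  obtain ⟨A, hAt, hA⟩ := lintegral_edist_rpow_neg_le hβ0 hβn
  set k : EuclideanSpace ℝ (Fin n) → EuclideanSpace ℝ (Fin n) → ℝ≥0∞ :=
    fun x y => (Ω ×ˢ Ω).indicator (Function.uncurry G) (x, y) with hkdef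
  have hk : Measurable (Function.uncurry k) := measurable_indicator_kernel hΩo hker
  have hkG : ∀ x ∈ Ω, ∀ y ∈ Ω, k x y = G x y := fun x hx y hy =>
    indicator_of_mem (show (x, y) ∈ Ω ×ˢ Ω from ⟨hx, hy⟩) _
  have hkle : ∀ x y, k x y ≤ ENNReal.ofReal c₀ * edist x y ^ (-((n : ℝ) - 2 * α)) := by
    intro x y
    by_cases hxy : (x, y) ∈ Ω ×ˢ Ω
    · rw [hkG x hxy.1 y hxy.2, neg_sub]
      exact hdom x hxy.1 y hxy.2
    · rw [hkdef]
      simp only [indicator_of_notMem hxy]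
      exact zero_le
  have hCk : ∀ F : Set (EuclideanSpace ℝ (Fin n)), MeasurableSet F →
      (volume.restrict Ω) F < ⊤ → ∀ y, ∫⁻ x in F, k x y ∂(volume.restrict Ω) ≤
        ENNReal.ofReal c₀ * A * (volume.restrict Ω) F ^ (1 - 1 / p) := by
    intro F hF hFt y
    rw [Measure.restrict_restrict hF]
    rw [Measure.restrict_apply hF] at hFt ⊢
    calc _ ≤ ∫⁻ x in F ∩ Ω, ENNReal.ofReal c₀ * edist x y ^ (-((n : ℝ) - 2 * α)) :=
          lintegral_mono fun x => hkle x y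
      _ = ENNReal.ofReal c₀ * ∫⁻ x in F ∩ Ω, edist x y ^ (-((n : ℝ) - 2 * α)) :=
          lintegral_const_mul' _ _ ENNReal.ofReal_ne_top
      _ ≤ _ := by
          rw [mul_assoc]
          gcongr
          exact hA _ (hF.inter hΩo.measurableSet) hFt y
  have hse : s = (r / p - 1) / q + 1 := by
    rw [hs, hp]; field_simp; ring
  set e : ℝ := (r / p - 1) / q with he
  have he0 : 0 < e := div_pos (by linarith [(one_lt_div (by linarith : (0 : ℝ) < p)).2 hr]) hq0
  set R : ℝ := r / (1 - q) with hR
  have hR0 : 0 < R := div_pos hr0 (by linarith)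
  set D : ℝ := R + e * p with hD
  have hD0 : 0 < D := by positivity
  set B : ℝ≥0∞ := 1 + (2 * (ENNReal.ofReal c₀ * A)) ^ p *
    ENNReal.ofReal (1 / (1 / p - 1 / r)) * 2 ^ (e * p) with hB
  have hBt : B ≠ ⊤ := by
    refine ENNReal.add_ne_top.2 ⟨by simp, ENNReal.mul_ne_top (ENNReal.mul_ne_top
      (ENNReal.rpow_ne_top_of_nonneg (by positivity) ?_) ENNReal.ofReal_ne_top)
      (ENNReal.rpow_ne_top_of_nonneg (by positivity) (by simp))⟩
    finiteness
  have hB0 : B ≠ 0 := by simp [hB]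
  have hBr0 : B ^ (1 / r) ≠ 0 := by simp [ENNReal.rpow_eq_zero_iff, hB0, hBt]
  have hBrt : B ^ (1 / r) ≠ ⊤ := by simp [ENNReal.rpow_eq_top_iff, hB0, hBt]
  have hp0 : 0 < p := by linarith
  have hq1 : 0 < 1 - q := by linarith
  have hs0 : 0 < s := by linarith
  have hDs : D = p * s / (1 - q) := by
    rw [hD, hse, hR, he]; field_simp; ring
  have hs'e : s' = s / e := by
    rw [hs', hse]; simp
  have hexp1 : e * p / D * (1 / r) = (1 - q) / r * (1 / s') := by
    rw [hDs, hs'e]; field_simp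
  have hexp2 : p * R / D * (1 / r) = 1 / s := by
    rw [hDs, hR]; field_simp
  refine ⟨(B ^ (1 / r)).toReal, ENNReal.toReal_pos hBr0 hBrt, fun σ hσ hV f hf hN => ?_⟩
  rw [ENNReal.ofReal_toReal hBrt]
  have := sigmaFinite_of_memMplus hΩo hσ
  have hσΩ : σ.restrict Ω = σ :=
    Measure.restrict_eq_self_of_ae_mem (measure_eq_zero_iff_ae_notMem.1 hσ.1 |>.mono (by simp))
  have hpot : ∀ x ∈ Ω, kernelPot Ω G σ x = ∫⁻ y, k x y ∂σ := by
    intro x hx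
    conv_rhs => rw [← hσΩ]
    exact setLIntegral_congr_fun hΩo.measurableSet fun y hy => (hkG x hx y hy).symm
  have hpotf : ∀ x ∈ Ω, kernelPot Ω G (σ.withDensity f) x = ∫⁻ y, k x y * f y ∂σ := by
    intro x hx
    have hkx : Measurable (k x) := hk.comp (by fun_prop : Measurable fun y => (x, y))
    calc kernelPot Ω G (σ.withDensity f) x = ∫⁻ y in Ω, k x y ∂(σ.withDensity f) :=
          setLIntegral_congr_fun hΩo.measurableSet fun y hy => (hkG x hx y hy).symm
      _ = ∫⁻ y, k x y ∂(σ.withDensity f) := by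
          rw [restrict_withDensity hΩo.measurableSet, hσΩ]
      _ = ∫⁻ y, k x y * f y ∂σ := by
          rw [lintegral_withDensity_eq_lintegral_mul _ hf hkx]
          exact lintegral_congr fun y => mul_comm _ _
  have hVeq : ∫⁻ x in Ω, kernelPot Ω G σ x ^ R = ∫⁻ x in Ω, (∫⁻ y, k x y ∂σ) ^ R :=
    setLIntegral_congr_fun hΩo.measurableSet fun x hx => by simp only [hpot x hx]
  have hXeq : ∫⁻ x in Ω, kernelPot Ω G (σ.withDensity f) x ^ r =
      ∫⁻ x in Ω, (∫⁻ y, k x y * f y ∂σ) ^ r :=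
    setLIntegral_congr_fun hΩo.measurableSet fun x hx => by simp only [hpotf x hx]
  rw [hVeq] at hV ⊢
  rw [hXeq]
  have key := lintegral_potential_rpow_le (σ := σ) hk hp1 hCk hf hq0 hq hr he hR hD hV.ne
    (by rw [← hse]; exact hN.ne)
  rw [← hse] at key
  calc _ ≤ (B * ((∫⁻ x in Ω, (∫⁻ y, k x y ∂σ) ^ R) ^ (e * p / D) *
          (∫⁻ y, f y ^ s ∂σ) ^ (p * R / D))) ^ (1 / r) :=
        ENNReal.rpow_le_rpow key (by positivity)
    _ = _ := by
        rw [ENNReal.mul_rpow_of_nonneg _ _ (by positivity),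
          ENNReal.mul_rpow_of_nonneg _ _ (by positivity), ← ENNReal.rpow_mul, ← ENNReal.rpow_mul,
          ← ENNReal.rpow_mul, hexp1, hexp2, mul_assoc]
end

section
/- Let 0<q<1, let Ω ⊆ ℝⁿ be a nonempty open set, and let σ ∈ M⁺(Ω) with σ not the zero measure. Let G be a kernel on Ω satisfying the weak maximum principle with some constant h ≥ 1, and suppose there are constants c₀ > 0 and 0<α<n/2 with G(x,y) ≤ c₀|x−y|^{2α−n} for all x,y ∈ Ω. Suppose n/(n−2α) < r < ∞ and set γ = (r(n−2α)−n)/n. If ∫_Ω (Gσ)^{(γ+q)/(1−q)} dσ < ∞, then ∫_Ω (Gσ)^{r/(1−q)} dx < ∞ (Lebesgue measure). -/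
/-!
The level sets of `Gσ` obey a weak-type estimate that can be integrated. For `t > 0` split `σ` into
its parts on `{Gσ ≤ t / 2h}` and on `{Gσ > t / 2h}`. The former set is relatively closed in `Ω`,
since `Gσ` is lower semicontinuous, so the weak maximum principle bounds the potential of the first
part by `t / 2` on all of `Ω` (`kernelPot_restrict_le`). Hence `Gσ > t` forces the potential of the
second part to exceed `t / 2`. With `β = n - 2α`, that potential is dominated by a Riesz potential,
and the weak-type bound `riesz_weak_type` gives
`|{Gσ > t}| ≤ C (t⁻¹ σ{Gσ > t / 2h}) ^ (n / β)`.

Put `m = (γ + q) / (1 - q)`. Chebyshev's inequality for `∫ (Gσ)^m dσ < ∞` bounds `n / β - 1` of the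
`n / β` factors `σ{Gσ > t / 2h}`. The powers of `t` match, because `r / (1 - q) = (m + 1) n / β`,
and integrating `t ^ (r / (1 - q) - 1) |{Gσ > t}|` over `t > 0` gives back a multiple of
`∫ (Gσ)^m dσ` (`lintegral_rpow_lt_top_of_level_sets`).
-/

open MeasureTheory Metric Set ENNReal

/-! ### Weak-type estimate for Riesz potentials -/

/-- In dimension `n`, the kernel `|x - y|^{-β}` with `β < n` is locally integrable, and its
integral over the ball of radius `ρ` about `y` is at most a constant times `ρ ^ (n - β)`. -/
lemma lintegral_ball_edist_rpow_le {n : ℕ} {β : ℝ} (hn : 1 ≤ n) (hβn : β < n) :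
    ∃ K : ℝ≥0∞, K ≠ ⊤ ∧ ∀ (y : EuclideanSpace ℝ (Fin n)) (ρ : ℝ), 0 < ρ →
      ∫⁻ x, (ball y ρ).indicator (fun x => edist x y ^ (-β)) x
        ≤ ENNReal.ofReal (ρ ^ (n - β)) * K := by
  have hfr : Module.finrank ℝ (EuclideanSpace ℝ (Fin n)) = n := by simp
  have : Nontrivial (EuclideanSpace ℝ (Fin n)) := by
    apply Module.nontrivial_of_finrank_pos (R := ℝ); omega
  let F : ℝ → EuclideanSpace ℝ (Fin n) → ℝ≥0∞ :=
    fun ρ => (ball 0 ρ).indicator (fun x => ‖x‖ₑ ^ (-β))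
  have hFm : ∀ ρ, Measurable (F ρ) := fun ρ =>
    (by fun_prop : Measurable fun x : EuclideanSpace ℝ (Fin n) => ‖x‖ₑ ^ (-β)).indicator
      measurableSet_ball
  refine ⟨∫⁻ x, F 1 x, ?_, fun y ρ hρ => ?_⟩
  · have hint : IntegrableOn (fun x : EuclideanSpace ℝ (Fin n) => ‖x‖ ^ (-β)) (ball 0 1) := by
      refine integrableOn_ball_of_norm_le_rpow (C := 1) (α := β) (by omega) (by rwa [hfr]) ?_ ?_
      · refine Filter.Eventually.of_forall fun x => ?_
        rw [one_mul, Real.norm_of_nonneg (by positivity)]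
      · exact (by fun_prop : Measurable fun x : EuclideanSpace ℝ (Fin n) =>
          ‖x‖ ^ (-β)).aestronglyMeasurable
    have h2 := hint.2
    rw [HasFiniteIntegral] at h2
    refine ne_of_lt (lt_of_eq_of_lt ?_ h2)
    rw [lintegral_indicator measurableSet_ball]
    refine lintegral_congr_ae (ae_restrict_of_ae ?_)
    -- The extended power is `⊤` at the origin while the real one is not; this is a null set.
    filter_upwards [Measure.ae_ne volume (0 : EuclideanSpace ℝ (Fin n))] with x hx
    rw [Real.enorm_of_nonneg (by positivity),
      ← ENNReal.ofReal_rpow_of_pos (norm_pos_iff.2 hx), ofReal_norm]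
  · have h1 : ∫⁻ x, (ball y ρ).indicator (fun x => edist x y ^ (-β)) x = ∫⁻ x, F ρ x := by
      rw [← lintegral_sub_right_eq_self (F ρ) y]
      refine lintegral_congr fun x => ?_
      simp only [F, indicator, mem_ball, dist_eq_norm, sub_zero, edist_eq_enorm_sub]
    have h2 : ∫⁻ x, F ρ x ∂(Measure.map (ρ • ·) volume)
        = ENNReal.ofReal (ρ ^ (-β)) * ∫⁻ x, F 1 x := by
      rw [lintegral_map (hFm ρ) (by fun_prop), ← lintegral_const_mul _ (hFm 1)]
      refine lintegral_congr fun x => ?_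
      by_cases hx : ‖x‖ < 1
      · have hx' : ‖ρ • x‖ < ρ := by
          rw [norm_smul, Real.norm_of_nonneg hρ.le]; nlinarith
        simp only [F, indicator, mem_ball, dist_zero_right, hx, hx', if_true]
        rw [enorm_smul, ENNReal.mul_rpow_of_ne_top (by simp) (by simp),
          Real.enorm_of_nonneg hρ.le, ENNReal.ofReal_rpow_of_pos hρ]
      · have hx' : ¬ ‖ρ • x‖ < ρ := by
          rw [norm_smul, Real.norm_of_nonneg hρ.le]; nlinarith
        simp only [F, indicator, mem_ball, dist_zero_right, hx, hx', if_false, mul_zero]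
    rw [Measure.map_addHaar_smul _ hρ.ne', lintegral_smul_measure, hfr,
      abs_of_pos (by positivity), smul_eq_mul] at h2
    rw [h1, Real.rpow_sub hρ, div_eq_mul_inv, ← Real.rpow_neg hρ.le,
      ENNReal.ofReal_mul (by positivity), mul_assoc, ← h2, ← mul_assoc,
      ← ENNReal.ofReal_mul (by positivity), Real.rpow_natCast,
      mul_inv_cancel₀ (by positivity), ENNReal.ofReal_one, one_mul]

/-- The weak-type `(1, n / β)` estimate for Riesz potentials: the part of the kernel away from the
diagonal is bounded by `t / 2` for a suitable cutoff radius, and Markov's inequality handles the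
integrable part near the diagonal. -/
lemma riesz_weak_type {n : ℕ} {β : ℝ} (hn : 1 ≤ n) (hβ : 0 < β) (hβn : β < n) {c : ℝ}
    (hc : 0 < c) :
    ∃ K : ℝ≥0∞, K ≠ ⊤ ∧ ∀ (ν : Measure (EuclideanSpace ℝ (Fin n))) (t : ℝ), 0 < t →
      ν univ ≠ ⊤ →
      volume {x | ENNReal.ofReal t < ENNReal.ofReal c * ∫⁻ y, edist x y ^ (-β) ∂ν}
        ≤ K * (ENNReal.ofReal (2 * c / t) * ν univ) ^ (n / β) := by
  obtain ⟨K, hK, hKb⟩ := lintegral_ball_edist_rpow_le hn hβn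
  refine ⟨K, hK, fun ν t ht hν => ?_⟩
  rcases eq_or_ne (ν univ) 0 with h0 | h0
  · have : ν = 0 := Measure.measure_univ_eq_zero.1 h0
    subst this
    simp
  have : IsFiniteMeasure ν := ⟨hν.lt_top⟩
  set m : ℝ := (ν univ).toReal with hm
  have hmν : ν univ = ENNReal.ofReal m := (ENNReal.ofReal_toReal hν).symm
  have hmpos : 0 < m := ENNReal.toReal_pos h0 hν
  set a : ℝ := 2 * c / t * m with ha
  have hapos : 0 < a := by positivity
  set ρ : ℝ := a ^ (1 / β) with hρ
  have hρpos : 0 < ρ := by positivity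
  have hρβ : ρ ^ (-β) = a⁻¹ := by
    rw [hρ, ← Real.rpow_mul hapos.le, ← Real.rpow_neg_one]
    congr 1; field_simp
  let J : EuclideanSpace ℝ (Fin n) → EuclideanSpace ℝ (Fin n) → ℝ≥0∞ :=
    fun x y => (ball y ρ).indicator (fun x => edist x y ^ (-β)) x
  have hJm : Measurable (Function.uncurry J) := by
    have h1 : MeasurableSet {z : EuclideanSpace ℝ (Fin n) × EuclideanSpace ℝ (Fin n) |
        dist z.1 z.2 < ρ} := measurableSet_lt (by fun_prop) measurable_const
    have h2 : Measurable fun z : EuclideanSpace ℝ (Fin n) × EuclideanSpace ℝ (Fin n) =>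
        edist z.1 z.2 ^ (-β) := by fun_prop
    exact h2.indicator h1
  have hsub : {x | ENNReal.ofReal t < ENNReal.ofReal c * ∫⁻ y, edist x y ^ (-β) ∂ν}
      ⊆ {x | ENNReal.ofReal (t / (2 * c)) ≤ ∫⁻ y, J x y ∂ν} := by
    intro x hx
    by_contra hcon
    simp only [mem_ofPred_eq, not_le] at hx hcon
    refine lt_irrefl _ (hx.trans_le ?_)
    have hpt : ∀ y, edist x y ^ (-β) ≤ J x y + ENNReal.ofReal (a⁻¹) := by
      intro y
      by_cases hxy : dist x y < ρ
      · simp only [J, indicator, mem_ball, hxy, if_true]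
        exact le_self_add
      · simp only [J, indicator, mem_ball, hxy, if_false, zero_add]
        rw [← hρβ, ← ENNReal.ofReal_rpow_of_pos hρpos]
        rw [ENNReal.rpow_neg, ENNReal.rpow_neg, edist_dist]
        exact ENNReal.inv_le_inv.2
          (ENNReal.rpow_le_rpow (ENNReal.ofReal_le_ofReal (not_lt.1 hxy)) hβ.le)
    calc ENNReal.ofReal c * ∫⁻ y, edist x y ^ (-β) ∂ν
        ≤ ENNReal.ofReal c * ∫⁻ y, (J x y + ENNReal.ofReal (a⁻¹)) ∂ν := by
          gcongr with y; exact hpt y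
      _ = ENNReal.ofReal c * ((∫⁻ y, J x y ∂ν) + ENNReal.ofReal (a⁻¹) * ENNReal.ofReal m) := by
          rw [lintegral_add_right _ measurable_const, lintegral_const, hmν]
      _ ≤ ENNReal.ofReal c * (ENNReal.ofReal (t / (2 * c))
            + ENNReal.ofReal (a⁻¹) * ENNReal.ofReal m) := by gcongr
      _ = ENNReal.ofReal t := by
          rw [← ENNReal.ofReal_mul (by positivity),
            ← ENNReal.ofReal_add (by positivity) (by positivity),
            ← ENNReal.ofReal_mul (by positivity)]
          congr 1
          rw [ha]; field_simp; ring
  have hmarkov := mul_meas_ge_le_lintegral (μ := volume)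
    (hJm.lintegral_prod_right' (ν := ν)) (ENNReal.ofReal (t / (2 * c)))
  have hswap : ∫⁻ x, ∫⁻ y, J x y ∂ν ≤ ENNReal.ofReal (ρ ^ (n - β)) * K * ENNReal.ofReal m := by
    rw [lintegral_lintegral_swap hJm.aemeasurable, ← hmν, ← lintegral_const]
    exact lintegral_mono fun y => hKb y ρ hρpos
  have hmain := hmarkov.trans hswap
  have hone : ENNReal.ofReal (2 * c / t) * ENNReal.ofReal (t / (2 * c)) = 1 := by
    rw [← ENNReal.ofReal_mul (by positivity), ← ENNReal.ofReal_one]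
    congr 1; field_simp
  calc _ ≤ volume {x | ENNReal.ofReal (t / (2 * c)) ≤ ∫⁻ y, J x y ∂ν} := measure_mono hsub
    _ = ENNReal.ofReal (2 * c / t) * (ENNReal.ofReal (t / (2 * c)) *
          volume {x | ENNReal.ofReal (t / (2 * c)) ≤ ∫⁻ y, J x y ∂ν}) := by
        rw [← mul_assoc, hone, one_mul]
    _ ≤ ENNReal.ofReal (2 * c / t) *
          (ENNReal.ofReal (ρ ^ (n - β)) * K * ENNReal.ofReal m) := mul_le_mul_right hmain _
    _ = K * ENNReal.ofReal (2 * c / t * m * ρ ^ (n - β)) := by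
        rw [ENNReal.ofReal_mul (by positivity), ENNReal.ofReal_mul (by positivity)]; ring
    _ = K * (ENNReal.ofReal (2 * c / t) * ν univ) ^ (n / β) := by
        rw [hmν, ← ENNReal.ofReal_mul (by positivity), ← ha, ENNReal.ofReal_rpow_of_pos hapos]
        congr 2
        rw [hρ, ← Real.rpow_mul hapos.le]
        nth_rewrite 1 [← Real.rpow_one a]
        rw [← Real.rpow_add hapos]
        congr 1; field_simp; ring

/-! ### From level sets to a strong estimate -/

lemma meas_lt_le_rpow_mul_lintegral {X : Type*} [MeasurableSpace X] {σ : Measure X}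
    {g : X → ℝ≥0∞} (hg : Measurable g) {m : ℝ} (hm : 0 < m) {t : ℝ} (ht : 0 < t) :
    σ {x | ENNReal.ofReal t < g x} ≤ ENNReal.ofReal (t ^ (-m)) * ∫⁻ x, g x ^ m ∂σ := by
  have h1 := mul_meas_ge_le_lintegral (μ := σ) (hg.pow_const m) (ENNReal.ofReal (t ^ m))
  have hone : ENNReal.ofReal (t ^ (-m)) * ENNReal.ofReal (t ^ m) = 1 := by
    rw [← ENNReal.ofReal_mul (by positivity), ← Real.rpow_add ht]; simp
  calc σ {x | ENNReal.ofReal t < g x}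
      ≤ σ {x | ENNReal.ofReal (t ^ m) ≤ g x ^ m} := by
        refine measure_mono fun x hx => ?_
        simp only [mem_ofPred_eq] at hx ⊢
        rw [← ENNReal.ofReal_rpow_of_pos ht]
        exact ENNReal.rpow_le_rpow hx.le hm.le
    _ = ENNReal.ofReal (t ^ (-m)) * (ENNReal.ofReal (t ^ m) *
          σ {x | ENNReal.ofReal (t ^ m) ≤ g x ^ m}) := by rw [← mul_assoc, hone, one_mul]
    _ ≤ _ := by gcongr

/-- A level-set estimate of weak type `(1, κ)`, `κ ≥ 1`, in which the mass on the right is that of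
the matching level set, self-improves to a strong estimate. Of the `κ` factors
`σ {g > t}`, Chebyshev's inequality bounds `κ - 1`, and the layer-cake formula uses the last. -/
lemma lintegral_rpow_lt_top_of_level_sets {X : Type*} [MeasurableSpace X] {μ σ : Measure X}
    {f g : X → ℝ≥0∞} (hf : Measurable f) (hg : Measurable g) {m κ p B : ℝ} {A : ℝ≥0∞}
    (hm : 0 < m) (hκ : 1 ≤ κ) (hp : p = (m + 1) * κ) (hB : 0 < B) (hA : A ≠ ⊤)
    (hgm : ∫⁻ x, g x ^ m ∂σ < ⊤)
    (hlev : ∀ t : ℝ, 0 < t → μ {x | ENNReal.ofReal t < f x}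
      ≤ A * (ENNReal.ofReal (B / t) * σ {x | ENNReal.ofReal t < g x}) ^ κ) :
    ∫⁻ x, f x ^ p ∂μ < ⊤ := by
  have hp0 : 0 < p := by rw [hp]; positivity
  set M := ∫⁻ x, g x ^ m ∂σ with hM
  set A' : ℝ≥0∞ := A * ENNReal.ofReal (B ^ κ) * M ^ (κ - 1) with hA'
  have hA't : A' ≠ ⊤ := by
    refine ENNReal.mul_ne_top (ENNReal.mul_ne_top hA ENNReal.ofReal_ne_top) ?_
    exact ENNReal.rpow_ne_top_of_nonneg (by linarith) hgm.ne
  have hkey : ∀ t : ℝ, 0 < t → μ {x | ENNReal.ofReal t < f x}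
      ≤ A' * ENNReal.ofReal (t ^ (m - p)) * σ {x | ENNReal.ofReal t < g x} := by
    intro t ht
    set S := σ {x | ENNReal.ofReal t < g x} with hS
    have hch : S ≤ ENNReal.ofReal (t ^ (-m)) * M := meas_lt_le_rpow_mul_lintegral hg hm ht
    have hSt : S ≠ ⊤ := (hch.trans_lt (ENNReal.mul_lt_top ENNReal.ofReal_lt_top hgm)).ne
    have hSκ : S ^ κ ≤ ENNReal.ofReal (t ^ (-m * (κ - 1))) * M ^ (κ - 1) * S := by
      have : S ^ κ = S ^ (κ - 1) * S := by
        conv_lhs => rw [show κ = (κ - 1) + 1 by ring,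
          ENNReal.rpow_add_of_nonneg _ _ (by linarith) zero_le_one, ENNReal.rpow_one]
      rw [this]
      gcongr
      calc S ^ (κ - 1) ≤ (ENNReal.ofReal (t ^ (-m)) * M) ^ (κ - 1) :=
            ENNReal.rpow_le_rpow hch (by linarith)
        _ = _ := by
            rw [ENNReal.mul_rpow_of_nonneg _ _ (by linarith),
              ENNReal.ofReal_rpow_of_pos (by positivity), ← Real.rpow_mul ht.le]
    calc μ {x | ENNReal.ofReal t < f x} ≤ A * (ENNReal.ofReal (B / t) * S) ^ κ := hlev t ht
      _ = A * (ENNReal.ofReal (B ^ κ) * ENNReal.ofReal (t ^ (-κ)) * S ^ κ) := by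
          rw [ENNReal.mul_rpow_of_nonneg _ _ (by linarith),
            ENNReal.ofReal_rpow_of_pos (by positivity), Real.div_rpow hB.le ht.le,
            div_eq_mul_inv, ← Real.rpow_neg ht.le, ENNReal.ofReal_mul (by positivity)]
      _ ≤ A * (ENNReal.ofReal (B ^ κ) * ENNReal.ofReal (t ^ (-κ)) *
            (ENNReal.ofReal (t ^ (-m * (κ - 1))) * M ^ (κ - 1) * S)) := by gcongr
      _ = A' * (ENNReal.ofReal (t ^ (-κ)) * ENNReal.ofReal (t ^ (-m * (κ - 1)))) * S := by
          rw [hA']; ring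
      _ = A' * ENNReal.ofReal (t ^ (m - p)) * S := by
          rw [← ENNReal.ofReal_mul (by positivity), ← Real.rpow_add ht]
          congr 4
          rw [hp]; ring
  -- Letting `t → ∞` shows that `f` is finite almost everywhere.
  have hfin : ∀ᵐ x ∂μ, f x < ⊤ := by
    have hle : ∀ t : ℝ, 0 < t → μ {x | ¬ f x < ⊤} ≤ A' * M * ENNReal.ofReal (t ^ (-p)) := by
      intro t ht
      calc μ {x | ¬ f x < ⊤} ≤ μ {x | ENNReal.ofReal t < f x} := by
            refine measure_mono fun x hx => ?_
            simp only [mem_ofPred_eq, not_lt, top_le_iff] at hx ⊢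
            rw [hx]; exact ENNReal.ofReal_lt_top
        _ ≤ _ := hkey t ht
        _ ≤ A' * ENNReal.ofReal (t ^ (m - p)) * (ENNReal.ofReal (t ^ (-m)) * M) := by
            gcongr; exact meas_lt_le_rpow_mul_lintegral hg hm ht
        _ = A' * M * (ENNReal.ofReal (t ^ (m - p)) * ENNReal.ofReal (t ^ (-m))) := by ring
        _ = _ := by
            rw [← ENNReal.ofReal_mul (by positivity), ← Real.rpow_add ht]
            congr 3; ring
    have hlim : Filter.Tendsto (fun t : ℝ => A' * M * ENNReal.ofReal (t ^ (-p)))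
        Filter.atTop (nhds 0) := by
      have h1 := ENNReal.tendsto_ofReal (tendsto_rpow_neg_atTop hp0)
      rw [ENNReal.ofReal_zero] at h1
      simpa using ENNReal.Tendsto.const_mul h1 (Or.inr (ENNReal.mul_ne_top hA't hgm.ne))
    rw [ae_iff]
    refine le_antisymm (ge_of_tendsto hlim ?_) zero_le
    filter_upwards [Filter.eventually_gt_atTop 0] with t ht using hle t ht
  have hgfin : ∀ᵐ x ∂σ, g x < ⊤ := by
    filter_upwards [ae_lt_top (hg.pow_const m) hgm.ne] with x hx
    exact (ENNReal.rpow_lt_top_iff_of_pos hm).1 hx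
  have hfp : ∫⁻ x, f x ^ p ∂μ = ∫⁻ x, ENNReal.ofReal ((f x).toReal ^ p) ∂μ := by
    refine lintegral_congr_ae ?_
    filter_upwards [hfin] with x hx
    rw [← ENNReal.ofReal_rpow_of_nonneg ENNReal.toReal_nonneg hp0.le,
      ENNReal.ofReal_toReal hx.ne]
  have hgp : M = ∫⁻ x, ENNReal.ofReal ((g x).toReal ^ m) ∂σ := by
    refine lintegral_congr_ae ?_
    filter_upwards [hgfin] with x hx
    rw [← ENNReal.ofReal_rpow_of_nonneg ENNReal.toReal_nonneg hm.le,
      ENNReal.ofReal_toReal hx.ne]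
  rw [lintegral_rpow_eq_lintegral_meas_lt_mul σ
    (Filter.Eventually.of_forall fun x => ENNReal.toReal_nonneg)
    hg.ennreal_toReal.aemeasurable hm] at hgp
  have hint : ∫⁻ t in Ioi (0 : ℝ), σ {x | t < (g x).toReal} * ENNReal.ofReal (t ^ (m - 1)) < ⊤ := by
    by_contra hcon
    rw [not_lt, top_le_iff] at hcon
    rw [hcon, ENNReal.mul_top (by simpa using hm)] at hgp
    exact hgm.ne hgp
  rw [hfp, lintegral_rpow_eq_lintegral_meas_lt_mul μ
    (Filter.Eventually.of_forall fun x => ENNReal.toReal_nonneg)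
    hf.ennreal_toReal.aemeasurable hp0]
  refine ENNReal.mul_lt_top ENNReal.ofReal_lt_top ?_
  refine lt_of_le_of_lt (b := ∫⁻ t in Ioi (0 : ℝ),
    A' * (σ {x | t < (g x).toReal} * ENNReal.ofReal (t ^ (m - 1)))) ?_ ?_
  · refine setLIntegral_mono' measurableSet_Ioi fun t (ht : 0 < t) => ?_
    have hg' : σ {x | ENNReal.ofReal t < g x} ≤ σ {x | t < (g x).toReal} := by
      refine measure_mono_ae ?_
      filter_upwards [hgfin] with x hx h
      exact (ENNReal.ofReal_lt_iff_lt_toReal ht.le hx.ne).1 h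
    calc μ {x | t < (f x).toReal} * ENNReal.ofReal (t ^ (p - 1))
        ≤ μ {x | ENNReal.ofReal t < f x} * ENNReal.ofReal (t ^ (p - 1)) := by
          gcongr with x
          intro h
          exact ((ENNReal.ofReal_lt_ofReal_iff (ht.trans h)).2 h).trans_le ENNReal.ofReal_toReal_le
      _ ≤ A' * ENNReal.ofReal (t ^ (m - p)) * σ {x | t < (g x).toReal} *
            ENNReal.ofReal (t ^ (p - 1)) := by
          gcongr
          exact (hkey t ht).trans (by gcongr)
      _ = A' * (σ {x | t < (g x).toReal} *
            (ENNReal.ofReal (t ^ (m - p)) * ENNReal.ofReal (t ^ (p - 1)))) := by ring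
      _ = _ := by
          rw [← ENNReal.ofReal_mul (by positivity), ← Real.rpow_add ht]
          congr 4; ring
  · rw [lintegral_const_mul' _ _ hA't]
    exact ENNReal.mul_lt_top hA't.lt_top hint

/-! ### Lower semicontinuity and the weak maximum principle -/

/-- The potential of a kernel, extended by zero outside `Ω`, is lower semicontinuous on the whole
space, by Fatou's lemma. -/
lemma lowerSemicontinuous_indicator_kernelPot {n : ℕ} {Ω : Set (EuclideanSpace ℝ (Fin n))}
    (hΩo : IsOpen Ω) {G : EuclideanSpace ℝ (Fin n) → EuclideanSpace ℝ (Fin n) → ℝ≥0∞}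
    (hker : IsKernel Ω G) (σ : Measure (EuclideanSpace ℝ (Fin n))) :
    LowerSemicontinuous (Ω.indicator (kernelPot Ω G σ)) := by
  let g : EuclideanSpace ℝ (Fin n) × EuclideanSpace ℝ (Fin n) → ℝ≥0∞ :=
    (Ω ×ˢ Ω).indicator fun z => G z.1 z.2
  have hg : LowerSemicontinuous g := by
    intro z c hc
    by_cases hz : z ∈ Ω ×ˢ Ω
    · have hc' : c < G z.1 z.2 := by simpa only [g, indicator_of_mem hz] using hc
      have hev := hker.1 z hz c hc'
      rw [(hΩo.prod hΩo).nhdsWithin_eq hz] at hev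
      filter_upwards [hev, (hΩo.prod hΩo).mem_nhds hz] with w hw hwΩ
      simpa only [g, indicator_of_mem hwΩ] using hw
    · simp only [g, indicator_of_notMem hz, not_lt_zero] at hc
  have hW : Ω.indicator (kernelPot Ω G σ) = fun x => ∫⁻ y, g (x, y) ∂σ := by
    funext x
    by_cases hx : x ∈ Ω
    · rw [indicator_of_mem hx, kernelPot, ← lintegral_indicator hΩo.measurableSet]
      refine lintegral_congr fun y => ?_
      by_cases hy : y ∈ Ω <;> simp [g, indicator, hx, hy]
    · rw [indicator_of_notMem hx]
      simp [g, hx]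
  rw [hW, lowerSemicontinuous_iff_le_liminf]
  intro x
  refine le_trans (lintegral_mono fun y => ?_)
    (lintegral_liminf_le fun x' => hg.measurable.comp measurable_prodMk_left)
  exact (LowerSemicontinuous.comp hg (by fun_prop : Continuous fun x' => (x', y))).le_liminf x

/-- Under the weak maximum principle, the part of `σ` carried by `{Gσ ≤ s}` has a potential bounded
by `h * s` on all of `Ω`: that set is relatively closed, so it contains the support of this part. -/
lemma kernelPot_restrict_le {n : ℕ} {Ω : Set (EuclideanSpace ℝ (Fin n))} (hΩo : IsOpen Ω)
    {G : EuclideanSpace ℝ (Fin n) → EuclideanSpace ℝ (Fin n) → ℝ≥0∞} {h : ℝ}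
    (hker : IsKernel Ω G) (hwmp : SatisfiesWMP Ω G h)
    {σ : Measure (EuclideanSpace ℝ (Fin n))} (hσ : MemMplus Ω σ) {s : ℝ≥0∞} (hs0 : s ≠ 0)
    (hs : s ≠ ⊤) {x : EuclideanSpace ℝ (Fin n)} (hx : x ∈ Ω) :
    kernelPot Ω G (σ.restrict {z | s < Ω.indicator (kernelPot Ω G σ) z}ᶜ) x
      ≤ ENNReal.ofReal h * s := by
  set V := {z | s < Ω.indicator (kernelPot Ω G σ) z} with hV
  have hVo : IsOpen V :=
    (lowerSemicontinuous_indicator_kernelPot hΩo hker σ).isOpen_preimage s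
  have hscale : ∀ z, kernelPot Ω G (s⁻¹ • σ.restrict Vᶜ) z
      = s⁻¹ * kernelPot Ω G (σ.restrict Vᶜ) z := by
    intro z
    simp only [kernelPot, Measure.restrict_smul, lintegral_smul_measure, smul_eq_mul]
  have hmem : MemMplus Ω (s⁻¹ • σ.restrict Vᶜ) := by
    refine ⟨?_, fun K hK hKc => ?_⟩
    · rw [Measure.smul_apply, le_antisymm ((Measure.restrict_apply_le _ _).trans_eq hσ.1) zero_le,
        smul_zero]
    · rw [Measure.smul_apply, smul_eq_mul]
      exact ENNReal.mul_lt_top (ENNReal.inv_lt_top.2 hs0.bot_lt)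
        ((Measure.restrict_apply_le _ _).trans_lt (hσ.2 K hK hKc))
  have hle := hwmp _ hmem ?_ x hx
  · rw [hscale] at hle
    calc kernelPot Ω G (σ.restrict Vᶜ) x = s * (s⁻¹ * kernelPot Ω G (σ.restrict Vᶜ) x) := by
          rw [← mul_assoc, ENNReal.mul_inv_cancel hs0 hs, one_mul]
      _ ≤ s * ENNReal.ofReal h := by gcongr
      _ = _ := mul_comm _ _
  · rintro z ⟨hzΩ, hz⟩
    have hzV : z ∉ V := by
      intro hzV
      have := hz V hVo hzV
      simp [Measure.restrict_apply hVo.measurableSet] at this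
    have hzs : kernelPot Ω G σ z ≤ s := by
      simpa only [hV, mem_ofPred_eq, indicator_of_mem hzΩ, not_lt] using hzV
    rw [hscale]
    calc s⁻¹ * kernelPot Ω G (σ.restrict Vᶜ) z ≤ s⁻¹ * s := by
          gcongr
          refine le_trans ?_ hzs
          exact lintegral_mono' (Measure.restrict_mono_measure Measure.restrict_le_self _) le_rfl
      _ = 1 := ENNReal.inv_mul_cancel hs0 hs

/-! ### Integrability of the potential -/

theorem stmt10 {n : ℕ} (q α c₀ h r γ : ℝ) (hq0 : 0 < q) (hq : q < 1)
    (Ω : Set (EuclideanSpace ℝ (Fin n))) (hΩo : IsOpen Ω) (hΩne : Ω.Nonempty)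
    (σ : Measure (EuclideanSpace ℝ (Fin n))) (hσ : MemMplus Ω σ) (hσ0 : σ ≠ 0)
    (G : EuclideanSpace ℝ (Fin n) → EuclideanSpace ℝ (Fin n) → ℝ≥0∞)
    (hker : IsKernel Ω G) (hh : 1 ≤ h) (hwmp : SatisfiesWMP Ω G h)
    (hc₀ : 0 < c₀) (hα0 : 0 < α) (hα : α < n / 2)
    (hdom : ∀ x ∈ Ω, ∀ y ∈ Ω, G x y ≤ ENNReal.ofReal c₀ * (edist x y) ^ (2 * α - n))
    (hr : n / (n - 2 * α) < r) (hγ : γ = (r * (n - 2 * α) - n) / n)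
    (hfin : (∫⁻ x, (kernelPot Ω G σ x) ^ ((γ + q) / (1 - q)) ∂σ) < ⊤) :
    (∫⁻ x in Ω, (kernelPot Ω G σ x) ^ (r / (1 - q))) < ⊤ := by
  have hnpos : (0 : ℝ) < n := by linarith
  have hn : 1 ≤ n := by exact_mod_cast hnpos
  set β : ℝ := n - 2 * α with hβdef
  have hβ : 0 < β := by rw [hβdef]; linarith
  have hβn : β < n := by rw [hβdef]; linarith
  have hexp : 2 * α - n = -β := by rw [hβdef]; ring
  have hq1 : 0 < 1 - q := by linarith
  have hγ0 : 0 < γ := by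
    rw [div_lt_iff₀ hβ] at hr
    rw [hγ]; exact div_pos (by linarith) hnpos
  have hm : 0 < (γ + q) / (1 - q) := by positivity
  have hκ : 1 ≤ n / β := by rw [le_div_iff₀ hβ]; linarith
  have hpm : r / (1 - q) = ((γ + q) / (1 - q) + 1) * (n / β) := by
    rw [hγ]; field_simp; ring
  set W := Ω.indicator (kernelPot Ω G σ) with hW
  have hWm : Measurable W :=
    (lowerSemicontinuous_indicator_kernelPot hΩo hker σ).measurable
  have h2h : 0 < 2 * h := by linarith
  have hWΩ : ∀ x ∈ Ω, W x = kernelPot Ω G σ x := fun x hx => indicator_of_mem hx _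
  have hgm : ∫⁻ x, (ENNReal.ofReal (2 * h) * W x) ^ ((γ + q) / (1 - q)) ∂σ < ⊤ := by
    simp_rw [ENNReal.mul_rpow_of_nonneg _ _ hm.le]
    rw [lintegral_const_mul _ (hWm.pow_const _)]
    refine ENNReal.mul_lt_top (ENNReal.rpow_lt_top_of_nonneg hm.le ENNReal.ofReal_ne_top) ?_
    refine lt_of_eq_of_lt (lintegral_congr_ae ?_) hfin
    have hae : ∀ᵐ x ∂σ, x ∈ Ω := hσ.1
    filter_upwards [hae] with x hx
    rw [hWΩ x hx]
  obtain ⟨K, hK, hweak⟩ := riesz_weak_type hn hβ hβn hc₀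
  have hstrong : ∫⁻ x, W x ^ (r / (1 - q)) < ⊤ := by
    refine lintegral_rpow_lt_top_of_level_sets (σ := σ)
      (g := fun x => ENNReal.ofReal (2 * h) * W x) (B := 4 * c₀) (A := K)
      hWm (hWm.const_mul _) hm hκ hpm (by positivity) hK hgm fun t ht => ?_
    set s : ℝ≥0∞ := ENNReal.ofReal (t / (2 * h)) with hs
    have hs0 : s ≠ 0 := by
      rw [hs]; exact (ENNReal.ofReal_pos.2 (by positivity)).ne'
    have hst : s ≠ ⊤ := ENNReal.ofReal_ne_top
    set V := {x | s < W x} with hV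
    have hVeq : {x | ENNReal.ofReal t < ENNReal.ofReal (2 * h) * W x} = V := by
      ext x
      have : ENNReal.ofReal t = ENNReal.ofReal (2 * h) * s := by
        rw [hs, ← ENNReal.ofReal_mul h2h.le]; congr 1; field_simp
      simp only [mem_ofPred_eq, hV, this]
      exact ENNReal.mul_lt_mul_iff_right (ENNReal.ofReal_pos.2 h2h).ne' ENNReal.ofReal_ne_top
    have hVm : MeasurableSet V := measurableSet_lt measurable_const hWm
    have hVfin : σ V ≠ ⊤ := by
      rw [← hVeq]
      exact ((meas_lt_le_rpow_mul_lintegral (hWm.const_mul _) hm ht).trans_lt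
        (ENNReal.mul_lt_top ENNReal.ofReal_lt_top hgm)).ne
    have hwk := hweak (σ.restrict V) (t / 2) (by positivity) (by simpa using hVfin)
    rw [Measure.restrict_apply_univ,
      show 2 * c₀ / (t / 2) = 4 * c₀ / t by field_simp; ring] at hwk
    rw [hVeq]
    refine le_trans (measure_mono fun x hx => ?_) hwk
    simp only [mem_ofPred_eq] at hx ⊢
    have hxΩ : x ∈ Ω := by
      by_contra hxΩ
      simp [hW, indicator_of_notMem hxΩ] at hx
    rw [hWΩ x hxΩ] at hx
    have hsplit : kernelPot Ω G σ x
        = kernelPot Ω G (σ.restrict V) x + kernelPot Ω G (σ.restrict Vᶜ) x := by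
      conv_lhs => rw [← Measure.restrict_add_restrict_compl (μ := σ) hVm]
      simp only [kernelPot, Measure.restrict_add, lintegral_add_measure]
    have hlow : kernelPot Ω G (σ.restrict Vᶜ) x ≤ ENNReal.ofReal (t / 2) := by
      refine (kernelPot_restrict_le hΩo hker hwmp hσ hs0 hst hxΩ).trans_eq ?_
      rw [hs, ← ENNReal.ofReal_mul (by linarith)]; congr 1; field_simp
    have hhigh : ENNReal.ofReal (t / 2) < kernelPot Ω G (σ.restrict V) x := by
      by_contra hcon
      rw [not_lt] at hcon
      refine lt_irrefl _ (hx.trans_le ?_)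
      rw [hsplit]
      refine (add_le_add hcon hlow).trans_eq ?_
      rw [← ENNReal.ofReal_add (by positivity) (by positivity), add_halves]
    refine hhigh.trans_le ?_
    calc kernelPot Ω G (σ.restrict V) x
        ≤ ∫⁻ y in Ω, ENNReal.ofReal c₀ * edist x y ^ (-β) ∂(σ.restrict V) := by
          refine setLIntegral_mono' hΩo.measurableSet fun y hy => ?_
          rw [← hexp]; exact hdom x hxΩ y hy
      _ ≤ ∫⁻ y, ENNReal.ofReal c₀ * edist x y ^ (-β) ∂(σ.restrict V) :=
          setLIntegral_le_lintegral _ _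
      _ = _ := lintegral_const_mul' _ _ ENNReal.ofReal_ne_top
  calc ∫⁻ x in Ω, kernelPot Ω G σ x ^ (r / (1 - q))
      = ∫⁻ x in Ω, W x ^ (r / (1 - q)) := by
        refine setLIntegral_congr_fun hΩo.measurableSet fun x hx => ?_
        simp only [hWΩ x hx]
    _ ≤ ∫⁻ x, W x ^ (r / (1 - q)) := setLIntegral_le_lintegral _ _
    _ < ⊤ := hstrong
end
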